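/- Let f ∈ ℬ be convenient and Newton nondegenerate with Newton polytope P, and assume that every closed face of the Newton boundary of P is a simplex. For v ∈ ℕⁿ with v ≠ 0 let Δ(v) denote the smallest closed face Δ of the Newton boundary with v ∈ ℝ₊·Δ, and set Δ(0) = ∅, with the convention that ∅ ⊆ Δ for every face Δ. For v ∈ ℕⁿ define the polynomial E_v^*(z) = Σ (z−1)^{n−1−dim Δ}, the sum running over the closed faces Δ of the Newton boundary that are not contained in the union of the coordinate hyperplanes and satisfy Δ(v) ⊆ Δ. Let Box(P) be the union of Box(Δ) over the closed faces Δ of the Newton boundary not contained in the union of the coordinate hyperplanes. Then for every α ∈ ℚ: dim_ℂ gr^𝒩_α(ℬ/ℒ) = Σ_{v ∈ Box(P) ∩ ℕⁿ} (coefficient of z^{α−ν(v)} in E_v^*(z)). Equivalently, the Hilbert–Poincaré series of gr^𝒩(ℬ/ℒ) equals Σ_{v ∈ Box(P) ∩ ℕⁿ} E_v^*(z)·z^{ν(v)}. -/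

import Mathlib

open MvPolynomial

namespace ToricNewton

section
variable {σ : Type*} [Fintype σ] [DecidableEq σ]

/-- Coercion of a lattice point of `ℕ^σ` into `ℝ^σ`. -/
def natToR (v : σ → ℕ) : σ → ℝ := fun i => (v i : ℝ)

/-- Coercion of an exponent (finitely supported) into `ℝ^σ`. -/
def toR (m : σ →₀ ℕ) : σ → ℝ := fun i => (m i : ℝ)

/-- The Newton polytope of a polynomial: the convex hull of `{0} ∪ supp f`. -/
noncomputable def newtonPolytope (f : MvPolynomial σ ℂ) : Set (σ → ℝ) :=
  convexHull ℝ ({0} ∪ (toR '' (f.support : Set (σ →₀ ℕ))))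

/-- The Newton function `ν`, which for a convenient polynomial is the gauge
(Minkowski functional) of the Newton polytope. -/
noncomputable def nu (f : MvPolynomial σ ℂ) (x : σ → ℝ) : ℝ :=
  gauge (newtonPolytope f) x

/-- `f` is convenient if for each variable `i` some pure power `uᵢ^k`, `k ≥ 1`,
occurs in `f` with nonzero coefficient. -/
def Convenient (f : MvPolynomial σ ℂ) : Prop :=
  ∀ i : σ, ∃ k : ℕ, 1 ≤ k ∧ f.coeff (Finsupp.single i k) ≠ 0

/-- `Δ` is a (nonempty exposed) closed face of `P`. -/
def IsFace (P Δ : Set (σ → ℝ)) : Prop :=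
  Δ.Nonempty ∧ ∃ (l : (σ → ℝ) →ₗ[ℝ] ℝ) (c : ℝ),
    (∀ x ∈ P, l x ≤ c) ∧ Δ = {x ∈ P | l x = c}

/-- A face of the Newton boundary: a closed face of the Newton polytope not
containing the origin. -/
def NBFace (f : MvPolynomial σ ℂ) (Δ : Set (σ → ℝ)) : Prop :=
  IsFace (newtonPolytope f) Δ ∧ (0 : σ → ℝ) ∉ Δ

open Classical in
/-- The truncation `g_Δ` of `g` to the monomials whose exponents lie in `Δ`. -/
noncomputable def faceRestrict (Δ : Set (σ → ℝ)) (g : MvPolynomial σ ℂ) : MvPolynomial σ ℂ :=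
  ∑ m ∈ g.support, if toR m ∈ Δ then monomial m (g.coeff m) else 0

/-- `f` is Newton nondegenerate: for every closed face `Δ` of the Newton boundary
the system `(u₁ ∂f/∂u₁)_Δ = ⋯ = (uₙ ∂f/∂uₙ)_Δ = 0` has no solution in `(ℂ*)ⁿ`. -/
def Nondegenerate (f : MvPolynomial σ ℂ) : Prop :=
  ∀ Δ : Set (σ → ℝ), NBFace f Δ →
    ¬ ∃ x : σ → ℂ, (∀ i, x i ≠ 0) ∧
        ∀ i, eval x (faceRestrict Δ (X i * pderiv i f)) = 0

/-- The ideal `ℒ` generated by the `uᵢ ∂f/∂uᵢ`. -/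
noncomputable def LIdeal (f : MvPolynomial σ ℂ) : Ideal (MvPolynomial σ ℂ) :=
  Ideal.span (Set.range fun i => X i * pderiv i f)

/-- The Jacobian ideal `ℐ` generated by the `∂f/∂uᵢ`. -/
noncomputable def IIdeal (f : MvPolynomial σ ℂ) : Ideal (MvPolynomial σ ℂ) :=
  Ideal.span (Set.range fun i => pderiv i f)

/-- The Newton filtration `𝒩_α ℬ`: the span of the monomials `u^m` with `ν(m) ≤ α`. -/
noncomputable def Nle (f : MvPolynomial σ ℂ) (α : ℝ) : Submodule ℂ (MvPolynomial σ ℂ) where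
  carrier := {g | ∀ m ∈ g.support, nu f (toR m) ≤ α}
  zero_mem' := by simp
  add_mem' := by
    intro a b ha hb m hm
    rcases Finset.mem_union.mp (MvPolynomial.support_add hm) with h | h
    · exact ha m h
    · exact hb m h
  smul_mem' := by
    intro c a ha m hm
    exact ha m (MvPolynomial.support_smul hm)

/-- The filtration `𝒩_{<α} ℬ`. -/
noncomputable def Nlt (f : MvPolynomial σ ℂ) (α : ℝ) : Submodule ℂ (MvPolynomial σ ℂ) where
  carrier := {g | ∀ m ∈ g.support, nu f (toR m) < α}
  zero_mem' := by simp
  add_mem' := by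
    intro a b ha hb m hm
    rcases Finset.mem_union.mp (MvPolynomial.support_add hm) with h | h
    · exact ha m h
    · exact hb m h
  smul_mem' := by
    intro c a ha m hm
    exact ha m (MvPolynomial.support_smul hm)

/-- The twisted filtration `W_α ℬ`: the span of the monomials `u^m` with
`ν(m + (1,…,1)) ≤ α`. -/
noncomputable def Wle (f : MvPolynomial σ ℂ) (α : ℝ) : Submodule ℂ (MvPolynomial σ ℂ) where
  carrier := {g | ∀ m ∈ g.support, nu f (toR m + 1) ≤ α}
  zero_mem' := by simp
  add_mem' := by
    intro a b ha hb m hm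
    rcases Finset.mem_union.mp (MvPolynomial.support_add hm) with h | h
    · exact ha m h
    · exact hb m h
  smul_mem' := by
    intro c a ha m hm
    exact ha m (MvPolynomial.support_smul hm)

/-- The twisted filtration `W_{<α} ℬ`. -/
noncomputable def Wlt (f : MvPolynomial σ ℂ) (α : ℝ) : Submodule ℂ (MvPolynomial σ ℂ) where
  carrier := {g | ∀ m ∈ g.support, nu f (toR m + 1) < α}
  zero_mem' := by simp
  add_mem' := by
    intro a b ha hb m hm
    rcases Finset.mem_union.mp (MvPolynomial.support_add hm) with h | h
    · exact ha m h
    · exact hb m h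
  smul_mem' := by
    intro c a ha m hm
    exact ha m (MvPolynomial.support_smul hm)

/-- The graded piece `gr^𝒩_α(ℬ/ℒ) = (𝒩_α ℬ + ℒ)/(𝒩_{<α} ℬ + ℒ)`, realized as the
image of `𝒩_α ℬ + ℒ` in `ℬ/(𝒩_{<α} ℬ + ℒ)`. -/
noncomputable def grN (f : MvPolynomial σ ℂ) (α : ℝ) :
    Submodule ℂ (MvPolynomial σ ℂ ⧸ (Nlt f α ⊔ (LIdeal f).restrictScalars ℂ)) :=
  Submodule.map (Nlt f α ⊔ (LIdeal f).restrictScalars ℂ).mkQ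
    (Nle f α ⊔ (LIdeal f).restrictScalars ℂ)

/-- `dim_ℂ gr^𝒩_α(ℬ/ℒ)`. -/
noncomputable def grDim (f : MvPolynomial σ ℂ) (α : ℝ) : ℕ :=
  Module.finrank ℂ (grN f α)

/-- The graded piece `gr^W_α(ℬ/ℐ) = (W_α ℬ + ℐ)/(W_{<α} ℬ + ℐ)`. -/
noncomputable def grW (f : MvPolynomial σ ℂ) (α : ℝ) :
    Submodule ℂ (MvPolynomial σ ℂ ⧸ (Wlt f α ⊔ (IIdeal f).restrictScalars ℂ)) :=
  Submodule.map (Wlt f α ⊔ (IIdeal f).restrictScalars ℂ).mkQ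
    (Wle f α ⊔ (IIdeal f).restrictScalars ℂ)

/-- `dim_ℂ gr^W_α(ℬ/ℐ)`. -/
noncomputable def grWDim (f : MvPolynomial σ ℂ) (α : ℝ) : ℕ :=
  Module.finrank ℂ (grW f α)

/-- The dimension of a face, i.e. of the direction of its affine span. -/
noncomputable def faceDim (Δ : Set (σ → ℝ)) : ℕ :=
  Module.finrank ℝ (affineSpan ℝ Δ).direction

/-- `Δ` is a simplex: the convex hull of an affinely independent family. -/
def IsSimplex (Δ : Set (σ → ℝ)) : Prop :=
  ∃ (k : ℕ) (p : Fin (k + 1) → (σ → ℝ)), AffineIndependent ℝ p ∧ Δ = convexHull ℝ (Set.range p)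

/-- The union of the coordinate hyperplanes. -/
def coordHyperplanes (σ : Type*) : Set (σ → ℝ) := ⋃ i : σ, {x : σ → ℝ | x i = 0}

/-- `Box(Δ)`: the set of combinations `Σ q_ℓ b_ℓ`, `q_ℓ ∈ [0,1)`, of the vertices
(extreme points) of `Δ`. -/
def Box (Δ : Set (σ → ℝ)) : Set (σ → ℝ) :=
  {x | ∃ s : Finset (σ → ℝ), ↑s ⊆ Δ.extremePoints ℝ ∧
      ∃ q : (σ → ℝ) → ℝ, (∀ b ∈ s, 0 ≤ q b ∧ q b < 1) ∧ x = ∑ b ∈ s, q b • b}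

/-- `Δ ∈ ℱ(P)`: a closed face of the Newton polytope of `f` not contained in the
union of the coordinate hyperplanes. -/
def FcalMem (f : MvPolynomial σ ℂ) (Δ : Set (σ → ℝ)) : Prop :=
  IsFace (newtonPolytope f) Δ ∧ ¬ Δ ⊆ coordHyperplanes σ

/-- `Box(P)`: the union of `Box(Δ)` over the closed faces of the Newton boundary
not contained in the union of the coordinate hyperplanes. -/
def BoxP (f : MvPolynomial σ ℂ) : Set (σ → ℝ) :=
  ⋃ Δ ∈ {Δ : Set (σ → ℝ) | NBFace f Δ ∧ ¬ Δ ⊆ coordHyperplanes σ}, Box Δ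

/-- The cone `ℝ₊·Δ` over `Δ`. -/
def cone0 (Δ : Set (σ → ℝ)) : Set (σ → ℝ) :=
  {x | ∃ t : ℝ, 0 ≤ t ∧ ∃ y ∈ Δ, x = t • y}

/-- The restriction of `f` obtained by setting the variables in `S` to zero. -/
noncomputable def restrictZero (S : Finset σ) (f : MvPolynomial σ ℂ) :
    MvPolynomial {j : σ // j ∉ S} ℂ :=
  aeval (fun j : σ => if h : j ∉ S then X (⟨j, h⟩ : {j : σ // j ∉ S}) else 0) f

end

end ToricNewton

namespace ToricNewton

open Classical in
/-- The relative Hodge–Deligne polynomial `E_v^*(z) = Σ_Δ (z-1)^{n-1-dim Δ}`,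
the sum running over the closed faces `Δ` of the Newton boundary not contained in
the union of the coordinate hyperplanes with `Δ(v) ⊆ Δ` (equivalently
`v ∈ ℝ₊·Δ`; for `v = 0`, `Δ(0) = ∅ ⊆ Δ` always and `0 ∈ ℝ₊·Δ` always). -/
noncomputable def Evstar {σ : Type*} [Fintype σ] [DecidableEq σ]
    (f : MvPolynomial σ ℂ) (v : σ → ℕ) : Polynomial ℤ :=
  ∑ᶠ (Δ : Set (σ → ℝ))
      (_ : NBFace f Δ ∧ ¬ Δ ⊆ coordHyperplanes σ ∧ natToR v ∈ cone0 Δ),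
    (Polynomial.X - 1 : Polynomial ℤ) ^ (Fintype.card σ - 1 - faceDim Δ)

end ToricNewton

/-!
Since every face of the Newton boundary is a simplex, the cones over its facets form a simplicial
fan with support `ℝ≥0ⁿ`, and a generic positive vector turns it into a decomposition into half-open
cones: each lattice point `v` lies in exactly one of them, and is the sum of a unique lattice point
of its half-open box and of `a k ≥ 0` copies of the `k`-th vertex.

Consequently the monomials of the vertices of a facet form a regular sequence on the module spanned
by the monomials of its half-open cone, and the quotient has the lattice points of the half-open box
as a basis. By nondegeneracy and the Nullstellensatz, the facet parts of the `Tᵢ = uᵢ ∂f/∂uᵢ` have a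
quotient of finite dimension. As elements of a regular sequence in degree one can be exchanged for
generic combinations of the `Tᵢ` without changing dimensions, this quotient is no larger in any
degree than the previous one. Lifting along the Newton filtration yields one generator `e w` for
each half-open box point `w`, such that the products `Tᵃ * e w` form a basis of `ℬ` adapted to the
filtration, and those with `a ≠ 0` span `ℒ`. Hence `dim gr^𝒩_α(ℬ/ℒ)` is the number of half-open box
points of Newton degree `α`.

On the other side, `∑_{L ⊆ S} (z - 1)^#L = z^#S` turns `E_v^*(z)` into a sum of monomials indexed by
the facets whose cone contains `v`. A box point `v` becomes a half-open box point of such a facet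
after adding the vertices along which `v` lies on an open side of the half-open cone, and the
exponent of the monomial counts them.
-/

namespace ToricNewton

open Filter Topology

/-! ### Generic linear combinations of commuting operators -/

theorem ideal_eq_top_of_top_le_smul_top {A V : Type*} [CommRing A] [AddCommGroup V] [Module A V]
    [Module.Finite A V] [FaithfulSMul A V] {I : Ideal A} (hI : (⊤ : Submodule A V) ≤ I • ⊤) :
    I = ⊤ := by
  obtain ⟨r, hr, hr0⟩ := Submodule.exists_sub_one_mem_and_smul_eq_zero_of_fg_of_le_smul I ⊤
    Module.Finite.fg_top hI
  have r_eq_zero : r = 0 := eq_of_smul_eq_smul fun v : V => by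
    rw [hr0 v Submodule.mem_top, zero_smul]
  rw [r_eq_zero, zero_sub, neg_mem_iff] at hr
  exact (Ideal.eq_top_iff_one _).2 hr

section GenericCombination

variable {K ι : Type*} [Field K] [Infinite K] [Fintype ι]

theorem exists_isUnit_sum_smul {A : Type*} [CommRing A] [Algebra K A] [Module.Finite K A]
    {a : ι → A} (ha : Ideal.span (Set.range a) = ⊤) :
    ∃ c : ι → K, IsUnit (∑ i, c i • a i) := by
  classical
  have : IsArtinianRing A := IsArtinianRing.of_finite K A
  let bad (P : MaximalSpectrum A) : Submodule K (ι → K) :=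
    (P.asIdeal.restrictScalars K).comap (Fintype.linearCombination K a)
  have bad_ne_univ : ⋃ P, (bad P : Set (ι → K)) ≠ Set.univ := by
    intro h
    obtain ⟨P, hP⟩ := Subspace.exists_eq_top_of_iUnion_eq_univ h
    refine P.isMaximal.ne_top (eq_top_iff.2 (ha ▸ Ideal.span_le.2 ?_))
    rintro _ ⟨i, rfl⟩
    have hi : Pi.single i 1 ∈ bad P := hP ▸ Submodule.mem_top
    simpa [bad] using hi
  obtain ⟨c, hc⟩ := (Set.ne_univ_iff_exists_notMem _).1 bad_ne_univ
  refine ⟨c, by_contra fun hunit => ?_⟩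
  obtain ⟨P, hP, hmem⟩ := exists_max_ideal_of_mem_nonunits hunit
  exact hc (Set.mem_iUnion.2 ⟨⟨P, hP⟩, hmem⟩)

variable {V : Type*} [AddCommGroup V] [Module K V] [FiniteDimensional K V]

open scoped IsMulCommutative in
theorem exists_injective_sum_smul {Φ : ι → Module.End K V} (hcomm : ∀ i j, Commute (Φ i) (Φ j))
    (hsurj : ⨆ i, LinearMap.range (Φ i) = ⊤) :
    ∃ c : ι → K, Function.Injective (∑ i, c i • Φ i : Module.End K V) := by
  let A := Algebra.adjoin K (Set.range Φ)
  have : IsMulCommutative A := Algebra.isMulCommutative_adjoin K <| by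
    rintro _ ⟨i, rfl⟩ _ ⟨j, rfl⟩
    exact hcomm i j
  let φ (i : ι) : A := ⟨Φ i, Algebra.subset_adjoin ⟨i, rfl⟩⟩
  have : Module.Finite K A :=
    inferInstanceAs (Module.Finite K (Subalgebra.toSubmodule (Algebra.adjoin K (Set.range Φ))))
  have : Module.Finite A V := Module.Finite.of_restrictScalars_finite K A V
  have hspan : Ideal.span (Set.range φ) = ⊤ := by
    refine ideal_eq_top_of_top_le_smul_top (V := V) fun v _ => ?_
    suffices h : ⨆ i, LinearMap.range (Φ i) ≤
        (Ideal.span (Set.range φ) • ⊤ : Submodule A V).restrictScalars K from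
      h (hsurj ▸ Submodule.mem_top)
    refine iSup_le fun i => ?_
    rintro _ ⟨w, rfl⟩
    have hmem : φ i • w ∈ (Ideal.span (Set.range φ) • ⊤ : Submodule A V) :=
      Submodule.smul_mem_smul (Ideal.subset_span ⟨i, rfl⟩) Submodule.mem_top
    exact hmem
  obtain ⟨c, hc⟩ := exists_isUnit_sum_smul (K := K) hspan
  refine ⟨c, ((Module.End.isUnit_iff _).1 ?_).1⟩
  have hunit := hc.map A.val
  rw [map_sum] at hunit
  exact hunit

end GenericCombination

section GradedOperators

variable {K ι : Type*} [Field K] {V : ℤ → Type*} [∀ d, AddCommGroup (V d)]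
  [∀ d, Module K (V d)] {y g : ∀ d, V d →ₗ[K] V (d + 1)}

theorem forall_injective_of_commute (hy : ∀ d, Function.Injective (y d)) {D : ℤ}
    (hy' : ∀ d ≥ D, Function.Surjective (y d)) (hg : ∀ d x, g (d + 1) (y d x) = y (d + 1) (g d x))
    (hgD : Function.Injective (g D)) (d : ℤ) : Function.Injective (g d) := by
  induction d using Int.inductionOn' (b := D) with
  | zero => exact hgD
  | succ d hd ih =>
    intro u v huv
    obtain ⟨u, rfl⟩ := hy' d hd u
    obtain ⟨v, rfl⟩ := hy' d hd v
    rw [hg, hg] at huv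
    rw [ih (hy _ huv)]
  | pred d _ ih =>
    obtain ⟨d, rfl⟩ : ∃ e, d = e + 1 := ⟨d - 1, by ring⟩
    rw [add_sub_cancel_right]
    intro u v huv
    exact hy d (ih (by rw [hg, hg, huv]))

theorem exists_forall_injective_sum_smul [Infinite K] [Fintype ι] [∀ d, FiniteDimensional K (V d)]
    (hy : ∀ d, Function.Injective (y d)) (hy' : ∀ᶠ d in atTop, Function.Surjective (y d))
    {G : ι → ∀ d, V d →ₗ[K] V (d + 1)} (hyG : ∀ i d x, G i (d + 1) (y d x) = y (d + 1) (G i d x))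
    (hGG : ∀ i j d x, G i (d + 1) (G j d x) = G j (d + 1) (G i d x))
    (hG : ∀ᶠ d in atTop, ⨆ i, LinearMap.range (G i d) = ⊤) :
    ∃ c : ι → K, ∀ d, Function.Injective (∑ i, c i • G i d : V d →ₗ[K] V (d + 1)) := by
  obtain ⟨D, hD⟩ := eventually_atTop.1 (hy'.and hG)
  -- In the degrees where `y` is an isomorphism, `G i / y` is an operator of degree zero.
  let e : V D ≃ₗ[K] V (D + 1) := .ofBijective (y D) ⟨hy D, (hD D le_rfl).1⟩
  let Φ (i : ι) : Module.End K (V D) := e.symm.toLinearMap ∘ₗ G i D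
  have y_Φ (i x) : y D (Φ i x) = G i D x := e.apply_symm_apply _
  have hcomm (i j) : Commute (Φ i) (Φ j) := by
    have y_y_ΦΦ (i j x) : y (D + 1) (y D (Φ i (Φ j x))) = G i (D + 1) (G j D x) := by
      rw [y_Φ, ← hyG, y_Φ]
    exact LinearMap.ext fun x => hy _ (hy _ (by
      rw [Module.End.mul_apply, Module.End.mul_apply, y_y_ΦΦ, y_y_ΦΦ, hGG]))
  have hsurj : ⨆ i, LinearMap.range (Φ i) = ⊤ := by
    simp only [Φ, LinearMap.range_comp, ← Submodule.map_iSup, (hD D le_rfl).2]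
    rw [Submodule.map_top, LinearEquiv.range]
  obtain ⟨c, hc⟩ := exists_injective_sum_smul hcomm hsurj
  refine ⟨c, forall_injective_of_commute hy (fun d hd => (hD d hd).1) (fun d x => ?_) ?_⟩
  · simp [hyG]
  · have hsum : ∑ i, c i • G i D = e.toLinearMap ∘ₗ ∑ i, c i • Φ i := by
      ext x
      simp [Φ]
    rw [hsum]
    exact e.injective.comp hc

end GradedOperators

theorem finrank_map_add_finrank_inf_ker {K E F : Type*} [DivisionRing K] [AddCommGroup E]
    [Module K E] [AddCommGroup F] [Module K F] (f : E →ₗ[K] F) (p : Submodule K E)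
    [FiniteDimensional K p] :
    Module.finrank K (p.map f) + Module.finrank K ↥(p ⊓ LinearMap.ker f) = Module.finrank K p := by
  rw [← LinearMap.finrank_range_add_finrank_ker (f.domRestrict p), LinearMap.range_domRestrict,
    LinearMap.ker_domRestrict, ← Submodule.map_comap_subtype, Submodule.finrank_map_subtype_eq]

section RegularSequences

/-! ### Regular sequences in degree one on graded quotients -/

variable {K R E : Type*} [Field K] [CommRing R] [Algebra K R] [AddCommGroup E] [Module K E]
  [Module R E] [IsScalarTower K R E] {M N : ℤ → Submodule K E} {d : ℤ}

/-- The elements of `R` which act with degree one on a family `M` of subspaces of an `R`-module. -/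
def degreeOne (R : Type*) [CommRing R] [Algebra K R] [Module R E] [IsScalarTower K R E]
    (M : ℤ → Submodule K E) : Submodule K R where
  carrier := {a | ∀ d, ∀ x ∈ M d, a • x ∈ M (d + 1)}
  zero_mem' d x _ := by simp
  add_mem' ha hb d x hx := by
    rw [add_smul]
    exact add_mem (ha d x hx) (hb d x hx)
  smul_mem' c a ha d x hx := by
    rw [smul_assoc]
    exact (M (d + 1)).smul_mem c (ha d x hx)

theorem degreeOne_smul_mem (a : degreeOne R M) {x : E} (hx : x ∈ M d) :
    (a : R) • x ∈ M (d + 1) := a.2 d x hx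

/-- `N` is a graded subobject of `M` for the action of the elements of degree one. -/
structure IsGradedSub (R : Type*) [CommRing R] [Algebra K R] [Module R E] [IsScalarTower K R E]
    (M N : ℤ → Submodule K E) : Prop where
  le : ∀ d, N d ≤ M d
  smul_mem : ∀ (a : degreeOne R M) {d : ℤ} {x : E}, x ∈ N d → (a : R) • x ∈ N (d + 1)

/-- The graded family `N + a M`, for `a` of degree one. -/
def addSMul (M N : ℤ → Submodule K E) (a : R) (d : ℤ) : Submodule K E :=
  N d ⊔ (M (d - 1)).map (Algebra.lsmul K K E a)

/-- `a` acts injectively on `M / N`. -/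
def IsRegularOn (M N : ℤ → Submodule K E) (a : R) : Prop :=
  ∀ d, ∀ x ∈ M d, a • x ∈ N (d + 1) → x ∈ N d

theorem mem_addSMul {a : R} {z : E} :
    z ∈ addSMul M N a (d + 1) ↔ ∃ n ∈ N (d + 1), ∃ x ∈ M d, n + a • x = z := by
  simp [addSMul, Submodule.mem_sup]

theorem add_smul_mem_addSMul {a : R} {n x : E} (hn : n ∈ N (d + 1)) (hx : x ∈ M d) :
    n + a • x ∈ addSMul M N a (d + 1) := mem_addSMul.2 ⟨n, hn, x, hx, rfl⟩

theorem le_addSMul (a : R) : N d ≤ addSMul M N a d := le_sup_left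

theorem addSMul_comm (a b : R) :
    addSMul M (addSMul M N a) b = addSMul M (addSMul M N b) a :=
  funext fun _ => sup_right_comm ..

theorem IsGradedSub.addSMul (hN : IsGradedSub R M N) (a : degreeOne R M) :
    IsGradedSub R M (addSMul M N (a : R)) where
  le d z hz := by
    obtain ⟨d, rfl⟩ : ∃ e, d = e + 1 := ⟨d - 1, by ring⟩
    obtain ⟨n, hn, x, hx, rfl⟩ := mem_addSMul.1 hz
    exact add_mem (hN.le _ hn) (degreeOne_smul_mem a hx)
  smul_mem b d z hz := by
    obtain ⟨d, rfl⟩ : ∃ e, d = e + 1 := ⟨d - 1, by ring⟩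
    obtain ⟨n, hn, x, hx, rfl⟩ := mem_addSMul.1 hz
    rw [smul_add, smul_comm]
    exact add_smul_mem_addSMul (hN.smul_mem b hn) (degreeOne_smul_mem b hx)

section Swap

variable {a b : degreeOne R M}

theorem IsRegularOn.of_addSMul (hM : ∀ d < 0, M d = ⊥) (hN : IsGradedSub R M N)
    (ha : IsRegularOn M N (a : R)) (hb : IsRegularOn M (addSMul M N (a : R)) (b : R)) :
    IsRegularOn M N (b : R) := by
  intro d
  induction d using Int.inductionOn' (b := -1) with
  | zero =>
    intro x hx _
    rw [hM _ (by norm_num), Submodule.mem_bot] at hx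
    exact hx ▸ zero_mem _
  | pred d hd _ =>
    intro x hx _
    rw [hM _ (by lia), Submodule.mem_bot] at hx
    exact hx ▸ zero_mem _
  | succ d _ ih =>
    intro x hx hbx
    obtain ⟨n, hn, x', hx', rfl⟩ := mem_addSMul.1 (hb _ x hx (le_addSMul _ hbx))
    have h_a_b_x' : (a : R) • (b : R) • x' ∈ N (d + 1 + 1) := by
      rw [smul_comm]
      simpa [smul_add] using sub_mem hbx (hN.smul_mem b hn)
    exact add_mem hn (hN.smul_mem a (ih x' hx' (ha _ _ (degreeOne_smul_mem b hx') h_a_b_x')))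

theorem IsRegularOn.addSMul_swap (hN : IsGradedSub R M N)
    (ha : IsRegularOn M N (a : R)) (hb : IsRegularOn M (addSMul M N (a : R)) (b : R)) :
    IsRegularOn M (addSMul M N (b : R)) (a : R) := by
  intro d x hx hax
  obtain ⟨n, hn, z, hz, hnz⟩ := mem_addSMul.1 hax
  have hbz : (b : R) • z ∈ addSMul M N (a : R) (d + 1) := by
    rw [← sub_eq_iff_eq_add'.2 hnz.symm, sub_eq_neg_add]
    exact add_smul_mem_addSMul (neg_mem hn) hx
  obtain ⟨d, rfl⟩ : ∃ e, d = e + 1 := ⟨d - 1, by ring⟩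
  obtain ⟨n', hn', z', hz', rfl⟩ := mem_addSMul.1 (hb _ z hz hbz)
  have hax' : (a : R) • (x - (b : R) • z') ∈ N (d + 1 + 1) := by
    have heq : (a : R) • (x - (b : R) • z') = n + (b : R) • n' := by
      rw [smul_sub, ← hnz, smul_add, smul_comm (a : R) (b : R) z']
      abel
    exact heq ▸ add_mem hn (hN.smul_mem b hn')
  have hx' := ha _ _ (sub_mem hx (degreeOne_smul_mem b hz')) hax'
  simpa using add_smul_mem_addSMul (a := (b : R)) hx' hz'

end Swap

/-- The graded family `N + a₁ M + ⋯ + aₖ M`, for a list of elements of degree one. -/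
def addSMulList (M N : ℤ → Submodule K E) : List (degreeOne R M) → ℤ → Submodule K E
  | [] => N
  | a :: l => addSMul M (addSMulList M N l) (a : R)

/-- Regular sequences on `M / N`. The sequence is read from the end of the list: its head is
regular modulo its tail. -/
def IsRegularSeq (M N : ℤ → Submodule K E) : List (degreeOne R M) → Prop
  | [] => True
  | a :: l => IsRegularSeq M N l ∧ IsRegularOn M (addSMulList M N l) (a : R)

theorem IsGradedSub.addSMulList (hN : IsGradedSub R M N) (l : List (degreeOne R M)) :
    IsGradedSub R M (addSMulList M N l) := by
  induction l with
  | nil => exact hN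
  | cons a l ih => exact ih.addSMul a

theorem addSMulList_addSMul (l : List (degreeOne R M)) (a : R) :
    addSMulList M (addSMul M N a) l = addSMul M (addSMulList M N l) a := by
  induction l with
  | nil => rfl
  | cons b l ih => rw [addSMulList, ih, addSMul_comm, addSMulList]

theorem le_addSMulList (l : List (degreeOne R M)) : N d ≤ addSMulList M N l d := by
  induction l with
  | nil => exact le_rfl
  | cons a l ih => exact ih.trans (le_addSMul _)

theorem IsRegularSeq.addSMul (hM : ∀ d < 0, M d = ⊥) (hN : IsGradedSub R M N)
    {l : List (degreeOne R M)} (hl : IsRegularSeq M N l) {a : degreeOne R M}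
    (ha : IsRegularOn M (addSMulList M N l) (a : R)) :
    IsRegularSeq M (addSMul M N (a : R)) l := by
  induction l with
  | nil => trivial
  | cons b l ih =>
    have hN' := hN.addSMulList l
    refine ⟨ih hl.1 (.of_addSMul hM hN' hl.2 ha), ?_⟩
    rw [addSMulList_addSMul]
    exact .addSMul_swap hN' hl.2 ha

theorem finrank_addSMul [∀ d, FiniteDimensional K (M d)] (hN : IsGradedSub R M N)
    {a : degreeOne R M} (ha : IsRegularOn M N (a : R)) (d : ℤ) :
    Module.finrank K (addSMul M N (a : R) (d + 1)) + Module.finrank K (N d) =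
      Module.finrank K (N (d + 1)) + Module.finrank K (M d) := by
  have _ (d) : FiniteDimensional K (N d) := Submodule.finiteDimensional_of_le (hN.le d)
  let f := Algebra.lsmul K K E (a : R)
  have inf_eq : N (d + 1) ⊓ (M d).map f = (N d).map f := by
    ext x
    constructor
    · rintro ⟨hx, m, hm, rfl⟩
      exact ⟨m, ha d m hm hx, rfl⟩
    · rintro ⟨n, hn, rfl⟩
      exact ⟨hN.smul_mem a hn, n, hN.le d hn, rfl⟩
  have ker_eq : N d ⊓ LinearMap.ker f = M d ⊓ LinearMap.ker f := by
    refine le_antisymm (inf_le_inf_right _ (hN.le d)) fun x hx => ⟨ha d x hx.1 ?_, hx.2⟩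
    rw [show (a : R) • x = 0 from hx.2]
    exact zero_mem _
  have h_sup := Submodule.finrank_sup_add_finrank_inf_eq (N (d + 1)) ((M d).map f)
  have h_N := finrank_map_add_finrank_inf_ker f (N d)
  have h_M := finrank_map_add_finrank_inf_ker f (M d)
  rw [inf_eq] at h_sup
  rw [ker_eq] at h_N
  have addSMul_eq : addSMul M N (a : R) (d + 1) = N (d + 1) ⊔ (M d).map f := by
    rw [addSMul, add_sub_cancel_right]
  rw [addSMul_eq]
  lia

theorem finrank_addSMul_eq [∀ d, FiniteDimensional K (M d)] (hN : IsGradedSub R M N)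
    {a b : degreeOne R M} (ha : IsRegularOn M N (a : R)) (hb : IsRegularOn M N (b : R)) (d : ℤ) :
    Module.finrank K (addSMul M N (a : R) d) = Module.finrank K (addSMul M N (b : R) d) := by
  obtain ⟨d, rfl⟩ : ∃ e, d = e + 1 := ⟨d - 1, by ring⟩
  exact add_right_cancel ((finrank_addSMul hN ha d).trans (finrank_addSMul hN hb d).symm)

/-- The graded quotient `M / N`. -/
abbrev gradedQuotient (M N : ℤ → Submodule K E) (d : ℤ) : Type _ :=
  M d ⧸ (N d).submoduleOf (M d)

/-- Multiplication by an element of degree one on the graded quotient `M / N`. -/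
def quotientMul (hN : IsGradedSub R M N) (d : ℤ) :
    degreeOne R M →ₗ[K] (gradedQuotient M N d →ₗ[K] gradedQuotient M N (d + 1)) where
  toFun a := Submodule.mapQ _ _ ((Algebra.lsmul K K E (a : R)).restrict (a.2 d))
    fun _ hx => hN.smul_mem a hx
  map_add' a b := by
    ext x
    exact congrArg Submodule.Quotient.mk (Subtype.ext (add_smul (a : R) b (x : E)))
  map_smul' c a := by
    ext x
    exact congrArg Submodule.Quotient.mk (Subtype.ext (smul_assoc c (a : R) (x : E)))

theorem quotientMul_mk (hN : IsGradedSub R M N) (a : degreeOne R M) (x : M d) :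
    quotientMul hN d a (Submodule.Quotient.mk x) =
      Submodule.Quotient.mk ⟨(a : R) • x, degreeOne_smul_mem a x.2⟩ := rfl

theorem quotientMul_comm (hN : IsGradedSub R M N) (a b : degreeOne R M)
    (x : gradedQuotient M N d) :
    quotientMul hN (d + 1) a (quotientMul hN d b x) =
      quotientMul hN (d + 1) b (quotientMul hN d a x) := by
  obtain ⟨x, rfl⟩ := Submodule.Quotient.mk_surjective _ x
  simp only [quotientMul_mk, smul_comm (a : R) (b : R) (x : E)]

theorem isRegularOn_iff_quotientMul_injective (hN : IsGradedSub R M N) {a : degreeOne R M} :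
    IsRegularOn M N (a : R) ↔ ∀ d, Function.Injective (quotientMul hN d a) := by
  have mk_eq_zero {d} (x : M d) :
      (Submodule.Quotient.mk x : gradedQuotient M N d) = 0 ↔ (x : E) ∈ N d :=
    Submodule.Quotient.mk_eq_zero _
  refine forall_congr' fun d => ?_
  rw [injective_iff_map_eq_zero]
  constructor
  · intro h v hv
    obtain ⟨x, rfl⟩ := Submodule.Quotient.mk_surjective _ v
    exact (mk_eq_zero x).2 (h x x.2 ((mk_eq_zero _).1 hv))
  · intro h x hx hax
    exact (mk_eq_zero ⟨x, hx⟩).1 (h _ ((mk_eq_zero ⟨_, degreeOne_smul_mem a hx⟩).2 hax))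

variable {ι : Type*}

/-- The graded family `N + ∑ᵢ Fᵢ M`, for a family of elements of degree one. -/
def addSMulFamily (M N : ℤ → Submodule K E) (F : ι → degreeOne R M) (d : ℤ) : Submodule K E :=
  N d ⊔ ⨆ i, (M (d - 1)).map (Algebra.lsmul K K E (F i : R))

theorem addSMulFamily_unit (a : degreeOne R M) :
    addSMulFamily M N (fun _ : Unit => a) = addSMul M N (a : R) := by
  funext d
  rw [addSMulFamily, iSup_const, addSMul]

theorem addSMulFamily_mono {N' : ℤ → Submodule K E} (h : N d ≤ N' d) (F : ι → degreeOne R M) :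
    addSMulFamily M N F d ≤ addSMulFamily M N' F d := sup_le_sup_right h _

theorem addSMul_le_addSMulFamily {F : ι → degreeOne R M} {g : degreeOne R M}
    (hg : g ∈ Submodule.span K (Set.range F)) (d : ℤ) :
    addSMul M N (g : R) d ≤ addSMulFamily M N F d := by
  refine sup_le le_sup_left (le_sup_of_le_right ?_)
  rintro _ ⟨x, hx, rfl⟩
  let W : Submodule K (degreeOne R M) :=
    (⨆ i, (M (d - 1)).map (Algebra.lsmul K K E (F i : R))).comap
      (((Algebra.lsmul K K E).toLinearMap.flip x).comp (degreeOne R M).subtype)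
  suffices h : Submodule.span K (Set.range F) ≤ W from h hg
  rw [Submodule.span_le]
  rintro _ ⟨i, rfl⟩
  exact Submodule.mem_iSup_of_mem i ⟨x, hx, rfl⟩

theorem iSup_range_quotientMul_eq_top (hN : IsGradedSub R M N) {F : ι → degreeOne R M}
    (hF : M (d + 1) ≤ addSMulFamily M N F (d + 1)) :
    ⨆ i, LinearMap.range (quotientMul hN d (F i)) = ⊤ := by
  set W := ⨆ i, LinearMap.range (quotientMul hN d (F i))
  let U : Submodule K E := (W.comap (Submodule.mkQ _)).map (M (d + 1)).subtype
  suffices hU : addSMulFamily M N F (d + 1) ≤ U by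
    rw [eq_top_iff]
    intro z _
    obtain ⟨z, rfl⟩ := Submodule.mkQ_surjective _ z
    obtain ⟨z', hz', h⟩ := hU (hF z.2)
    rwa [← Subtype.ext h]
  refine sup_le (fun n hn => ?_) (iSup_le fun i => ?_)
  · refine ⟨⟨n, hN.le _ hn⟩, ?_, rfl⟩
    have hzero : ((N (d + 1)).submoduleOf (M (d + 1))).mkQ ⟨n, hN.le _ hn⟩ = 0 :=
      (Submodule.Quotient.mk_eq_zero _).2 hn
    rw [SetLike.mem_coe, Submodule.mem_comap, hzero]
    exact zero_mem _
  · rw [add_sub_cancel_right]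
    rintro _ ⟨x, hx, rfl⟩
    exact ⟨⟨_, degreeOne_smul_mem (F i) hx⟩,
      Submodule.mem_iSup_of_mem i ⟨Submodule.Quotient.mk ⟨x, hx⟩, rfl⟩, rfl⟩

theorem eventually_le_addSMul_of_isRegularOn [∀ d, FiniteDimensional K (M d)]
    (hN : IsGradedSub R M N) {a b : degreeOne R M} (ha : IsRegularOn M N (a : R))
    (hb : IsRegularOn M N (b : R)) (h : ∀ᶠ d in atTop, M d ≤ addSMul M N (a : R) d) :
    ∀ᶠ d in atTop, M d ≤ addSMul M N (b : R) d := by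
  filter_upwards [h] with d hd
  refine (Submodule.eq_of_le_of_finrank_le ((hN.addSMul b).le d) ?_).ge
  rw [← finrank_addSMul_eq hN ha hb]
  have := Submodule.finiteDimensional_of_le ((hN.addSMul a).le d)
  exact Submodule.finrank_mono hd

theorem exists_isRegularOn_mem_span [Infinite K] [Finite ι] [∀ d, FiniteDimensional K (M d)]
    (hN : IsGradedSub R M N) {y : degreeOne R M} (hy : IsRegularOn M N (y : R))
    (hy' : ∀ᶠ d in atTop, M d ≤ addSMul M N (y : R) d) {F : ι → degreeOne R M}
    (hF : ∀ᶠ d in atTop, M d ≤ addSMulFamily M N F d) :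
    ∃ g ∈ Submodule.span K (Set.range F), IsRegularOn M N (g : R) := by
  have := Fintype.ofFinite ι
  have tendsto_succ : Tendsto (fun d : ℤ => d + 1) atTop atTop :=
    tendsto_atTop_add_const_right _ _ tendsto_id
  obtain ⟨c, hc⟩ := exists_forall_injective_sum_smul (K := K)
    (y := fun d => quotientMul hN d y) (G := fun i d => quotientMul hN d (F i))
    ((isRegularOn_iff_quotientMul_injective hN).1 hy) (by
      filter_upwards [tendsto_succ.eventually hy'] with d hd
      rw [← addSMulFamily_unit] at hd
      rw [← LinearMap.range_eq_top, ← iSup_range_quotientMul_eq_top hN hd, iSup_const])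
    (fun i d x => quotientMul_comm hN ..) (fun i j d x => quotientMul_comm hN ..) (by
      filter_upwards [tendsto_succ.eventually hF] with d hd
      exact iSup_range_quotientMul_eq_top hN hd)
  refine ⟨∑ i, c i • F i, Submodule.sum_smul_mem _ _ fun i _ => Submodule.subset_span ⟨i, rfl⟩, ?_⟩
  simpa only [isRegularOn_iff_quotientMul_injective hN, map_sum, map_smul] using hc

theorem finrank_addSMulList_le [Infinite K] [Finite ι] [∀ d, FiniteDimensional K (M d)]
    (hM : ∀ d < 0, M d = ⊥) (hN : IsGradedSub R M N) {l : List (degreeOne R M)}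
    (hl : IsRegularSeq M N l) (hl' : ∀ᶠ d in atTop, M d ≤ addSMulList M N l d)
    {F : ι → degreeOne R M} (hF : ∀ᶠ d in atTop, M d ≤ addSMulFamily M N F d) (d : ℤ) :
    Module.finrank K (addSMulList M N l d) ≤ Module.finrank K (addSMulFamily M N F d) := by
  have family_le {N : ℤ → Submodule K E} (hN : IsGradedSub R M N) :
      addSMulFamily M N F d ≤ M d := by
    refine sup_le (hN.le d) (iSup_le fun i => ?_)
    rintro _ ⟨x, hx, rfl⟩
    simpa using degreeOne_smul_mem (F i) hx
  have := Submodule.finiteDimensional_of_le (family_le hN)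
  induction l generalizing N with
  | nil => exact Submodule.finrank_mono le_sup_left
  | cons y l ih =>
    have hN' := hN.addSMulList l
    obtain ⟨g, hgF, hg⟩ := exists_isRegularOn_mem_span hN' hl.2 hl' <|
      hF.mono fun d hd => hd.trans (addSMulFamily_mono (le_addSMulList l) F)
    have hl'g := eventually_le_addSMul_of_isRegularOn hN' hl.2 hg hl'
    rw [← addSMulList_addSMul] at hl'g
    calc Module.finrank K (addSMulList M N (y :: l) d)
        = Module.finrank K (addSMul M (addSMulList M N l) (g : R) d) :=
          finrank_addSMul_eq hN' hl.2 hg d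
      _ = Module.finrank K (addSMulList M (addSMul M N (g : R)) l d) := by rw [addSMulList_addSMul]
      _ ≤ Module.finrank K (addSMulFamily M (addSMul M N (g : R)) F d) :=
          ih (hN.addSMul g) (hl.1.addSMul hM hN hg) hl'g
            (hF.mono fun d hd => hd.trans (addSMulFamily_mono (le_addSMul _) F))
            (Submodule.finiteDimensional_of_le (family_le (hN.addSMul g)))
      _ ≤ Module.finrank K (addSMulFamily M N F d) :=
          Submodule.finrank_mono (sup_le (addSMul_le_addSMulFamily hgF d) le_sup_right)

end RegularSequences

/-! ### Faces, simplices and polar polyhedra -/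

section ConvexGeometry

theorem isExtreme_setOf_eq {E : Type*} [AddCommGroup E] [Module ℝ E] {P : Set E} {l : E →ₗ[ℝ] ℝ}
    {c : ℝ} (hl : ∀ x ∈ P, l x ≤ c) : IsExtreme ℝ P {x ∈ P | l x = c} := by
  refine (isExtreme_iff ..).2 ⟨fun x hx => hx.1, ?_⟩
  rintro x hx y hy z ⟨-, hz⟩ ⟨p, q, hp, hq, hpq, rfl⟩
  refine ⟨hx, (hl x hx).antisymm (le_of_not_gt fun hlt => ?_)⟩
  rw [map_add, map_smul, map_smul, smul_eq_mul, smul_eq_mul] at hz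
  obtain rfl : q = 1 - p := by linarith
  nlinarith [mul_pos hp (sub_pos.2 hlt), mul_nonneg hq.le (sub_nonneg.2 (hl y hy))]

theorem linearIndependent_of_affineIndependent_of_eq_one {ι K V : Type*} [Field K]
    [AddCommGroup V] [Module K V] {p : ι → V} (hp : AffineIndependent K p) {l : V →ₗ[K] K}
    (hl : ∀ i, l (p i) = 1) : LinearIndependent K p := by
  refine linearIndependent_iff'.2 fun s g hg => affineIndependent_iff.1 hp s g ?_ hg
  simpa [hl] using congrArg l hg

variable {ι V : Type*} [Fintype ι] [AddCommGroup V] [Module ℝ V] (b : Module.Basis ι ℝ V)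

theorem mem_convexHull_basis_image {S : Set ι} {x : V} :
    x ∈ convexHull ℝ (b '' S) ↔
      (∀ k, 0 ≤ b.repr x k) ∧ ∑ k, b.repr x k = 1 ∧ ∀ k ∉ S, b.repr x k = 0 := by
  classical
  constructor
  · refine fun hx => convexHull_min (t := {x | (∀ k, 0 ≤ b.repr x k) ∧
      ∑ k, b.repr x k = 1 ∧ ∀ k ∉ S, b.repr x k = 0}) ?_ ?_ hx
    · rintro _ ⟨k, hk, rfl⟩
      simp only [Set.mem_ofPred_eq, Module.Basis.repr_self, Finsupp.single_apply]
      refine ⟨fun j => by split_ifs <;> simp, by simp, fun j hj => if_neg ?_⟩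
      rintro rfl
      exact hj hk
    · intro x hx y hy p q hp hq hpq
      simp only [Set.mem_ofPred_eq, map_add, map_smul, Finsupp.add_apply, Finsupp.smul_apply,
        smul_eq_mul, Finset.sum_add_distrib, ← Finset.mul_sum, hx.2.1, hy.2.1, mul_one]
      refine ⟨fun k => add_nonneg (mul_nonneg hp (hx.1 k)) (mul_nonneg hq (hy.1 k)), hpq,
        fun k hk => by rw [hx.2.2 k hk, hy.2.2 k hk, mul_zero, mul_zero, add_zero]⟩
  · rintro ⟨nonneg, sum_eq, eq_zero⟩
    have mem_of_ne_zero (k) (hk : b.repr x k ≠ 0) : k ∈ S := by_contra fun hkS => hk (eq_zero k hkS)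
    rw [← b.sum_repr x, ← Finset.sum_filter_of_ne (p := (· ∈ S)) fun k _ hk =>
      mem_of_ne_zero k (left_ne_zero_of_smul hk)]
    refine (convex_convexHull ℝ _).sum_mem (fun k _ => nonneg k) ?_ fun k hk => ?_
    · rwa [Finset.sum_filter_of_ne fun k _ hk => mem_of_ne_zero k hk]
    exact subset_convexHull ℝ _ ⟨k, (Finset.mem_filter.1 hk).2, rfl⟩

theorem extremePoints_convexHull_basis_image {ι : Type*} [Finite ι] (b : Module.Basis ι ℝ V)
    (S : Set ι) :
    (convexHull ℝ (b '' S)).extremePoints ℝ = b '' S := by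
  classical
  have := Fintype.ofFinite ι
  refine extremePoints_convexHull_subset.antisymm ?_
  rintro _ ⟨k, hk, rfl⟩
  have coord_le : ∀ x ∈ convexHull ℝ (b '' S), b.coord k x ≤ 1 := fun x hx => by
    obtain ⟨nonneg, sum_eq, -⟩ := (mem_convexHull_basis_image b).1 hx
    exact sum_eq ▸ Finset.single_le_sum (fun j _ => nonneg j) (Finset.mem_univ k)
  rw [← isExtreme_singleton]
  convert! isExtreme_setOf_eq coord_le
  rw [eq_comm, Set.eq_singleton_iff_unique_mem]
  refine ⟨⟨subset_convexHull ℝ _ ⟨k, hk, rfl⟩, by simp⟩, ?_⟩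
  rintro x ⟨hx, hxk : b.repr x k = 1⟩
  obtain ⟨nonneg, sum_eq, -⟩ := (mem_convexHull_basis_image b).1 hx
  refine b.ext_elem fun j => ?_
  rw [b.repr_self, Finsupp.single_apply]
  split_ifs with hkj
  · exact hkj ▸ hxk
  · have sum_erase := Finset.add_sum_erase Finset.univ (b.repr x) (Finset.mem_univ k)
    rw [sum_eq, hxk, add_eq_left, Finset.sum_eq_zero_iff_of_nonneg fun i _ => nonneg i]
      at sum_erase
    exact sum_erase j (Finset.mem_erase.2 ⟨Ne.symm hkj, Finset.mem_univ j⟩)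

end ConvexGeometry

section Polar

variable {ι σ : Type*} [Fintype σ]

/-- The polar polyhedron of the finitely many vectors `a i`, `i ∈ s`. -/
def polar (s : Finset ι) (a : ι → σ → ℝ) : Set (σ → ℝ) :=
  {y | ∀ i ∈ s, y ⬝ᵥ a i ≤ 1}

variable {s : Finset ι} {a : ι → σ → ℝ}

theorem isClosed_polar : IsClosed (polar s a) := by
  simp only [polar, Set.ofPred_forall]
  exact isClosed_biInter fun i _ => isClosed_le (by fun_prop) continuous_const

theorem eventually_add_smul_mem_polar {y d : σ → ℝ} (hy : y ∈ polar s a)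
    (hd : ∀ i ∈ s, y ⬝ᵥ a i = 1 → d ⬝ᵥ a i ≤ 0) :
    ∀ᶠ ε in 𝓝[>] (0 : ℝ), y + ε • d ∈ polar s a := by
  refine (Filter.eventually_all_finset s).2 fun i hi => ?_
  simp only [add_dotProduct, smul_dotProduct, smul_eq_mul]
  rcases (hy i hi).lt_or_eq with slack | tight
  · have cont : Continuous fun ε : ℝ => y ⬝ᵥ a i + ε * (d ⬝ᵥ a i) := by fun_prop
    have lim := (cont.tendsto' 0 (y ⬝ᵥ a i) (by simp)).mono_left
      (nhdsWithin_le_nhds (s := Set.Ioi 0))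
    exact (lim.eventually_lt_const slack).mono fun _ h => h.le
  · filter_upwards [self_mem_nhdsWithin] with ε hε
    linarith [mul_nonpos_of_nonneg_of_nonpos (Set.mem_Ioi.1 hε).le (hd i hi tight)]

theorem dotProduct_nonpos_of_isMaxOn_polar {x y d : σ → ℝ} (hy : y ∈ polar s a)
    (hmax : ∀ z ∈ polar s a, z ⬝ᵥ x ≤ y ⬝ᵥ x)
    (hd : ∀ i ∈ s, y ⬝ᵥ a i = 1 → d ⬝ᵥ a i ≤ 0) : d ⬝ᵥ x ≤ 0 := by
  obtain ⟨ε, hmem, hε⟩ :=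
    ((eventually_add_smul_mem_polar hy hd).and self_mem_nhdsWithin).exists
  have hle := hmax _ hmem
  rw [add_dotProduct, smul_dotProduct, smul_eq_mul, add_le_iff_nonpos_right] at hle
  exact nonpos_of_mul_nonpos_right hle hε

theorem span_tight_eq_top_of_mem_extremePoints {y : σ → ℝ}
    (hy : y ∈ (polar s a).extremePoints ℝ) :
    Submodule.span ℝ (a '' {i | i ∈ s ∧ y ⬝ᵥ a i = 1}) = ⊤ := by
  classical
  by_contra hne
  obtain ⟨l, l_ne_zero, hl⟩ := Submodule.exists_le_ker_of_lt_top _ (lt_top_iff_ne_top.2 hne)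
  obtain ⟨d, rfl⟩ := (dotProductEquiv ℝ σ).surjective l
  have orth : ∀ i ∈ s, y ⬝ᵥ a i = 1 → d ⬝ᵥ a i = 0 := fun i hi tight =>
    hl (Submodule.subset_span ⟨i, ⟨hi, tight⟩, rfl⟩)
  obtain ⟨ε, ⟨hadd, hsub⟩, hε⟩ :=
    (((eventually_add_smul_mem_polar hy.1 fun i hi tight => (orth i hi tight).le).and
      (eventually_add_smul_mem_polar (d := -d) hy.1 fun i hi tight => by
        rw [neg_dotProduct, orth i hi tight, neg_zero])).and self_mem_nhdsWithin).exists
  have midpoint : y ∈ openSegment ℝ (y + ε • d) (y + ε • -d) :=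
    ⟨1 / 2, 1 / 2, by norm_num, by norm_num, by norm_num, by module⟩
  have hd : ε • d = 0 := by
    simpa using (mem_extremePoints_iff_left.1 hy).2 _ hadd _ hsub midpoint
  exact l_ne_zero (by rw [(smul_eq_zero.1 hd).resolve_left hε.ne', map_zero])

theorem exists_extremePoint_polar_isMaxOn {x : σ → ℝ}
    (hcompact : IsCompact {y ∈ polar s a | 0 ≤ y ⬝ᵥ x}) :
    ∃ y ∈ (polar s a).extremePoints ℝ, ∀ z ∈ polar s a, z ⬝ᵥ x ≤ y ⬝ᵥ x := by
  have zero_mem : (0 : σ → ℝ) ∈ {y ∈ polar s a | 0 ≤ y ⬝ᵥ x} :=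
    ⟨fun i _ => by simp, by simp⟩
  have cont : Continuous fun y : σ → ℝ => y ⬝ᵥ x := by fun_prop
  obtain ⟨y₀, hy₀, isMax⟩ := hcompact.exists_isMaxOn ⟨0, zero_mem⟩ cont.continuousOn
  have hmax : ∀ z ∈ polar s a, z ⬝ᵥ x ≤ y₀ ⬝ᵥ x := fun z hz =>
    (le_total 0 (z ⬝ᵥ x)).elim (fun h => isMax ⟨hz, h⟩) fun h => h.trans hy₀.2
  have face_compact : IsCompact {y ∈ polar s a | y ⬝ᵥ x = y₀ ⬝ᵥ x} :=
    hcompact.of_isClosed_subset (isClosed_polar.inter (isClosed_eq cont continuous_const))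
      fun y hy => ⟨hy.1, hy.2 ▸ hy₀.2⟩
  obtain ⟨y, hy⟩ := face_compact.extremePoints_nonempty ⟨y₀, hy₀.1, rfl⟩
  have face_extreme : IsExtreme ℝ (polar s a) {y ∈ polar s a | y ⬝ᵥ x = y₀ ⬝ᵥ x} :=
    isExtreme_setOf_eq (l := (dotProductBilin ℝ ℝ).flip x) hmax
  exact ⟨y, face_extreme.extremePoints_subset_extremePoints hy, fun z hz => hy.1.2 ▸ hmax z hz⟩

end Polar

/-! ### Facets of the Newton polytope -/

section Facets

variable {σ : Type*} {f : MvPolynomial σ ℂ}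

theorem toR_mem_newtonPolytope {m : σ →₀ ℕ} (hm : m ∈ f.support) : toR m ∈ newtonPolytope f :=
  subset_convexHull ℝ _ (Or.inr ⟨m, hm, rfl⟩)

theorem le_of_mem_newtonPolytope {l : (σ → ℝ) →ₗ[ℝ] ℝ} {c : ℝ} (hc : 0 ≤ c)
    (hl : ∀ m ∈ f.support, l (toR m) ≤ c) : ∀ x ∈ newtonPolytope f, l x ≤ c := by
  refine fun x hx => convexHull_min (t := {x | l x ≤ c}) ?_ (convex_halfSpace_le l.isLinear c) hx
  rintro _ (rfl | ⟨m, hm, rfl⟩)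
  · exact (map_zero l).trans_le hc
  · exact hl m hm

theorem exists_toR_eq_of_mem_extremePoints {p : σ → ℝ}
    (hp : p ∈ (newtonPolytope f).extremePoints ℝ) (hp0 : p ≠ 0) :
    ∃ m ∈ f.support, toR m = p :=
  (extremePoints_convexHull_subset hp).resolve_left hp0

variable [Fintype σ]

/-- `y` is the normal `u_F` of a facet `F` of the Newton boundary, normalized so that
`F = P ∩ {x | y ⬝ᵥ x = 1}`. -/
def IsFacetNormal (f : MvPolynomial σ ℂ) (y : σ → ℝ) : Prop :=
  y ∈ polar f.support toR ∧ Submodule.span ℝ (toR '' {m | m ∈ f.support ∧ y ⬝ᵥ toR m = 1}) = ⊤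

theorem finite_setOf_isFacetNormal (f : MvPolynomial σ ℂ) : {y | IsFacetNormal f y}.Finite := by
  classical
  refine Set.Finite.of_injOn (t := (f.support.powerset : Set (Finset (σ →₀ ℕ))))
    (f := fun y => {m ∈ f.support | y ⬝ᵥ toR m = 1})
    (fun y _ => Finset.mem_powerset.2 (Finset.filter_subset _ _)) ?_ (Finset.finite_toSet _)
  intro y hy z _ tight_eq
  refine (dotProductEquiv ℝ σ).injective (LinearMap.ext_on hy.2 ?_)
  rintro _ ⟨m, hm, rfl⟩
  have hmz : m ∈ {m ∈ f.support | z ⬝ᵥ toR m = 1} :=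
    (Finset.ext_iff.1 tight_eq m).1 (Finset.mem_filter.2 hm)
  exact hm.2.trans (Finset.mem_filter.1 hmz).2.symm

theorem IsFacetNormal.nbFace [Nonempty σ] {y : σ → ℝ} (hy : IsFacetNormal f y) :
    NBFace f {x ∈ newtonPolytope f | y ⬝ᵥ x = 1} := by
  obtain ⟨m, hm, tight⟩ : {m | m ∈ f.support ∧ y ⬝ᵥ toR m = 1}.Nonempty := by
    refine Set.nonempty_iff_ne_empty.2 fun hempty => bot_ne_top (α := Submodule ℝ (σ → ℝ)) ?_
    rw [← hy.2, hempty, Set.image_empty, Submodule.span_empty]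
  refine ⟨⟨⟨toR m, toR_mem_newtonPolytope hm, tight⟩, dotProductBilin ℝ ℝ y, 1,
    le_of_mem_newtonPolytope zero_le_one hy.1, rfl⟩, ?_⟩
  simp

theorem IsFacetNormal.exists_basis [Nonempty σ] {y : σ → ℝ} (hy : IsFacetNormal f y)
    (hsimp : ∀ Δ, NBFace f Δ → IsSimplex Δ) :
    ∃ b : Module.Basis σ ℝ (σ → ℝ),
      {x ∈ newtonPolytope f | y ⬝ᵥ x = 1} = convexHull ℝ (Set.range b) := by
  obtain ⟨k, p, hp, facet_eq⟩ := hsimp _ hy.nbFace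
  have level_one (j) : y ⬝ᵥ p j = 1 := by
    have := subset_convexHull ℝ _ (Set.mem_range_self (f := p) j)
    rw [← facet_eq] at this
    exact this.2
  have indep := linearIndependent_of_affineIndependent_of_eq_one hp
    (l := dotProductBilin ℝ ℝ y) level_one
  have spans : ⊤ ≤ Submodule.span ℝ (Set.range p) := by
    rw [← hy.2, Submodule.span_le]
    rintro _ ⟨m, hm, rfl⟩
    exact convexHull_min Submodule.subset_span (Submodule.convex _)
      (facet_eq ▸ ⟨toR_mem_newtonPolytope hm.1, hm.2⟩)
  let b₀ := Module.Basis.mk indep spans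
  have card_eq : Fintype.card (Fin (k + 1)) = Fintype.card σ :=
    (Module.finrank_eq_card_basis b₀).symm.trans (Module.finrank_fintype_fun_eq_card ℝ)
  exact ⟨b₀.reindex (Fintype.equivOfCardEq card_eq), by simpa [b₀] using facet_eq⟩

theorem IsFacetNormal.exists_vertices [Nonempty σ] {y : σ → ℝ} (hy : IsFacetNormal f y)
    (hsimp : ∀ Δ, NBFace f Δ → IsSimplex Δ) :
    ∃ (b : Module.Basis σ ℝ (σ → ℝ)) (s : σ → σ →₀ ℕ),
      (∀ k, s k ∈ f.support) ∧ (∀ k, b k = toR (s k)) ∧ (∀ x, y ⬝ᵥ x = ∑ k, b.repr x k) ∧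
      ∀ m ∈ f.support, y ⬝ᵥ toR m = 1 → ∀ k, 0 ≤ b.repr (toR m) k := by
  obtain ⟨b, facet_eq⟩ := hy.exists_basis hsimp
  rw [← Set.image_univ] at facet_eq
  have level_one (k) : y ⬝ᵥ b k = 1 := by
    have := subset_convexHull ℝ _ (Set.mem_image_of_mem b (Set.mem_univ k))
    rw [← facet_eq] at this
    exact this.2
  have vertex (k) : ∃ m ∈ f.support, toR m = b k := by
    refine exists_toR_eq_of_mem_extremePoints ?_ (b.ne_zero k)
    refine (isExtreme_setOf_eq (l := dotProductBilin ℝ ℝ y)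
      (le_of_mem_newtonPolytope zero_le_one hy.1)).extremePoints_subset_extremePoints ?_
    simp only [dotProductBilin_apply_apply]
    rw [facet_eq, extremePoints_convexHull_basis_image]
    exact Set.mem_image_of_mem b (Set.mem_univ k)
  choose s s_mem toR_s using vertex
  refine ⟨b, s, s_mem, fun k => (toR_s k).symm, fun x => ?_, fun m hm tight => ?_⟩
  · conv_lhs => rw [← b.sum_repr x, dotProduct_sum]
    simp only [dotProduct_smul, level_one, smul_eq_mul, mul_one]
  · have hm' : toR m ∈ {x ∈ newtonPolytope f | y ⬝ᵥ x = 1} :=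
      ⟨toR_mem_newtonPolytope hm, tight⟩
    rw [facet_eq, mem_convexHull_basis_image] at hm'
    exact hm'.1

theorem isCompact_polar_support_inter (hconv : Convenient f) {x : σ → ℝ} (hx : ∀ i, 0 < x i) :
    IsCompact {y ∈ polar f.support toR | 0 ≤ y ⬝ᵥ x} := by
  classical
  have le_one {y} (hy : y ∈ polar f.support toR) (i) : y i ≤ 1 := by
    obtain ⟨k, one_le_k, hk⟩ := hconv i
    have y_mul_le : y i * k ≤ 1 := by
      simpa [toR, dotProduct, Finsupp.single_apply] using hy _ (mem_support_iff.2 hk)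
    have : (1 : ℝ) ≤ k := by exact_mod_cast one_le_k
    by_contra!
    nlinarith
  have lower {y} (hy : y ∈ polar f.support toR) (hyx : 0 ≤ y ⬝ᵥ x) (i) :
      -(∑ j, x j) / x i ≤ y i := by
    rw [dotProduct, ← Finset.add_sum_erase _ _ (Finset.mem_univ i)] at hyx
    have rest_le : ∑ j ∈ Finset.univ.erase i, y j * x j ≤ ∑ j, x j :=
      (Finset.sum_le_sum fun j _ => mul_le_of_le_one_left (hx j).le (le_one hy j)).trans
        (Finset.sum_le_sum_of_subset_of_nonneg (Finset.erase_subset _ _) fun j _ _ => (hx j).le)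
    rw [div_le_iff₀ (hx i)]
    linarith
  have cont : Continuous fun y : σ → ℝ => y ⬝ᵥ x := by fun_prop
  refine (isCompact_univ_pi fun i => isCompact_Icc).of_isClosed_subset
    (isClosed_polar.inter (isClosed_le continuous_const cont))
    fun y hy i _ => ⟨lower hy.1 hy.2 i, le_one hy.1 i⟩

theorem exists_isFacetNormal_forall_dotProduct_nonneg (hconv : Convenient f) {x : σ → ℝ}
    (hx : ∀ i, 0 < x i) :
    ∃ y, IsFacetNormal f y ∧
      ∀ d : σ → ℝ, (∀ m ∈ f.support, y ⬝ᵥ toR m = 1 → 0 ≤ d ⬝ᵥ toR m) → 0 ≤ d ⬝ᵥ x := by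
  obtain ⟨y, hy, hmax⟩ :=
    exists_extremePoint_polar_isMaxOn (isCompact_polar_support_inter hconv hx)
  refine ⟨y, ⟨hy.1, span_tight_eq_top_of_mem_extremePoints hy⟩, fun d hd => ?_⟩
  have := dotProduct_nonpos_of_isMaxOn_polar (d := -d) hy.1 hmax fun m hm tight => by
    simpa using hd m hm tight
  simpa using this

end Facets

/-! ### The simplicial fan over the Newton boundary -/

section Fan

variable {σ : Type*} [Fintype σ]

theorem exists_pos_forall_dotProduct_ne_zero {D : Set (σ → ℝ)} (hD : D.Finite) (h0 : 0 ∉ D) :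
    ∃ ξ : σ → ℝ, (∀ i, 0 < ξ i) ∧ ∀ d ∈ D, d ⬝ᵥ ξ ≠ 0 := by
  -- `ξ` is a point of the moment curve off the zeros of finitely many nonzero polynomials.
  let e : σ → ℕ := fun i => Fintype.equivFin σ i
  have e_inj : e.Injective := Fin.val_injective.comp (Fintype.equivFin σ).injective
  let p (d : σ → ℝ) : Polynomial ℝ := ∑ i, Polynomial.monomial (e i) (d i)
  have p_ne_zero (d) (hd : d ∈ D) : p d ≠ 0 := by
    classical
    refine fun h => ne_of_mem_of_not_mem hd h0 (funext fun i => ?_)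
    simpa [p, Polynomial.coeff_monomial, e_inj.eq_iff] using congrArg (·.coeff (e i)) h
  have finite_roots : (⋃ d ∈ D, {t | (p d).IsRoot t}).Finite :=
    hD.biUnion fun d hd => Polynomial.finite_setOfPred_isRoot (p_ne_zero d hd)
  obtain ⟨t, ht, not_root⟩ := (Set.Ioi_infinite (0 : ℝ)).exists_notMem_finite finite_roots
  refine ⟨fun i => t ^ e i, fun i => pow_pos ht _, fun d hd h => not_root ?_⟩
  refine Set.mem_biUnion hd ?_
  simpa [p, Polynomial.eval_finsetSum, dotProduct] using h

/-- The facets of the Newton boundary, encoded by their normals `u_F`. -/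
abbrev Facet (f : MvPolynomial σ ℂ) : Type _ :=
  {y : σ → ℝ // IsFacetNormal f y}

noncomputable instance (f : MvPolynomial σ ℂ) : Fintype (Facet f) :=
  (finite_setOf_isFacetNormal f).fintype

/-- The functional `⟨u_F, ·⟩`, which equals `1` on the facet. -/
noncomputable def height {f : MvPolynomial σ ℂ} (τ : Facet f) : (σ → ℝ) →ₗ[ℝ] ℝ :=
  dotProductBilin ℝ ℝ τ.1

/-- The simplicial fan of cones over the facets of the Newton boundary: the vertices of each facet
simplex, indexed by `σ`, and the basis they form, together with a generic positive vector used to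
assign each point of the orthant to exactly one cone. -/
structure NewtonFan (f : MvPolynomial σ ℂ) where
  basis : Facet f → Module.Basis σ ℝ (σ → ℝ)
  vertex : Facet f → σ → σ →₀ ℕ
  vertex_mem_support (τ k) : vertex τ k ∈ f.support
  basis_eq (τ k) : basis τ k = toR (vertex τ k)
  height_eq_sum (τ : Facet f) (x) : height τ x = ∑ k, (basis τ).coord k x
  coord_nonneg_of_height_eq_one (τ : Facet f) :
    ∀ m ∈ f.support, height τ (toR m) = 1 → ∀ k, 0 ≤ (basis τ).coord k (toR m)
  exists_coord_nonneg (x : σ → ℝ) (hx : ∀ i, 0 < x i) : ∃ τ, ∀ k, 0 ≤ (basis τ).coord k x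
  direction : σ → ℝ
  direction_pos (i) : 0 < direction i
  coord_direction_ne_zero (τ k) : (basis τ).coord k direction ≠ 0
  height_direction_injective : Function.Injective fun τ : Facet f => height τ direction

theorem exists_newtonFan [Nonempty σ] {f : MvPolynomial σ ℂ} (hconv : Convenient f)
    (hsimp : ∀ Δ, NBFace f Δ → IsSimplex Δ) : Nonempty (NewtonFan f) := by
  classical
  choose b s s_mem b_eq height_eq coord_nonneg using fun τ : Facet f => τ.2.exists_vertices hsimp
  choose dual h_dual using fun p : Facet f × σ =>
    (dotProductEquiv ℝ σ).surjective ((b p.1).coord p.2)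
  have coord_eq (τ : Facet f) (k x) : (b τ).coord k x = dual (τ, k) ⬝ᵥ x := by
    rw [← h_dual (τ, k), dotProductEquiv_apply_apply]
  let D : Set (σ → ℝ) :=
    Set.range dual ∪ (Set.range fun p : Facet f × Facet f => p.1.1 - p.2.1) \ {0}
  have zero_notMem : 0 ∉ D := by
    rintro (⟨⟨τ, k⟩, h⟩ | h)
    · simpa [h] using coord_eq τ k (b τ k)
    · exact h.2 rfl
  obtain ⟨ξ, ξ_pos, hξ⟩ := exists_pos_forall_dotProduct_ne_zero
    ((Set.finite_range _).union (Set.finite_range _).sdiff) zero_notMem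
  refine ⟨⟨b, s, s_mem, b_eq, height_eq, coord_nonneg, fun x hx => ?_, ξ, ξ_pos,
    fun τ k => ?_, fun τ τ' h => ?_⟩⟩
  · obtain ⟨y, hy, nonneg⟩ := exists_isFacetNormal_forall_dotProduct_nonneg hconv hx
    refine ⟨⟨y, hy⟩, fun k => coord_eq ⟨y, hy⟩ k x ▸ nonneg _ fun m hm tight => ?_⟩
    exact coord_eq ⟨y, hy⟩ k _ ▸ coord_nonneg ⟨y, hy⟩ m hm tight k
  · exact coord_eq τ k ξ ▸ hξ _ (Or.inl ⟨_, rfl⟩)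
  · by_contra hne
    refine hξ (τ.1 - τ'.1) (Or.inr ⟨⟨(τ, τ'), rfl⟩, fun h0 => ?_⟩) ?_
    · exact hne (Subtype.ext (sub_eq_zero.1 h0))
    · exact (sub_dotProduct ..).trans (sub_eq_zero.2 h)

end Fan

theorem toR_nonneg {σ : Type*} (v : σ →₀ ℕ) (i : σ) : 0 ≤ toR v i := Nat.cast_nonneg _

theorem eventually_add_mul_pos {a : ℝ} (ha : 0 < a) (b : ℝ) :
    ∀ᶠ ε in 𝓝[>] (0 : ℝ), 0 < a + ε * b := by
  have cont : Continuous fun ε : ℝ => a + ε * b := by fun_prop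
  exact ((cont.tendsto' 0 a (by simp)).mono_left nhdsWithin_le_nhds).eventually_const_lt ha

theorem eventually_add_mul_nonneg {a b : ℝ} (h : 0 < a ∨ a = 0 ∧ 0 ≤ b) :
    ∀ᶠ ε in 𝓝[>] (0 : ℝ), 0 ≤ a + ε * b := by
  rcases h with ha | ⟨rfl, hb⟩
  · exact (eventually_add_mul_pos ha b).mono fun _ => le_of_lt
  · filter_upwards [self_mem_nhdsWithin] with ε hε
    rw [zero_add]
    exact mul_nonneg (Set.mem_Ioi.1 hε).le hb

theorem pos_or_of_frequently_add_mul_nonneg {a b : ℝ}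
    (h : ∃ᶠ ε in 𝓝[>] (0 : ℝ), 0 ≤ a + ε * b) : 0 < a ∨ a = 0 ∧ 0 ≤ b := by
  rcases lt_trichotomy a 0 with ha | rfl | ha
  · refine (h ((eventually_add_mul_pos (neg_pos.2 ha) (-b)).mono fun ε hε => ?_)).elim
    linarith
  · obtain ⟨ε, h, hε⟩ := (h.and_eventually self_mem_nhdsWithin).exists
    exact Or.inr ⟨rfl, nonneg_of_mul_nonneg_right (zero_add (ε * b) ▸ h) hε⟩
  · exact Or.inl ha

namespace NewtonFan

variable {σ : Type*} [Fintype σ] {f : MvPolynomial σ ℂ} (F : NewtonFan f)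

/-- The coordinates with respect to the vertices of a facet. -/
noncomputable def coord (τ : Facet f) (k : σ) : (σ → ℝ) →ₗ[ℝ] ℝ := (F.basis τ).coord k

/-- The cone over a facet. -/
def cone (τ : Facet f) : Set (σ → ℝ) := {x | ∀ k, 0 ≤ F.coord τ k x}

theorem height_eq_sum_coord (τ : Facet f) (x) : height τ x = ∑ k, F.coord τ k x :=
  F.height_eq_sum τ x

theorem coord_basis [DecidableEq σ] (τ : Facet f) (k j) :
    F.coord τ k (F.basis τ j) = if j = k then 1 else 0 := by
  rw [coord, Module.Basis.coord_apply, Module.Basis.repr_self, Finsupp.single_apply]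

theorem sum_coord_smul (τ : Facet f) (x) : ∑ k, F.coord τ k x • F.basis τ k = x :=
  (F.basis τ).sum_repr x

theorem ext_coord (τ : Facet f) {x y : σ → ℝ} (h : ∀ k, F.coord τ k x = F.coord τ k y) : x = y :=
  (F.basis τ).ext_elem h

theorem height_basis (τ : Facet f) (k) : height τ (F.basis τ k) = 1 := by
  classical simp [F.height_eq_sum_coord, coord_basis]

theorem height_le_height {τ τ' : Facet f} {x} (hx : x ∈ F.cone τ) :
    height τ' x ≤ height τ x := by
  rw [F.height_eq_sum_coord τ x]
  conv_lhs => rw [← F.sum_coord_smul τ x, map_sum]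
  refine Finset.sum_le_sum fun k _ => ?_
  rw [map_smul, smul_eq_mul, F.basis_eq]
  exact mul_le_of_le_one_right (hx k) (τ'.2.1 _ (F.vertex_mem_support τ k))

theorem height_nonneg {τ : Facet f} {x} (hx : x ∈ F.cone τ) : 0 ≤ height τ x := by
  rw [F.height_eq_sum_coord]
  exact Finset.sum_nonneg fun k _ => hx k

theorem coord_le_height {τ : Facet f} {x} (hx : x ∈ F.cone τ) (k) :
    F.coord τ k x ≤ height τ x := by
  rw [F.height_eq_sum_coord]
  exact Finset.single_le_sum (fun j _ => hx j) (Finset.mem_univ k)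

theorem height_le_one_of_mem_newtonPolytope (τ : Facet f) {x} (hx : x ∈ newtonPolytope f) :
    height τ x ≤ 1 :=
  le_of_mem_newtonPolytope (l := height τ) zero_le_one τ.2.1 x hx

theorem mem_convexHull_basis (τ : Facet f) {S : Set σ} {x} :
    x ∈ convexHull ℝ (F.basis τ '' S) ↔
      x ∈ F.cone τ ∧ height τ x = 1 ∧ ∀ k ∉ S, F.coord τ k x = 0 := by
  rw [mem_convexHull_basis_image, F.height_eq_sum_coord]
  rfl

theorem convexHull_basis_subset (τ : Facet f) (S : Set σ) :
    convexHull ℝ (F.basis τ '' S) ⊆ newtonPolytope f := by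
  refine convexHull_min ?_ (convex_convexHull ℝ _)
  rintro _ ⟨k, -, rfl⟩
  exact F.basis_eq τ k ▸ toR_mem_newtonPolytope (F.vertex_mem_support τ k)

theorem eq_zero_of_height_eq_zero {τ : Facet f} {x} (hx : x ∈ F.cone τ) (h : height τ x = 0) :
    x = 0 := by
  rw [F.height_eq_sum_coord, Finset.sum_eq_zero_iff_of_nonneg fun k _ => hx k] at h
  exact F.ext_coord τ fun k => by rw [h k (Finset.mem_univ k), map_zero]

theorem inv_height_smul_mem_convexHull {τ : Facet f} {x} (hx : x ∈ F.cone τ)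
    (hpos : 0 < height τ x) : (height τ x)⁻¹ • x ∈ convexHull ℝ (F.basis τ '' Set.univ) := by
  refine (F.mem_convexHull_basis τ).2 ⟨fun k => ?_, ?_, by simp⟩
  · rw [map_smul]
    exact mul_nonneg (inv_nonneg.2 hpos.le) (hx k)
  · rw [map_smul, smul_eq_mul, inv_mul_cancel₀ hpos.ne']

open scoped Pointwise in
theorem nu_eq_height {τ : Facet f} {x} (hx : x ∈ F.cone τ) : nu f x = height τ x := by
  rcases (F.height_nonneg hx).lt_or_eq with hpos | h0
  · have hmem : x ∈ height τ x • newtonPolytope f :=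
      ⟨(height τ x)⁻¹ • x, F.convexHull_basis_subset τ _ (F.inv_height_smul_mem_convexHull hx hpos),
        smul_inv_smul₀ hpos.ne' x⟩
    refine (gauge_le_of_mem hpos.le hmem).antisymm (le_csInf ⟨_, hpos, hmem⟩ ?_)
    rintro r ⟨hr, y, hy, rfl⟩
    rw [map_smul, smul_eq_mul]
    exact mul_le_of_le_one_right (le_of_lt hr) (height_le_one_of_mem_newtonPolytope τ hy)
  · rw [F.eq_zero_of_height_eq_zero hx h0.symm, nu, gauge_zero, map_zero]

theorem nonneg_of_mem_cone {τ : Facet f} {x} (hx : x ∈ F.cone τ) (i) : 0 ≤ x i := by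
  rw [← F.sum_coord_smul τ x, Finset.sum_apply]
  exact Finset.sum_nonneg fun k _ => mul_nonneg (hx k) (F.basis_eq τ k ▸ toR_nonneg _ i)

/-- The half-open cone of the points `x` such that `x + ε η` lies in the cone over `τ` for all
small `ε > 0`. -/
def halfOpenCone (τ : Facet f) (η : σ → ℝ) : Set (σ → ℝ) :=
  {x | ∀ k, 0 < F.coord τ k x ∨ F.coord τ k x = 0 ∧ 0 ≤ F.coord τ k η}

variable {F}

theorem halfOpenCone_subset_cone {τ : Facet f} {η x} (h : x ∈ F.halfOpenCone τ η) :
    x ∈ F.cone τ :=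
  fun k => (h k).elim le_of_lt fun h => h.1.ge

theorem eventually_mem_cone {τ : Facet f} {η x} (h : x ∈ F.halfOpenCone τ η) :
    ∀ᶠ ε in 𝓝[>] (0 : ℝ), x + ε • η ∈ F.cone τ := by
  refine Filter.eventually_all.2 fun k => ?_
  simp only [map_add, map_smul, smul_eq_mul]
  exact eventually_add_mul_nonneg (h k)

theorem exists_mem_halfOpenCone {x η : σ → ℝ}
    (h : ∀ᶠ ε in 𝓝[>] (0 : ℝ), ∀ i, 0 < (x + ε • η) i) : ∃ τ, x ∈ F.halfOpenCone τ η := by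
  obtain ⟨τ, hτ⟩ : ∃ τ, ∃ᶠ ε in 𝓝[>] (0 : ℝ), x + ε • η ∈ F.cone τ := by
    by_contra! never
    obtain ⟨ε, hpos, outside⟩ := (h.and (Filter.eventually_all.2 fun τ =>
      never τ)).exists
    obtain ⟨τ, hτ⟩ := F.exists_coord_nonneg _ hpos
    exact outside τ hτ
  refine ⟨τ, fun k => pos_or_of_frequently_add_mul_nonneg (hτ.mono fun ε hε => ?_)⟩
  simpa using hε k

theorem height_le_of_mem_halfOpenCone {τ τ' : Facet f} {η x} (h : x ∈ F.halfOpenCone τ η)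
    (h' : height τ' x = height τ x) : height τ' η ≤ height τ η := by
  obtain ⟨ε, hmem, hε⟩ := ((eventually_mem_cone h).and self_mem_nhdsWithin).exists
  have hle := F.height_le_height (τ' := τ') hmem
  simp only [map_add, map_smul, smul_eq_mul, h', add_le_add_iff_left] at hle
  exact le_of_mul_le_mul_left hle hε

theorem eq_of_mem_halfOpenCone {τ τ' : Facet f} {η x} (hη : height τ η = height τ' η → τ = τ')
    (h : x ∈ F.halfOpenCone τ η) (h' : x ∈ F.halfOpenCone τ' η) : τ = τ' := by
  have height_eq : height τ x = height τ' x :=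
    (F.height_le_height (halfOpenCone_subset_cone h')).antisymm
      (F.height_le_height (halfOpenCone_subset_cone h))
  exact hη ((height_le_of_mem_halfOpenCone h' height_eq).antisymm
    (height_le_of_mem_halfOpenCone h height_eq.symm))

variable (F)

theorem exists_mem_halfOpenCone_direction {x : σ → ℝ} (hx : ∀ i, 0 ≤ x i) :
    ∃ τ, x ∈ F.halfOpenCone τ F.direction := by
  refine exists_mem_halfOpenCone ?_
  filter_upwards [self_mem_nhdsWithin] with ε hε i
  exact add_pos_of_nonneg_of_pos (hx i) (mul_pos hε (F.direction_pos i))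

theorem exists_mem_halfOpenCone_neg_direction {x : σ → ℝ} (hx : ∀ i, 0 < x i) :
    ∃ τ, x ∈ F.halfOpenCone τ (-F.direction) :=
  exists_mem_halfOpenCone (Filter.eventually_all.2 fun i =>
    eventually_add_mul_pos (hx i) (-F.direction i))

/-- The facet whose half-open cone in the generic direction contains the lattice point `v`. -/
noncomputable def facetOf (v : σ →₀ ℕ) : Facet f :=
  (F.exists_mem_halfOpenCone_direction (toR_nonneg v)).choose

theorem mem_halfOpenCone_facetOf (v : σ →₀ ℕ) :
    toR v ∈ F.halfOpenCone (F.facetOf v) F.direction :=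
  (F.exists_mem_halfOpenCone_direction (toR_nonneg v)).choose_spec

theorem mem_cone_facetOf (v : σ →₀ ℕ) : toR v ∈ F.cone (F.facetOf v) :=
  halfOpenCone_subset_cone (F.mem_halfOpenCone_facetOf v)

variable {F} in
theorem facetOf_eq {v : σ →₀ ℕ} {τ : Facet f} (h : toR v ∈ F.halfOpenCone τ F.direction) :
    F.facetOf v = τ :=
  eq_of_mem_halfOpenCone (fun h => F.height_direction_injective h)
    (F.mem_halfOpenCone_facetOf v) h

theorem nu_eq_height_facetOf (v : σ →₀ ℕ) : nu f (toR v) = height (F.facetOf v) (toR v) :=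
  F.nu_eq_height (F.mem_cone_facetOf v)

theorem height_le_nu (F : NewtonFan f) (τ : Facet f) (v : σ →₀ ℕ) :
    height τ (toR v) ≤ nu f (toR v) := by
  rw [F.nu_eq_height_facetOf]
  exact F.height_le_height (F.mem_cone_facetOf v)

theorem apply_le_mul_sum_vertex {τ : Facet f} {x : σ → ℝ} (hx : x ∈ F.cone τ) (i : σ) :
    x i ≤ height τ x * ∑ k, (F.vertex τ k i : ℝ) := by
  have apply_eq := congrFun (F.sum_coord_smul τ x) i
  simp only [Finset.sum_apply, Pi.smul_apply, smul_eq_mul, F.basis_eq] at apply_eq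
  rw [← apply_eq, Finset.mul_sum]
  exact Finset.sum_le_sum fun k _ =>
    mul_le_mul_of_nonneg_right (F.coord_le_height hx k) (toR_nonneg _ i)

theorem finite_setOf_nu_le (F : NewtonFan f) (α : ℝ) : {v : σ →₀ ℕ | nu f (toR v) ≤ α}.Finite := by
  classical
  let bound (τ : Facet f) : σ →₀ ℕ :=
    Finsupp.equivFunOnFinite.symm fun i => ⌈α * ∑ k, (F.vertex τ k i : ℝ)⌉₊
  refine (Set.finite_iUnion fun τ => Set.finite_Iic (bound τ)).subset fun v hv => ?_
  refine Set.mem_iUnion.2 ⟨F.facetOf v, fun i => ?_⟩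
  rw [Set.mem_ofPred_eq, F.nu_eq_height_facetOf] at hv
  have : (v i : ℝ) ≤ α * ∑ k, (F.vertex (F.facetOf v) k i : ℝ) :=
    (F.apply_le_mul_sum_vertex (F.mem_cone_facetOf v) i).trans
      (mul_le_mul_of_nonneg_right hv (Finset.sum_nonneg fun k _ => Nat.cast_nonneg _))
  exact Nat.cast_le.1 (this.trans (Nat.le_ceil _))

end NewtonFan

/-! ### The faces of the Newton boundary -/

section Faces

theorem convex_setOf_lt_union {E : Type*} [AddCommGroup E] [Module ℝ E] {l : E →ₗ[ℝ] ℝ} {c : ℝ}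
    {C : Set E} (hC : Convex ℝ C) (hl : ∀ x ∈ C, l x = c) : Convex ℝ ({x | l x < c} ∪ C) := by
  have le {z} (hz : z ∈ {x | l x < c} ∪ C) : l z ≤ c :=
    hz.elim (fun h : l z < c => h.le) fun h => (hl z h).le
  refine convex_iff_forall_pos.2 fun x hx y hy p q hp hq hpq => ?_
  by_cases h : x ∈ C ∧ y ∈ C
  · exact Or.inr (hC h.1 h.2 hp.le hq.le hpq)
  left
  have hlt : p * l x + q * l y < p * c + q * c := by
    rcases not_and_or.1 h with h | h
    · exact add_lt_add_of_lt_of_le (mul_lt_mul_of_pos_left (hx.resolve_right h) hp)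
        (mul_le_mul_of_nonneg_left (le hy) hq.le)
    · exact add_lt_add_of_le_of_lt (mul_le_mul_of_nonneg_left (le hx) hp.le)
        (mul_lt_mul_of_pos_left (hy.resolve_right h) hq)
  rwa [← add_mul, hpq, one_mul, ← smul_eq_mul, ← smul_eq_mul, ← map_smul, ← map_smul,
    ← map_add] at hlt

variable {σ : Type*} {f : MvPolynomial σ ℂ}

theorem lt_or_mem_of_mem_newtonPolytope {l : (σ → ℝ) →ₗ[ℝ] ℝ} {C : Set (σ → ℝ)}
    (hC : Convex ℝ C) (hl : ∀ x ∈ C, l x = 1)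
    (h : ∀ m ∈ f.support, l (toR m) < 1 ∨ toR m ∈ C) {x} (hx : x ∈ newtonPolytope f) :
    l x < 1 ∨ x ∈ C := by
  refine convexHull_min ?_ (convex_setOf_lt_union hC hl) hx
  rintro _ (rfl | ⟨m, hm, rfl⟩)
  · exact Or.inl (by simp)
  · exact h m hm

theorem nonneg_of_mem_newtonPolytope {x} (hx : x ∈ newtonPolytope f) (i) : 0 ≤ x i := by
  have := le_of_mem_newtonPolytope (l := -LinearMap.proj i) le_rfl
    (fun m _ => neg_nonpos.2 (toR_nonneg m i)) x hx
  simpa using this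

theorem zero_mem_newtonPolytope : 0 ∈ newtonPolytope f :=
  subset_convexHull ℝ _ (Or.inl rfl)

theorem IsSimplex.exists_forall_eq_of_forall_le {Δ : Set (σ → ℝ)} (hΔ : IsSimplex Δ) :
    ∃ x ∈ Δ, ∀ (g : (σ → ℝ) →ₗ[ℝ] ℝ) (a : ℝ),
      (∀ y ∈ Δ, g y ≤ a) → g x = a → ∀ y ∈ Δ, g y = a := by
  -- At the barycenter a functional attains its maximum only if it does so at every vertex.
  obtain ⟨k, p, -, rfl⟩ := hΔ
  have p_mem (j) : p j ∈ convexHull ℝ (Set.range p) := subset_convexHull ℝ _ ⟨j, rfl⟩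
  have hw : 0 < ((k : ℝ) + 1)⁻¹ := by positivity
  have sum_w : ∑ _ : Fin (k + 1), ((k : ℝ) + 1)⁻¹ = 1 := by
    rw [Finset.sum_const, Finset.card_fin, nsmul_eq_mul, Nat.cast_succ]
    exact mul_inv_cancel₀ (Nat.cast_add_one_ne_zero k)
  refine ⟨∑ j, ((k : ℝ) + 1)⁻¹ • p j,
    (convex_convexHull ℝ _).sum_mem (fun _ _ => hw.le) sum_w fun j _ => p_mem j,
    fun g a hle hx => ?_⟩
  refine fun y hy => convexHull_min ?_ (convex_hyperplane g.isLinear a) hy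
  rintro _ ⟨j, rfl⟩
  simp only [map_sum, map_smul, smul_eq_mul] at hx
  have termwise := (Finset.sum_eq_sum_iff_of_le fun j _ =>
    mul_le_mul_of_nonneg_left (hle _ (p_mem j)) hw.le).1
      (hx.trans (by rw [← Finset.sum_mul, sum_w, one_mul]))
  exact mul_left_cancel₀ hw.ne' (termwise j (Finset.mem_univ j))

end Faces

namespace NewtonFan

variable {σ : Type*} [Fintype σ] {f : MvPolynomial σ ℂ} (F : NewtonFan f)

/-- The facets of the cone over `τ`, labelled by the opposite vertex, that are removed in the
half-open cone of the generic direction. -/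
noncomputable def openIndices (τ : Facet f) : Finset σ := {k | F.coord τ k F.direction < 0}

/-- The face of the simplex `τ` opposite to the vertices in `L`. -/
def face (τ : Facet f) (L : Finset σ) : Set (σ → ℝ) := convexHull ℝ (F.basis τ '' (↑L)ᶜ)

variable {F}

theorem mem_openIndices {τ : Facet f} {k} :
    k ∈ F.openIndices τ ↔ F.coord τ k F.direction < 0 := by
  simp [openIndices]

theorem mem_face {τ : Facet f} {L : Finset σ} {x} : x ∈ F.face τ L ↔
    x ∈ F.cone τ ∧ height τ x = 1 ∧ ∀ k ∈ L, F.coord τ k x = 0 := by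
  simp [face, F.mem_convexHull_basis]

theorem extremePoints_face (τ : Facet f) (L : Finset σ) :
    (F.face τ L).extremePoints ℝ = F.basis τ '' (↑L)ᶜ :=
  extremePoints_convexHull_basis_image _ _

theorem face_subset_newtonPolytope (τ : Facet f) (L : Finset σ) :
    F.face τ L ⊆ newtonPolytope f :=
  F.convexHull_basis_subset τ _

theorem basis_mem_newtonPolytope (F : NewtonFan f) (τ : Facet f) (k) :
    F.basis τ k ∈ newtonPolytope f :=
  F.convexHull_basis_subset τ Set.univ (subset_convexHull ℝ _ ⟨k, trivial, rfl⟩)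

theorem basis_mem_face_iff {τ : Facet f} {L : Finset σ} {k} :
    F.basis τ k ∈ F.face τ L ↔ k ∉ L := by
  classical
  refine ⟨fun h hk => ?_, fun hk => subset_convexHull ℝ _ ⟨k, hk, rfl⟩⟩
  simpa [coord_basis] using (mem_face.1 h).2.2 k hk

theorem mem_face_empty (F : NewtonFan f) {τ : Facet f} {x} (hx : x ∈ newtonPolytope f)
    (h : height τ x = 1) : x ∈ F.face τ ∅ := by
  refine (lt_or_mem_of_mem_newtonPolytope (convex_convexHull ℝ _)
    (fun x hx => (mem_face.1 hx).2.1) (fun m hm => ?_) hx).resolve_left h.not_lt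
  refine (τ.2.1 m hm).lt_or_eq.imp id fun tight => mem_face.2 ⟨?_, tight, by simp⟩
  exact F.coord_nonneg_of_height_eq_one τ m hm tight

theorem exists_face_eq_setOf (F : NewtonFan f) (τ : Facet f) (L : Finset σ) :
    ∃ l : (σ → ℝ) →ₗ[ℝ] ℝ, (∀ x ∈ newtonPolytope f, l x ≤ 1) ∧
      F.face τ L = {x ∈ newtonPolytope f | l x = 1} := by
  -- Tilt the height function slightly against the coordinates in `L`.
  have lt_one : ∀ᶠ δ in 𝓝[>] (0 : ℝ), ∀ m ∈ f.support, height τ (toR m) < 1 →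
      height τ (toR m) - δ * ∑ k ∈ L, F.coord τ k (toR m) < 1 := by
    refine (eventually_all_finset _).2 fun m _ => eventually_imp_distrib_left.2 fun h => ?_
    filter_upwards [eventually_add_mul_pos (sub_pos.2 h) (∑ k ∈ L, F.coord τ k (toR m))] with δ hδ
    linarith
  obtain ⟨δ, hlt, hδ⟩ := (lt_one.and self_mem_nhdsWithin).exists
  let l : (σ → ℝ) →ₗ[ℝ] ℝ := height τ - δ • ∑ k ∈ L, F.coord τ k
  have l_apply (x) : l x = height τ x - δ * ∑ k ∈ L, F.coord τ k x := by
    simp [l, LinearMap.sum_apply]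
  have l_face : ∀ x ∈ F.face τ L, l x = 1 := fun x hx => by
    rw [l_apply, (mem_face.1 hx).2.1, Finset.sum_eq_zero (mem_face.1 hx).2.2, mul_zero, sub_zero]
  have lt_or_mem {x} (hx : x ∈ newtonPolytope f) : l x < 1 ∨ x ∈ F.face τ L := by
    refine lt_or_mem_of_mem_newtonPolytope (convex_convexHull ℝ _) l_face (fun m hm => ?_) hx
    rcases (τ.2.1 m hm).lt_or_eq with h | tight
    · exact Or.inl ((l_apply _).trans_lt (hlt m hm h))
    have nonneg := F.coord_nonneg_of_height_eq_one τ m hm tight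
    rcases (Finset.sum_nonneg fun k (_ : k ∈ L) => nonneg k).lt_or_eq with h | h
    · left
      rw [l_apply, show height τ (toR m) = 1 from tight]
      exact sub_lt_self _ (mul_pos hδ h)
    · exact Or.inr (mem_face.2
        ⟨nonneg, tight, (Finset.sum_eq_zero_iff_of_nonneg fun k _ => nonneg k).1 h.symm⟩)
  refine ⟨l, fun x hx => (lt_or_mem hx).elim le_of_lt fun h => (l_face x h).le,
    Set.ext fun x => ⟨fun hx => ⟨face_subset_newtonPolytope τ L hx, l_face x hx⟩, ?_⟩⟩
  exact fun ⟨hx, h⟩ => (lt_or_mem hx).resolve_left h.not_lt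

theorem nbFace_face (F : NewtonFan f) (τ : Facet f) {L : Finset σ} (hL : L ≠ Finset.univ) :
    NBFace f (F.face τ L) := by
  obtain ⟨l, hl⟩ := F.exists_face_eq_setOf τ L
  obtain ⟨k, hk⟩ := not_forall.1 (mt Finset.eq_univ_iff_forall.2 hL)
  exact ⟨⟨⟨_, basis_mem_face_iff.2 hk⟩, l, 1, hl⟩, by simp [mem_face]⟩

theorem card_sub_faceDim_face (τ : Facet f) {L : Finset σ} (hL : L ≠ Finset.univ) :
    Fintype.card σ - 1 - faceDim (F.face τ L) = L.card := by
  classical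
  have card_lt := (Finset.card_lt_iff_ne_univ L).2 hL
  have finrank_eq := (F.basis τ).linearIndependent.affineIndependent.finrank_vectorSpan_image_finset
    (s := Lᶜ) (n := Fintype.card σ - 1 - L.card) (by rw [Finset.card_compl]; lia)
  rw [Finset.coe_image, Finset.coe_compl] at finrank_eq
  rw [faceDim, face, affineSpan_convexHull, direction_affineSpan, finrank_eq]
  lia

theorem pos_of_mem_halfOpenCone_neg {τ : Facet f} {x} (h : x ∈ F.halfOpenCone τ (-F.direction))
    (i) : 0 < x i := by
  obtain ⟨ε, hmem, hε⟩ := ((eventually_mem_cone h).and self_mem_nhdsWithin).exists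
  have hle := F.nonneg_of_mem_cone hmem i
  have := mul_pos hε (F.direction_pos i)
  simp only [Pi.add_apply, Pi.smul_apply, Pi.neg_apply, smul_eq_mul] at hle
  linarith

theorem openIndices_ne_univ [Nonempty σ] (τ : Facet f) {L : Finset σ} (hL : L ⊆ F.openIndices τ) :
    L ≠ Finset.univ := by
  rintro rfl
  have hmem : -F.direction ∈ F.cone τ := fun k => by
    rw [map_neg]
    exact neg_nonneg.2 (mem_openIndices.1 (hL (Finset.mem_univ k))).le
  obtain ⟨i⟩ := ‹Nonempty σ›
  exact (neg_neg_of_pos (F.direction_pos i)).not_ge (F.nonneg_of_mem_cone hmem i)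

theorem mem_halfOpenCone_neg {τ : Facet f} {L : Finset σ} (hL : L ⊆ F.openIndices τ) {x}
    (hpos : ∀ k ∉ L, 0 < F.coord τ k x) (hzero : ∀ k ∈ L, F.coord τ k x = 0) :
    x ∈ F.halfOpenCone τ (-F.direction) := by
  intro k
  by_cases hk : k ∈ L
  · rw [map_neg]
    exact Or.inr ⟨hzero k hk, neg_nonneg.2 (mem_openIndices.1 (hL hk)).le⟩
  · exact Or.inl (hpos k hk)

theorem coord_finsum_extremePoints_face [DecidableEq σ] (τ : Facet f) (L : Finset σ) (k) :
    F.coord τ k (∑ᶠ x ∈ (F.face τ L).extremePoints ℝ, x) = if k ∈ L then 0 else 1 := by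
  rw [extremePoints_face, finsum_mem_image (F.basis τ).injective.injOn, ← Finset.coe_compl,
    finsum_mem_coe_finset, map_sum]
  simp [coord_basis, ite_not]

theorem finsum_extremePoints_face_mem_halfOpenCone_neg {τ : Facet f} {L : Finset σ}
    (hL : L ⊆ F.openIndices τ) :
    ∑ᶠ x ∈ (F.face τ L).extremePoints ℝ, x ∈ F.halfOpenCone τ (-F.direction) := by
  classical
  refine mem_halfOpenCone_neg hL (fun k hk => ?_) fun k hk => ?_
  · rw [coord_finsum_extremePoints_face, if_neg hk]
    exact one_pos
  · rw [coord_finsum_extremePoints_face, if_pos hk]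

theorem eq_of_face_eq {τ τ' : Facet f} {L L' : Finset σ} (hL : L ⊆ F.openIndices τ)
    (hL' : L' ⊆ F.openIndices τ') (h : F.face τ L = F.face τ' L') : τ = τ' ∧ L = L' := by
  have hmem := h ▸ finsum_extremePoints_face_mem_halfOpenCone_neg hL
  obtain rfl : τ = τ' := by
    refine eq_of_mem_halfOpenCone (fun hη => F.height_direction_injective ?_) hmem
      (finsum_extremePoints_face_mem_halfOpenCone_neg hL')
    simpa only [map_neg, neg_inj] using hη
  refine ⟨rfl, Finset.ext fun k => ?_⟩
  rw [← not_iff_not, ← basis_mem_face_iff, ← basis_mem_face_iff, h]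

theorem mem_cone0_face {τ : Facet f} {L : Finset σ} (hL : L ≠ Finset.univ) {x} :
    x ∈ cone0 (F.face τ L) ↔ x ∈ F.cone τ ∧ ∀ k ∈ L, F.coord τ k x = 0 := by
  constructor
  · rintro ⟨t, ht, y, hy, rfl⟩
    refine ⟨fun k => ?_, fun k hk => ?_⟩
    · rw [map_smul]
      exact mul_nonneg ht ((mem_face.1 hy).1 k)
    · rw [map_smul, (mem_face.1 hy).2.2 k hk, smul_zero]
  · rintro ⟨hx, hzero⟩
    rcases (F.height_nonneg hx).lt_or_eq with hpos | h0
    · refine ⟨height τ x, hpos.le, (height τ x)⁻¹ • x, mem_face.2 ?_,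
        (smul_inv_smul₀ hpos.ne' x).symm⟩
      obtain ⟨hcone, hheight, -⟩ :=
        (F.mem_convexHull_basis τ).1 (F.inv_height_smul_mem_convexHull hx hpos)
      exact ⟨hcone, hheight, fun k hk => by rw [map_smul, hzero k hk, smul_zero]⟩
    · obtain ⟨y, hy⟩ := (F.nbFace_face τ hL).1.1
      exact ⟨0, le_rfl, y, hy, by rw [zero_smul, F.eq_zero_of_height_eq_zero hx h0.symm]⟩

theorem not_face_subset_coordHyperplanes [Nonempty σ] {τ : Facet f} {L : Finset σ}
    (hL : L ⊆ F.openIndices τ) : ¬ F.face τ L ⊆ coordHyperplanes σ := by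
  classical
  intro hsub
  have hmem := finsum_extremePoints_face_mem_halfOpenCone_neg hL
  obtain ⟨t, -, y, hy, heq⟩ := (mem_cone0_face (openIndices_ne_univ τ hL)).2
    ⟨halfOpenCone_subset_cone hmem, fun k hk => by
      rw [coord_finsum_extremePoints_face, if_pos hk]⟩
  obtain ⟨i, hi⟩ := Set.mem_iUnion.1 (hsub hy)
  have hpos := pos_of_mem_halfOpenCone_neg hmem i
  rw [heq, Pi.smul_apply, show y i = 0 from hi, smul_zero] at hpos
  exact hpos.false

theorem subset_face_of_forall_eq (F : NewtonFan f) {τ : Facet f} {Δ : Set (σ → ℝ)} {x}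
    (hΔ : Δ ⊆ newtonPolytope f)
    (hx : ∀ (g : (σ → ℝ) →ₗ[ℝ] ℝ) (a : ℝ), (∀ y ∈ Δ, g y ≤ a) → g x = a → ∀ y ∈ Δ, g y = a)
    (hheight : height τ x = 1) {L : Finset σ} (hL : ∀ k ∈ L, F.coord τ k x = 0) :
    Δ ⊆ F.face τ L := by
  have height_eq : ∀ y ∈ Δ, height τ y = 1 :=
    hx _ 1 (fun y hy => height_le_one_of_mem_newtonPolytope τ (hΔ hy)) hheight
  have mem_cone (y) (hy : y ∈ Δ) : y ∈ F.cone τ :=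
    (mem_face.1 (F.mem_face_empty (hΔ hy) (height_eq y hy))).1
  refine fun y hy => mem_face.2 ⟨mem_cone y hy, height_eq y hy, fun k hk => ?_⟩
  refine neg_eq_zero.1 (hx (-F.coord τ k) 0 (fun z hz => neg_nonpos.2 (mem_cone z hz k)) ?_ y hy)
  exact neg_eq_zero.2 (hL k hk)

theorem height_eq_one_and_apply_basis_eq (F : NewtonFan f) {τ : Facet f} {x}
    (hx : x ∈ newtonPolytope f) (hcone : x ∈ F.cone τ) {l : (σ → ℝ) →ₗ[ℝ] ℝ} {c : ℝ}
    (hc : 0 < c) (hl : ∀ y ∈ newtonPolytope f, l y ≤ c) (hlx : l x = c) :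
    height τ x = 1 ∧ ∀ k, F.coord τ k x ≠ 0 → l (F.basis τ k) = c := by
  have termwise : ∀ k ∈ Finset.univ,
      F.coord τ k x * l (F.basis τ k) ≤ F.coord τ k x * c :=
    fun k _ => mul_le_mul_of_nonneg_left (hl _ (F.basis_mem_newtonPolytope τ k)) (hcone k)
  have sum_left : ∑ k, F.coord τ k x * l (F.basis τ k) = c := by
    rw [← hlx]
    conv_rhs => rw [← F.sum_coord_smul τ x]
    simp
  have sum_right : ∑ k, F.coord τ k x * c = height τ x * c := by
    rw [F.height_eq_sum_coord, Finset.sum_mul]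
  have height_eq : height τ x = 1 := by
    refine (height_le_one_of_mem_newtonPolytope τ hx).antisymm ?_
    have := Finset.sum_le_sum termwise
    rw [sum_left, sum_right] at this
    exact (le_mul_iff_one_le_left hc).1 this
  refine ⟨height_eq, fun k hk => mul_left_cancel₀ hk ?_⟩
  refine (Finset.sum_eq_sum_iff_of_le termwise).1 ?_ k (Finset.mem_univ k)
  rw [sum_left, sum_right, height_eq, one_mul]

theorem exists_eq_face (F : NewtonFan f) {Δ : Set (σ → ℝ)} (hsimp : IsSimplex Δ)
    (hΔ : NBFace f Δ) (hcoord : ¬ Δ ⊆ coordHyperplanes σ) :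
    ∃ τ, ∃ L ⊆ F.openIndices τ, Δ = F.face τ L := by
  -- The half-open cone in the direction opposite to `F.direction` that contains an interior point
  -- of `Δ` determines `τ`, and the vanishing coordinates of the point determine `L`.
  obtain ⟨x, hxΔ, hx⟩ := hsimp.exists_forall_eq_of_forall_le
  obtain ⟨⟨-, l, c, hl, rfl⟩, h0⟩ := hΔ
  have hc : 0 < c := by
    have := hl 0 zero_mem_newtonPolytope
    rw [map_zero] at this
    exact this.lt_of_ne fun h => h0 ⟨zero_mem_newtonPolytope, (map_zero l).trans h⟩
  have x_pos (i) : 0 < x i := by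
    refine (nonneg_of_mem_newtonPolytope hxΔ.1 i).lt_of_ne' fun hi => hcoord fun y hy => ?_
    exact Set.mem_iUnion.2 ⟨i, neg_eq_zero.1 (hx (-LinearMap.proj i) 0
      (fun z hz => neg_nonpos.2 (nonneg_of_mem_newtonPolytope hz.1 i)) (neg_eq_zero.2 hi) y hy)⟩
  obtain ⟨τ, hτ⟩ := F.exists_mem_halfOpenCone_neg_direction x_pos
  let L : Finset σ := {k | F.coord τ k x = 0}
  have mem_L {k} : k ∈ L ↔ F.coord τ k x = 0 := by simp [L]
  obtain ⟨height_eq, l_basis⟩ := F.height_eq_one_and_apply_basis_eq hxΔ.1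
    (halfOpenCone_subset_cone hτ) hc hl hxΔ.2
  refine ⟨τ, L, fun k hk => ?_, subset_antisymm
    (F.subset_face_of_forall_eq (fun y hy => hy.1) hx height_eq fun k => mem_L.1) fun y hy => ?_⟩
  · have := ((hτ k).resolve_left (mem_L.1 hk).not_gt).2
    rw [map_neg, neg_nonneg] at this
    exact mem_openIndices.2 (this.lt_of_ne (F.coord_direction_ne_zero τ k))
  · refine ⟨face_subset_newtonPolytope τ L hy,
      convexHull_min ?_ (convex_hyperplane l.isLinear c) hy⟩
    rintro _ ⟨j, hj, rfl⟩
    exact l_basis j (mt mem_L.2 hj)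

/-- The indices in `openIndices` of the vanishing coordinates of `x`. -/
noncomputable def zeroIndices (F : NewtonFan f) (τ : Facet f) (x : σ → ℝ) : Finset σ :=
  {k ∈ F.openIndices τ | F.coord τ k x = 0}

theorem mem_zeroIndices {τ : Facet f} {x : σ → ℝ} {k} :
    k ∈ F.zeroIndices τ x ↔ k ∈ F.openIndices τ ∧ F.coord τ k x = 0 :=
  Finset.mem_filter

theorem nbFace_iff_exists_face [Nonempty σ] (F : NewtonFan f)
    (hsimp : ∀ Δ, NBFace f Δ → IsSimplex Δ) {x : σ → ℝ} {Δ : Set (σ → ℝ)} :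
    (NBFace f Δ ∧ ¬ Δ ⊆ coordHyperplanes σ ∧ x ∈ cone0 Δ) ↔
      ∃ τ, ∃ L ⊆ F.zeroIndices τ x, x ∈ F.cone τ ∧ F.face τ L = Δ := by
  constructor
  · rintro ⟨hΔ, hcoord, hx⟩
    obtain ⟨τ, L, hL, rfl⟩ := F.exists_eq_face (hsimp Δ hΔ) hΔ hcoord
    obtain ⟨hcone, hzero⟩ := (mem_cone0_face (openIndices_ne_univ τ hL)).1 hx
    exact ⟨τ, L, fun k hk => mem_zeroIndices.2 ⟨hL hk, hzero k hk⟩, hcone, rfl⟩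
  · rintro ⟨τ, L, hL, hcone, rfl⟩
    have hopen : L ⊆ F.openIndices τ := fun k hk => (mem_zeroIndices.1 (hL hk)).1
    have hne := openIndices_ne_univ τ hopen
    exact ⟨F.nbFace_face τ hne, not_face_subset_coordHyperplanes hopen,
      (mem_cone0_face hne).2 ⟨hcone, fun k hk => (mem_zeroIndices.1 (hL hk)).2⟩⟩

open Classical in
theorem Evstar_eq_sum [DecidableEq σ] [Nonempty σ] (F : NewtonFan f)
    (hsimp : ∀ Δ, NBFace f Δ → IsSimplex Δ) (v : σ → ℕ) :
    Evstar f v = ∑ τ with natToR v ∈ F.cone τ,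
      (Polynomial.X : Polynomial ℤ) ^ (F.zeroIndices τ (natToR v)).card := by
  let S : Finset (Σ _ : Facet f, Finset σ) :=
    ({τ | natToR v ∈ F.cone τ} : Finset (Facet f)).sigma
      fun τ => (F.zeroIndices τ (natToR v)).powerset
  have mem_S (p) : p ∈ S ↔ natToR v ∈ F.cone p.1 ∧ p.2 ⊆ F.zeroIndices p.1 (natToR v) := by
    simp [S]
  have subset_openIndices {p} (hp : p ∈ S) : p.2 ⊆ F.openIndices p.1 := fun k hk =>
    (mem_zeroIndices.1 (((mem_S p).1 hp).2 hk)).1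
  have faces_eq : {Δ | NBFace f Δ ∧ ¬ Δ ⊆ coordHyperplanes σ ∧ natToR v ∈ cone0 Δ} =
      (fun p : Σ _ : Facet f, Finset σ => F.face p.1 p.2) '' S := by
    ext Δ
    simp only [Set.mem_ofPred_eq, F.nbFace_iff_exists_face hsimp, Set.mem_image, Finset.mem_coe,
      mem_S, Sigma.exists]
    tauto
  have inj : Set.InjOn (fun p : Σ _ : Facet f, Finset σ => F.face p.1 p.2) S := by
    rintro ⟨τ, L⟩ h ⟨τ', L'⟩ h' heq
    obtain ⟨rfl, rfl⟩ := eq_of_face_eq (subset_openIndices h) (subset_openIndices h') heq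
    rfl
  change ∑ᶠ Δ ∈ {Δ | NBFace f Δ ∧ ¬ Δ ⊆ coordHyperplanes σ ∧ natToR v ∈ cone0 Δ}, _ = _
  rw [faces_eq, finsum_mem_image inj, finsum_mem_coe_finset, Finset.sum_sigma]
  refine Finset.sum_congr rfl fun τ hτ => ?_
  have expand := Finset.sum_pow_mul_eq_add_pow (Polynomial.X - 1 : Polynomial ℤ) 1
    (F.zeroIndices τ (natToR v))
  simp only [one_pow, mul_one, sub_add_cancel] at expand
  refine Eq.trans (Finset.sum_congr rfl fun L hL => ?_) expand
  rw [card_sub_faceDim_face τ (openIndices_ne_univ τ (subset_openIndices (p := ⟨τ, L⟩)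
    (Finset.mem_sigma.2 ⟨hτ, hL⟩)))]

theorem exists_basis_eq (F : NewtonFan f) {τ τ' : Facet f} {x} (hx : x ∈ F.cone τ)
    (hx' : x ∈ F.cone τ') {k} (hk : F.coord τ k x ≠ 0) : ∃ j, F.basis τ' j = F.basis τ k := by
  have height_eq : height τ' (F.basis τ k) = 1 := by
    have termwise : ∀ j ∈ Finset.univ,
        F.coord τ j x * height τ' (F.basis τ j) ≤ F.coord τ j x := fun j _ =>
      mul_le_of_le_one_right (hx j)
        (height_le_one_of_mem_newtonPolytope τ' (F.basis_mem_newtonPolytope τ j))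
    have sum_eq : ∑ j, F.coord τ j x * height τ' (F.basis τ j) = ∑ j, F.coord τ j x := by
      rw [← F.height_eq_sum_coord,
        (F.height_le_height hx').antisymm (F.height_le_height hx : height τ' x ≤ _)]
      conv_rhs => rw [← F.sum_coord_smul τ x]
      simp
    refine mul_left_cancel₀ hk ?_
    rw [(Finset.sum_eq_sum_iff_of_le termwise).1 sum_eq k (Finset.mem_univ k), mul_one]
  obtain ⟨l, hl, face_eq⟩ := F.exists_face_eq_setOf τ ∅
  have extreme : F.basis τ k ∈ (newtonPolytope f).extremePoints ℝ := by
    refine (face_eq ▸ isExtreme_setOf_eq hl :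
      IsExtreme ℝ _ (F.face τ ∅)).extremePoints_subset_extremePoints ?_
    exact extremePoints_face (F := F) τ ∅ ▸ ⟨k, by simp, rfl⟩
  have extreme_face := inter_extremePoints_subset_extremePoints_of_subset
    (face_subset_newtonPolytope τ' ∅)
    ⟨F.mem_face_empty (F.basis_mem_newtonPolytope τ k) height_eq, extreme⟩
  rw [extremePoints_face] at extreme_face
  exact extreme_face.imp fun j hj => hj.2

theorem coord_lt_one_of_mem_cone (F : NewtonFan f) {τ τ' : Facet f} {x} (hx : x ∈ F.cone τ)
    (hx' : x ∈ F.cone τ') (hlt : ∀ k, F.coord τ' k x < 1) (k) : F.coord τ k x < 1 := by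
  classical
  rcases eq_or_ne (F.coord τ k x) 0 with hk | hk
  · exact hk ▸ one_pos
  obtain ⟨j, hj⟩ := F.exists_basis_eq hx hx' hk
  have coord_nonneg (i) : 0 ≤ F.coord τ' j (F.coord τ i x • F.basis τ i) := by
    rcases eq_or_ne (F.coord τ i x) 0 with hi | hi
    · rw [hi, zero_smul, map_zero]
    · obtain ⟨j', hj'⟩ := F.exists_basis_eq hx hx' hi
      rw [← hj', map_smul, coord_basis]
      exact mul_nonneg (hx i) (by split_ifs <;> norm_num)
  calc F.coord τ k x = F.coord τ' j (F.coord τ k x • F.basis τ k) := by simp [← hj, coord_basis]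
    _ ≤ ∑ i, F.coord τ' j (F.coord τ i x • F.basis τ i) :=
      Finset.single_le_sum (fun i _ => coord_nonneg i) (Finset.mem_univ k)
    _ = F.coord τ' j x := by rw [← map_sum, F.sum_coord_smul]
    _ < 1 := hlt j

theorem coord_mem_Ico_of_mem_box {τ : Facet f} {L : Finset σ} {x} (hx : x ∈ Box (F.face τ L))
    (k) : F.coord τ k x ∈ Set.Ico 0 1 := by
  classical
  obtain ⟨s, hs, q, hq, rfl⟩ := hx
  rw [extremePoints_face] at hs
  have coord_eq : F.coord τ k (∑ b ∈ s, q b • b) =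
      if F.basis τ k ∈ s then q (F.basis τ k) else 0 := by
    rw [map_sum, ← Finset.sum_ite_eq' s (F.basis τ k) q]
    refine Finset.sum_congr rfl fun b hb => ?_
    obtain ⟨j, -, rfl⟩ := hs hb
    simp [coord_basis, (F.basis τ).injective.eq_iff]
  rw [coord_eq]
  split_ifs with h
  · exact hq _ h
  · exact ⟨le_rfl, one_pos⟩

theorem mem_box_face_empty {τ : Facet f} {x} (hx : ∀ k, F.coord τ k x ∈ Set.Ico 0 1) :
    x ∈ Box (F.face τ ∅) := by
  classical
  refine ⟨Finset.univ.map ⟨F.basis τ, (F.basis τ).injective⟩, ?_,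
    Function.extend (F.basis τ) (fun k => F.coord τ k x) 0, ?_, ?_⟩
  · simp [extremePoints_face]
  · simp [(F.basis τ).injective.extend_apply, -Set.mem_Ico, fun k => Set.mem_Ico.1 (hx k)]
  · simp [(F.basis τ).injective.extend_apply, F.sum_coord_smul]

theorem mem_BoxP_iff [Nonempty σ] (F : NewtonFan f) (hsimp : ∀ Δ, NBFace f Δ → IsSimplex Δ)
    {τ : Facet f} {x} (hx : x ∈ F.cone τ) : x ∈ BoxP f ↔ ∀ k, F.coord τ k x < 1 := by
  refine ⟨fun h => ?_, fun h => ?_⟩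
  · obtain ⟨Δ, ⟨hΔ, hcoord⟩, hbox⟩ := Set.mem_iUnion₂.1 h
    obtain ⟨τ', L, -, rfl⟩ := F.exists_eq_face (hsimp Δ hΔ) hΔ hcoord
    have coord_mem := coord_mem_Ico_of_mem_box hbox
    exact F.coord_lt_one_of_mem_cone hx (fun k => (coord_mem k).1) fun k => (coord_mem k).2
  · have hempty := Finset.empty_subset (F.openIndices τ)
    exact Set.mem_biUnion ⟨F.nbFace_face τ (openIndices_ne_univ τ hempty),
      not_face_subset_coordHyperplanes hempty⟩ (mem_box_face_empty fun k => ⟨hx k, h k⟩)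

end NewtonFan

/-! ### Half-open boxes and the relative Hodge–Deligne polynomials -/

section ToR

variable {σ : Type*}

theorem toR_add (u v : σ →₀ ℕ) : toR (u + v) = toR u + toR v := funext fun _ => Nat.cast_add _ _

theorem toR_injective : Function.Injective (toR : (σ →₀ ℕ) → σ → ℝ) :=
  fun _ _ h => Finsupp.ext fun i => Nat.cast_injective (congrFun h i)

theorem toR_nsmul (k : ℕ) (v : σ →₀ ℕ) : toR (k • v) = (k : ℝ) • toR v :=
  funext fun i => by simp [toR]

theorem toR_sum {ι : Type*} (s : Finset ι) (v : ι → σ →₀ ℕ) :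
    toR (∑ i ∈ s, v i) = ∑ i ∈ s, toR (v i) :=
  funext fun i => by simp [toR, Finsupp.finsetSum_apply]

end ToR

section Counting

theorem finsum_coeff_sum_X_pow {ι : Type*} (s : Finset ι) (e : ι → ℕ) (α β : ℝ) :
    ∑ᶠ j : ℕ, (if α = β + j then
      (∑ i ∈ s, (Polynomial.X : Polynomial ℤ) ^ e i).coeff j else 0) =
    ∑ i ∈ s, if α = β + e i then 1 else 0 := by
  by_cases h : ∃ j : ℕ, α = β + j
  · obtain ⟨j, rfl⟩ := h
    simp only [add_right_inj, Nat.cast_inj]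
    rw [finsum_eq_single _ j fun j' hj' => if_neg hj'.symm, if_pos rfl]
    simp [Polynomial.coeff_X_pow]
  · push Not at h
    simp [h]

open Classical in
theorem finsum_sum_ite_mem {α ι : Type*} [Fintype ι] {W : Set (α × ι)} (hW : W.Finite) :
    ∑ᶠ a, ∑ i, (if (a, i) ∈ W then 1 else 0) = (W.ncard : ℤ) := by
  have support_subset : (Function.support fun p : α × ι => if p ∈ W then (1 : ℤ) else 0) ⊆
      hW.toFinset := fun p hp => hW.mem_toFinset.2 (of_not_not fun h => hp (if_neg h))
  have curry := finsum_curry _ (hW.toFinset.finite_toSet.subset support_subset)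
  rw [finsum_eq_sum_of_support_subset _ support_subset] at curry
  simp only [finsum_eq_sum_of_fintype] at curry
  rw [← curry, Finset.sum_congr rfl fun p hp => if_pos (hW.mem_toFinset.1 hp), Finset.sum_const,
    Set.ncard_eq_toFinset_card W hW, nsmul_one]

end Counting

namespace NewtonFan

variable {σ : Type*} [Fintype σ] {f : MvPolynomial σ ℂ} (F : NewtonFan f)

/-- The lattice point with coordinates `a` in the basis of vertices of the facet `τ`. -/
noncomputable def vertexComb (τ : Facet f) (a : σ → ℕ) : σ →₀ ℕ := ∑ k, a k • F.vertex τ k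

theorem coord_vertexComb (τ : Facet f) (a : σ → ℕ) (k : σ) :
    F.coord τ k (toR (F.vertexComb τ a)) = a k := by
  classical
  simp only [vertexComb, toR_sum, toR_nsmul, ← F.basis_eq, map_sum, map_smul, coord_basis]
  simp

theorem height_vertexComb (τ : Facet f) (a : σ → ℕ) :
    height τ (toR (F.vertexComb τ a)) = ∑ k, (a k : ℝ) := by
  simp only [F.height_eq_sum_coord, coord_vertexComb]

variable {F} in
theorem exists_add_eq_of_coord_le {τ : Facet f} {u v : σ →₀ ℕ}
    (h : ∀ k, F.coord τ k (toR u) ≤ F.coord τ k (toR v)) : ∃ w, w + u = v := by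
  have mem_cone : toR v - toR u ∈ F.cone τ := fun k => by
    rw [map_sub, sub_nonneg]
    exact h k
  have le : u ≤ v := fun i => Nat.cast_le.1 (sub_nonneg.1 (F.nonneg_of_mem_cone mem_cone i))
  exact ⟨v - u, tsub_add_cancel_of_le le⟩

/-- The fundamental box of the cone over the facet `τ`, closed at the opposite side exactly in those
coordinates in which the half-open cone of `F.direction` is open. -/
def halfOpenBox (τ : Facet f) : Set (σ → ℝ) :=
  {x | ∀ k, (k ∈ F.openIndices τ → F.coord τ k x ∈ Set.Ioc 0 1) ∧
    (k ∉ F.openIndices τ → F.coord τ k x ∈ Set.Ico 0 1)}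

variable {F}

theorem mem_halfOpenCone_direction_iff {τ : Facet f} {x : σ → ℝ} :
    x ∈ F.halfOpenCone τ F.direction ↔
      x ∈ F.cone τ ∧ ∀ k ∈ F.openIndices τ, 0 < F.coord τ k x := by
  rw [cone, Set.mem_ofPred_eq, ← forall_and]
  refine forall_congr' fun k => ?_
  rw [mem_openIndices]
  constructor
  · rintro (pos | ⟨eq, nonneg⟩)
    · exact ⟨pos.le, fun _ => pos⟩
    · exact ⟨eq.ge, fun neg => absurd nonneg neg.not_ge⟩
  · rintro ⟨nonneg, pos⟩
    rcases nonneg.lt_or_eq with pos' | eq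
    · exact Or.inl pos'
    · exact Or.inr ⟨eq.symm, not_lt.1 fun neg => (pos neg).ne eq⟩

theorem halfOpenBox_subset_halfOpenCone (τ : Facet f) :
    F.halfOpenBox τ ⊆ F.halfOpenCone τ F.direction := fun x hx =>
  mem_halfOpenCone_direction_iff.2
    ⟨fun k => by
      by_cases hk : k ∈ F.openIndices τ
      exacts [((hx k).1 hk).1.le, ((hx k).2 hk).1],
    fun k hk => ((hx k).1 hk).1⟩

variable (F)

open Classical in
/-- Adding the vertices in `F.zeroIndices τ` moves the lattice points of the usual fundamental box
of `τ` to those of the half-open box. -/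
noncomputable def toHalfOpenBox (p : (σ →₀ ℕ) × Facet f) : σ →₀ ℕ :=
  p.1 + F.vertexComb p.2 fun k => if k ∈ F.zeroIndices p.2 (toR p.1) then 1 else 0

/-- The pairs `(v, τ)` of a lattice point in the fundamental box of the cone over the facet `τ`
which contribute a monomial of degree `α` to the right hand side of the spectrum formula. -/
def boxPairs (α : ℝ) : Set ((σ →₀ ℕ) × Facet f) :=
  {p | toR p.1 ∈ F.cone p.2 ∧ (∀ k, F.coord p.2 k (toR p.1) < 1) ∧
    α = nu f (toR p.1) + (F.zeroIndices p.2 (toR p.1)).card}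

/-- The lattice points of Newton degree `α` in the half-open boxes. -/
def halfOpenBoxPoints (α : ℝ) : Set (σ →₀ ℕ) :=
  {u | nu f (toR u) = α ∧ toR u ∈ F.halfOpenBox (F.facetOf u)}

theorem finite_halfOpenBoxPoints (α : ℝ) : (F.halfOpenBoxPoints α).Finite :=
  (F.finite_setOf_nu_le α).subset fun _ hu => hu.1.le

open Classical in
theorem coord_toHalfOpenBox (p : (σ →₀ ℕ) × Facet f) (k : σ) :
    F.coord p.2 k (toR (F.toHalfOpenBox p)) =
      F.coord p.2 k (toR p.1) + if k ∈ F.zeroIndices p.2 (toR p.1) then 1 else 0 := by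
  rw [toHalfOpenBox, toR_add, map_add, coord_vertexComb, Nat.cast_ite, Nat.cast_one, Nat.cast_zero]

theorem height_toHalfOpenBox (p : (σ →₀ ℕ) × Facet f) :
    height p.2 (toR (F.toHalfOpenBox p)) =
      height p.2 (toR p.1) + (F.zeroIndices p.2 (toR p.1)).card := by
  classical
  rw [toHalfOpenBox, toR_add, map_add, height_vertexComb]
  simp

variable {F}

theorem toHalfOpenBox_mem {v : σ →₀ ℕ} {τ : Facet f} (hv : toR v ∈ F.cone τ)
    (lt : ∀ k, F.coord τ k (toR v) < 1) : toR (F.toHalfOpenBox (v, τ)) ∈ F.halfOpenBox τ := by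
  intro k
  classical
  have coord := F.coord_toHalfOpenBox (v, τ) k
  simp only [mem_zeroIndices] at coord
  rw [coord]
  refine ⟨fun hk => ?_, fun hk => ?_⟩
  · by_cases eq : F.coord τ k (toR v) = 0
    · simp [hk, eq]
    · simpa [hk, eq] using ⟨(hv k).lt_of_ne' eq, (lt k).le⟩
  · simpa [hk] using ⟨hv k, lt k⟩

theorem facetOf_toHalfOpenBox {v : σ →₀ ℕ} {τ : Facet f} (hv : toR v ∈ F.cone τ)
    (lt : ∀ k, F.coord τ k (toR v) < 1) : F.facetOf (F.toHalfOpenBox (v, τ)) = τ :=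
  facetOf_eq (halfOpenBox_subset_halfOpenCone τ (toHalfOpenBox_mem hv lt))

theorem exists_toHalfOpenBox_eq {u : σ →₀ ℕ} {τ : Facet f} (hu : toR u ∈ F.halfOpenBox τ) :
    ∃ v, toR v ∈ F.cone τ ∧ (∀ k, F.coord τ k (toR v) < 1) ∧ F.toHalfOpenBox (v, τ) = u := by
  classical
  have nonneg := (mem_halfOpenCone_direction_iff.1 (halfOpenBox_subset_halfOpenCone τ hu)).1
  let a : σ → ℕ := fun k => if k ∈ F.openIndices τ ∧ F.coord τ k (toR u) = 1 then 1 else 0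
  obtain ⟨v, add_eq⟩ : ∃ v, v + F.vertexComb τ a = u := exists_add_eq_of_coord_le fun k => by
    rw [coord_vertexComb]
    dsimp only [a]
    split_ifs with h
    · rw [h.2, Nat.cast_one]
    · exact (Nat.cast_zero (R := ℝ)).le.trans (nonneg k)
  have coord_add (k) : F.coord τ k (toR v) + a k = F.coord τ k (toR u) := by
    rw [← add_eq, toR_add, map_add, coord_vertexComb]
  have coord_mem (k) : F.coord τ k (toR v) ∈ Set.Ico 0 1 ∧
      (k ∈ F.zeroIndices τ (toR v) ↔ k ∈ F.openIndices τ ∧ F.coord τ k (toR u) = 1) := by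
    rw [mem_zeroIndices]
    have coord_add := coord_add k
    by_cases open_eq : k ∈ F.openIndices τ ∧ F.coord τ k (toR u) = 1
    · have : F.coord τ k (toR v) = 0 := by simpa [a, open_eq] using coord_add
      simp [this, open_eq]
    · have eq : F.coord τ k (toR v) = F.coord τ k (toR u) := by simpa [a, open_eq] using coord_add
      rw [eq]
      by_cases hk : k ∈ F.openIndices τ
      · have := (hu k).1 hk
        exact ⟨⟨this.1.le, this.2.lt_of_ne fun h => open_eq ⟨hk, h⟩⟩,
          iff_of_false (fun h => this.1.ne' h.2) open_eq⟩
      · simpa [hk] using (hu k).2 hk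
  refine ⟨v, fun k => (coord_mem k).1.1, fun k => (coord_mem k).1.2, ?_⟩
  rw [← add_eq, toHalfOpenBox]
  simp only [coord_mem, a]

variable (F)

theorem bijOn_toHalfOpenBox (α : ℝ) :
    Set.BijOn F.toHalfOpenBox (F.boxPairs α) (F.halfOpenBoxPoints α) := by
  refine ⟨?_, ?_, ?_⟩
  · rintro ⟨v, τ⟩ ⟨hv, lt, rfl⟩
    refine ⟨?_, ?_⟩
    · rw [F.nu_eq_height_facetOf, facetOf_toHalfOpenBox hv lt, F.height_toHalfOpenBox (v, τ),
        F.nu_eq_height hv]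
    · rw [facetOf_toHalfOpenBox hv lt]
      exact toHalfOpenBox_mem hv lt
  · rintro ⟨v, τ⟩ ⟨hv, lt, -⟩ ⟨v', τ'⟩ ⟨hv', lt', -⟩ eq
    dsimp only at hv lt hv' lt'
    obtain rfl : τ = τ' := by
      rw [← facetOf_toHalfOpenBox hv lt, eq, facetOf_toHalfOpenBox hv' lt']
    refine Prod.ext (toR_injective (F.ext_coord τ fun k => ?_)) rfl
    have coord := F.coord_toHalfOpenBox (v, τ) k
    rw [eq, F.coord_toHalfOpenBox (v', τ) k] at coord
    have := hv k
    have := hv' k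
    have := lt k
    have := lt' k
    split_ifs at coord <;> linarith
  · rintro u ⟨rfl, hu⟩
    obtain ⟨v, hv, lt, eq⟩ := exists_toHalfOpenBox_eq hu
    refine ⟨(v, F.facetOf u), ⟨hv, lt, ?_⟩, eq⟩
    rw [F.nu_eq_height_facetOf u, F.nu_eq_height hv, ← F.height_toHalfOpenBox (v, F.facetOf u), eq]

open Classical in
theorem finsum_coeff_Evstar_eq_sum [Nonempty σ]
    (hsimp : ∀ Δ : Set (σ → ℝ), NBFace f Δ → IsSimplex Δ) (α : ℝ) (v : σ → ℕ) :
    (∑ᶠ _ : natToR v ∈ BoxP f, ∑ᶠ j : ℕ,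
        if α = nu f (natToR v) + j then (Evstar f v).coeff j else 0) =
      ∑ τ, if (Finsupp.equivFunOnFinite.symm v, τ) ∈ F.boxPairs α then 1 else 0 := by
  have mem_iff (τ) : (Finsupp.equivFunOnFinite.symm v, τ) ∈ F.boxPairs α ↔
      natToR v ∈ F.cone τ ∧ (∀ k, F.coord τ k (natToR v) < 1) ∧
        α = nu f (natToR v) + (F.zeroIndices τ (natToR v)).card := Iff.rfl
  simp only [mem_iff]
  rw [finsum_eq_if, F.Evstar_eq_sum hsimp, finsum_coeff_sum_X_pow, Finset.sum_filter]
  split_ifs with mem_box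
  · refine Finset.sum_congr rfl fun τ _ => ?_
    rw [← ite_and]
    refine if_congr (and_congr_right fun mem_cone => ?_) rfl rfl
    simp [(F.mem_BoxP_iff hsimp mem_cone).1 mem_box]
  · exact (Finset.sum_eq_zero fun τ _ => if_neg fun h =>
      mem_box ((F.mem_BoxP_iff hsimp h.1).2 h.2.1)).symm

theorem finsum_coeff_Evstar [DecidableEq σ] [Nonempty σ]
    (hsimp : ∀ Δ : Set (σ → ℝ), NBFace f Δ → IsSimplex Δ) (α : ℝ) :
    (∑ᶠ (v : σ → ℕ) (_ : natToR v ∈ BoxP f), ∑ᶠ j : ℕ,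
        if α = nu f (natToR v) + j then (Evstar f v).coeff j else 0) =
      ((F.halfOpenBoxPoints α).ncard : ℤ) := by
  classical
  have bijOn := F.bijOn_toHalfOpenBox α
  have finite : (F.boxPairs α).Finite := .of_finite_image
    (bijOn.image_eq ▸ F.finite_halfOpenBoxPoints α) bijOn.injOn
  rw [← bijOn.image_eq, bijOn.injOn.ncard_image, ← finsum_sum_ite_mem finite,
    ← finsum_comp_equiv (Finsupp.equivFunOnFinite.symm : (σ → ℕ) ≃ (σ →₀ ℕ))]
  refine finsum_congr fun v => ?_
  convert F.finsum_coeff_Evstar_eq_sum hsimp α v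

end NewtonFan

/-! ### Nondegeneracy on a cone -/

section LogarithmicDerivative

variable {σ : Type*}

theorem X_mul_pderiv_eq_sum {R : Type*} [CommSemiring R] (f : MvPolynomial σ R) (i : σ) :
    X i * pderiv i f = ∑ m ∈ f.support, monomial m (m i * coeff m f) := by
  conv_lhs => rw [f.as_sum, map_sum, Finset.mul_sum]
  simp only [X_mul_pderiv_monomial, smul_monomial, nsmul_eq_mul]

open Classical in
theorem faceRestrict_X_mul_pderiv (f : MvPolynomial σ ℂ) (i : σ) (Δ : Set (σ → ℝ)) :
    faceRestrict Δ (X i * pderiv i f) =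
      ∑ m ∈ f.support with toR m ∈ Δ, monomial m (m i * coeff m f) := by
  have coeff_eq (m) : coeff m (X i * pderiv i f) = m i * coeff m f := by
    rw [X_mul_pderiv_eq_sum, coeff_sum]
    simp +contextual [coeff_monomial]
  rw [faceRestrict, Finset.sum_filter]
  simp only [coeff_eq]
  refine Finset.sum_subset (fun m hm => ?_) fun m _ hm => ?_
  · rw [mem_support_iff, coeff_eq] at hm
    exact mem_support_iff.2 (right_ne_zero_of_mul hm)
  · rw [notMem_support_iff, coeff_eq] at hm
    simp [hm]

end LogarithmicDerivative

theorem mul_mem_restrictSupport {σ R : Type*} [CommSemiring R] {s t u : Set (σ →₀ ℕ)}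
    (h : ∀ a ∈ s, ∀ b ∈ t, a + b ∈ u) {p q : MvPolynomial σ R}
    (hp : p ∈ restrictSupport R s) (hq : q ∈ restrictSupport R t) : p * q ∈ restrictSupport R u :=
  restrictSupport_mono R (Set.add_subset_iff.2 h)
    (restrictSupport_add (R := R) s t ▸ Submodule.mul_mem_mul hp hq)

open Classical in
/-- The part of `X i * ∂f/∂X i` supported on the facet `τ`. -/
noncomputable def facetPart {σ : Type*} [Fintype σ] {f : MvPolynomial σ ℂ} (τ : Facet f) (i : σ) :
    MvPolynomial σ ℂ :=
  ∑ m ∈ f.support with height τ (toR m) = 1, monomial m (m i * coeff m f)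

namespace NewtonFan

variable {σ : Type*} [Fintype σ] {f : MvPolynomial σ ℂ} (F : NewtonFan f)

theorem height_vertex (τ : Facet f) (k : σ) : height τ (toR (F.vertex τ k)) = 1 := by
  rw [← F.basis_eq, F.height_basis]

theorem coord_vertex [DecidableEq σ] (τ : Facet f) (k j : σ) :
    F.coord τ k (toR (F.vertex τ j)) = if j = k then 1 else 0 := by
  rw [← F.basis_eq, F.coord_basis]

theorem exists_int_eq_mul_coord (τ : Facet f) :
    ∃ D : ℤ, D ≠ 0 ∧ ∀ m k, ∃ z : ℤ, D * F.coord τ k (toR m) = z := by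
  classical
  let A : Matrix σ σ ℤ := .of fun i k => F.vertex τ k i
  have coord_mulVec (z : σ → ℤ) (k) : F.coord τ k (fun i => ((A.mulVec z i : ℤ) : ℝ)) = z k := by
    have : (fun i => ((A.mulVec z i : ℤ) : ℝ)) = ∑ j, (z j : ℝ) • F.basis τ j := by
      ext i
      simp [Matrix.mulVec, dotProduct, A, F.basis_eq, toR, mul_comm]
    simp [this, coord_basis]
  refine ⟨A.det, fun det_eq => ?_, fun m k => ⟨A.cramer (fun i => (m i : ℤ)) k, ?_⟩⟩
  · obtain ⟨z, ne, eq⟩ := Matrix.exists_mulVec_eq_zero_iff.2 det_eq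
    refine ne (funext fun k => ?_)
    have := coord_mulVec z k
    simp only [eq, Pi.zero_apply, Int.cast_zero] at this
    exact_mod_cast this.symm.trans (map_zero (F.coord τ k))
  · rw [← coord_mulVec, Matrix.mulVec_cramer, ← smul_eq_mul, ← map_smul]
    congr 1
    ext i
    simp [toR]

theorem exists_natCast_eq_mul_coord (τ : Facet f) :
    ∃ D : ℕ, 0 < D ∧ ∀ m, toR m ∈ F.cone τ → ∀ k, ∃ a : ℕ, (a : ℝ) = D * F.coord τ k (toR m) := by
  obtain ⟨D, ne, hD⟩ := F.exists_int_eq_mul_coord τ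
  refine ⟨D.natAbs, Int.natAbs_pos.2 ne, fun m hm k => ?_⟩
  obtain ⟨z, hz⟩ := hD m k
  refine ⟨z.natAbs, ?_⟩
  rw [Nat.cast_natAbs, Nat.cast_natAbs, Int.cast_abs, Int.cast_abs, ← hz, abs_mul,
    abs_of_nonneg (hm k)]

/-- A positive multiple of the coordinates in the cone over `τ` which makes them natural numbers
on lattice points. -/
noncomputable def denom (τ : Facet f) : ℕ := (F.exists_natCast_eq_mul_coord τ).choose

theorem denom_pos (τ : Facet f) : 0 < F.denom τ := (F.exists_natCast_eq_mul_coord τ).choose_spec.1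

/-- The coordinates of a lattice point of the cone over `τ`, cleared of denominators. Outside of the
cone this has no meaning. -/
noncomputable def natCoord (τ : Facet f) (m : σ →₀ ℕ) : σ →₀ ℕ :=
  Finsupp.equivFunOnFinite.symm fun k => ⌊F.denom τ * F.coord τ k (toR m)⌋₊

variable {F}

theorem natCast_natCoord {τ : Facet f} {m : σ →₀ ℕ} (hm : toR m ∈ F.cone τ) (k : σ) :
    (F.natCoord τ m k : ℝ) = F.denom τ * F.coord τ k (toR m) := by
  obtain ⟨a, ha⟩ := (F.exists_natCast_eq_mul_coord τ).choose_spec.2 m hm k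
  change (⌊F.denom τ * F.coord τ k (toR m)⌋₊ : ℝ) = F.denom τ * F.coord τ k (toR m)
  rw [show F.denom τ * F.coord τ k (toR m) = a from ha.symm, Nat.floor_natCast]

theorem add_mem_cone {τ : Facet f} {x y : σ → ℝ} (hx : x ∈ F.cone τ) (hy : y ∈ F.cone τ) :
    x + y ∈ F.cone τ := fun k => by
  rw [map_add]
  exact add_nonneg (hx k) (hy k)

theorem vertex_mem_cone (τ : Facet f) (k : σ) : toR (F.vertex τ k) ∈ F.cone τ :=
  F.coord_nonneg_of_height_eq_one τ _ (F.vertex_mem_support τ k) (F.height_vertex τ k)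

theorem natCoord_add {τ : Facet f} {u v : σ →₀ ℕ} (hu : toR u ∈ F.cone τ) (hv : toR v ∈ F.cone τ) :
    F.natCoord τ (u + v) = F.natCoord τ u + F.natCoord τ v := by
  ext k
  have huv : toR (u + v) ∈ F.cone τ := toR_add u v ▸ add_mem_cone hu hv
  refine Nat.cast_injective (R := ℝ) ?_
  rw [Finsupp.add_apply, Nat.cast_add, natCast_natCoord hu, natCast_natCoord hv,
    natCast_natCoord huv, toR_add, map_add, mul_add]

variable (F)

/-- The exponents of degree `β` in the cone over the facet `τ`. -/
def coneSlice (τ : Facet f) (β : ℝ) : Set (σ →₀ ℕ) :=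
  {u | toR u ∈ F.cone τ ∧ height τ (toR u) = β}

theorem finite_coneSlice (τ : Facet f) (β : ℝ) : (F.coneSlice τ β).Finite :=
  (F.finite_setOf_nu_le β).subset fun _ hu => ((F.nu_eq_height hu.1).trans hu.2).le

/-- `facetPart τ i` in the coordinates of the cone over `τ`. -/
noncomputable def coordFacetPart (τ : Facet f) (i : σ) : MvPolynomial σ ℂ :=
  ∑ m ∈ f.support with height τ (toR m) = 1, monomial (F.natCoord τ m) (m i * coeff m f)

theorem mem_coneSlice_one {τ : Facet f} {m : σ →₀ ℕ} (hm : m ∈ f.support)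
    (h : height τ (toR m) = 1) : m ∈ F.coneSlice τ 1 :=
  ⟨F.coord_nonneg_of_height_eq_one τ m hm h, h⟩

theorem facetPart_mem (τ : Facet f) (i : σ) :
    facetPart τ i ∈ restrictSupport ℂ (F.coneSlice τ 1) :=
  Submodule.sum_mem _ fun _ hm => (monomial_mem_restrictSupport ℂ).2 <| .inl <|
    F.mem_coneSlice_one (Finset.mem_filter.1 hm).1 (Finset.mem_filter.1 hm).2

theorem exists_torus_point_prod_eq (τ : Facet f) {z : σ → ℂ} (hz : ∀ k, z k ≠ 0) :
    ∃ x : σ → ℂ, (∀ i, x i ≠ 0) ∧ ∀ m, toR m ∈ F.cone τ →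
      ∏ i, x i ^ m i = ∏ k, z k ^ F.natCoord τ m k := by
  classical
  obtain ⟨w, rfl⟩ : ∃ w : σ → ℂ, z = fun k => Complex.exp (w k) :=
    ⟨fun k => Complex.log (z k), funext fun k => (Complex.exp_log (hz k)).symm⟩
  let c (k i : σ) : ℝ := F.denom τ * F.coord τ k (Pi.single i 1)
  refine ⟨fun i => Complex.exp (∑ k, c k i * w k), fun i => Complex.exp_ne_zero _, fun m hm => ?_⟩
  have natCoord_eq (k) : (F.natCoord τ m k : ℂ) = ∑ i, (m i : ℂ) * c k i := by
    have eq : (F.natCoord τ m k : ℝ) = ∑ i, (m i : ℝ) * c k i := by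
      rw [natCast_natCoord hm, pi_eq_sum_univ' (toR m), map_sum, Finset.mul_sum]
      refine Finset.sum_congr rfl fun i _ => ?_
      rw [map_smul, smul_eq_mul, mul_left_comm]
      rfl
    exact_mod_cast congrArg (fun r : ℝ => (r : ℂ)) eq
  simp only [← Complex.exp_nat_mul, ← Complex.exp_sum, natCoord_eq, Finset.mul_sum, Finset.sum_mul]
  rw [Finset.sum_comm]
  simp only [mul_assoc]

/-- A zero of the facet parts in the coordinates of the cone, after replacing its vanishing
coordinates by `1`, comes from a torus point, which is a zero on the face where these coordinates
vanish. -/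
theorem eq_zero_of_eval_coordFacetPart_eq_zero (hnd : Nondegenerate f) {τ : Facet f} {z : σ → ℂ}
    (hz : ∀ i, eval z (F.coordFacetPart τ i) = 0) : z = 0 := by
  classical
  by_contra ne
  let L : Finset σ := {k | z k = 0}
  have hL : L ≠ Finset.univ := fun h => ne <| funext fun k =>
    (Finset.mem_filter.1 (h ▸ Finset.mem_univ k : k ∈ L)).2
  obtain ⟨x, x_ne, prod_x⟩ := F.exists_torus_point_prod_eq τ
    (z := fun k => if z k = 0 then 1 else z k) fun k => by split_ifs with h <;> simp [h]
  refine hnd _ (F.nbFace_face τ hL) ⟨x, x_ne, fun i => ?_⟩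
  rw [faceRestrict_X_mul_pderiv, ← hz i, coordFacetPart, map_sum, map_sum]
  refine Finset.sum_subset_zero_on_sdiff (fun m hm => ?_) (fun m hm => ?_) fun m hm => ?_
  · rw [Finset.mem_filter] at hm ⊢
    exact ⟨hm.1, (mem_face.1 hm.2).2.1⟩
  · simp only [Finset.mem_sdiff, Finset.mem_filter, not_and] at hm
    have mem_cone := (F.mem_coneSlice_one hm.1.1 hm.1.2).1
    obtain ⟨k, hk, coord_ne⟩ : ∃ k, z k = 0 ∧ F.coord τ k (toR m) ≠ 0 := by
      by_contra! h
      exact hm.2 hm.1.1 (mem_face.2 ⟨mem_cone, hm.1.2, fun k hk => h k (Finset.mem_filter.1 hk).2⟩)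
    have natCoord_ne : F.natCoord τ m k ≠ 0 := fun h => by
      have := natCast_natCoord mem_cone k
      rw [h, Nat.cast_zero] at this
      exact mul_ne_zero (Nat.cast_ne_zero.2 (F.denom_pos τ).ne') coord_ne this.symm
    rw [eval_monomial, Finsupp.prod_fintype _ _ fun _ => pow_zero _,
      Finset.prod_eq_zero (Finset.mem_univ k) (by rw [hk, zero_pow natCoord_ne]), mul_zero]
  · have mem_face := mem_face.1 (Finset.mem_filter.1 hm).2
    rw [eval_monomial, eval_monomial, Finsupp.prod_fintype _ _ fun _ => pow_zero _,
      Finsupp.prod_fintype _ _ fun _ => pow_zero _, prod_x m mem_face.1]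
    refine congrArg _ (Finset.prod_congr rfl fun k _ => ?_)
    split_ifs with hk
    · have natCoord_eq : F.natCoord τ m k = 0 := by
        have := natCast_natCoord mem_face.1 k
        rw [mem_face.2.2 k (by simpa [L] using hk), mul_zero] at this
        exact_mod_cast this
      rw [natCoord_eq, pow_zero, pow_zero]
    · rfl

theorem exists_sum_mul_coordFacetPart_eq_X_pow (hnd : Nondegenerate f) (τ : Facet f) :
    ∃ N : ℕ, ∀ k, ∃ p : σ → MvPolynomial σ ℂ,
      ∑ i, p i * F.coordFacetPart τ i = X k ^ (F.denom τ * N) := by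
  let I : Ideal (MvPolynomial σ ℂ) := Ideal.span (Set.range (F.coordFacetPart τ))
  have mem_radical (k) : X k ∈ I.radical := by
    rw [← vanishingIdeal_zeroLocus_eq_radical (k := ℂ) (K := ℂ), mem_vanishingIdeal_iff]
    intro z hz
    have : z = 0 := F.eq_zero_of_eval_coordFacetPart_eq_zero hnd fun i =>
      (mem_zeroLocus_iff.1 hz) _ (Ideal.subset_span ⟨i, rfl⟩)
    rw [this, aeval_X, Pi.zero_apply]
  choose e he using mem_radical
  refine ⟨∑ k, e k, fun k => Ideal.mem_span_range_iff_exists_fun.1 ?_⟩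
  have le : e k ≤ F.denom τ * ∑ k, e k :=
    (Finset.single_le_sum (fun _ _ => Nat.zero_le _) (Finset.mem_univ k)).trans
      (Nat.le_mul_of_pos_left _ (F.denom_pos τ))
  exact I.pow_mem_of_pow_mem (he k) le

/-- The linear map which turns exponents in the coordinates of the cone over `τ` back into
exponents of degree `β` in the cone. It kills the monomials which do not arise from such
exponents. -/
noncomputable def ofNatCoord (τ : Facet f) (β : ℝ) : MvPolynomial σ ℂ →ₗ[ℂ] MvPolynomial σ ℂ :=
  ∑ u ∈ (F.finite_coneSlice τ β).toFinset, monomial u ∘ₗ lcoeff ℂ (F.natCoord τ u)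

open Classical in
theorem coeff_ofNatCoord (τ : Facet f) (β : ℝ) (p : MvPolynomial σ ℂ) (u : σ →₀ ℕ) :
    coeff u (F.ofNatCoord τ β p) = if u ∈ F.coneSlice τ β then coeff (F.natCoord τ u) p else 0 := by
  simp [ofNatCoord, coeff_sum, coeff_monomial, Finset.sum_ite_eq']

theorem ofNatCoord_mem (τ : Facet f) (β : ℝ) (p : MvPolynomial σ ℂ) :
    F.ofNatCoord τ β p ∈ restrictSupport ℂ (F.coneSlice τ β) :=
  (mem_restrictSupport_iff _).2 fun u hu => by
    classical
    by_contra h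
    rw [Finset.mem_coe, mem_support_iff, coeff_ofNatCoord, if_neg h] at hu
    exact hu rfl

theorem add_mem_coneSlice {τ : Facet f} {β β' : ℝ} {u v : σ →₀ ℕ} (hu : u ∈ F.coneSlice τ β)
    (hv : v ∈ F.coneSlice τ β') : u + v ∈ F.coneSlice τ (β + β') :=
  ⟨toR_add u v ▸ add_mem_cone hu.1 hv.1, by rw [toR_add, map_add, hu.2, hv.2]⟩

theorem exists_add_eq_of_natCoord_le {τ : Facet f} {β : ℝ} {m u : σ →₀ ℕ}
    (hm : m ∈ F.coneSlice τ 1) (hu : u ∈ F.coneSlice τ β) (h : F.natCoord τ m ≤ F.natCoord τ u) :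
    ∃ w ∈ F.coneSlice τ (β - 1), w + m = u := by
  have coord_le (k) : F.coord τ k (toR m) ≤ F.coord τ k (toR u) := by
    have := Nat.cast_le (α := ℝ).2 (h k)
    rw [natCast_natCoord hm.1, natCast_natCoord hu.1] at this
    exact le_of_mul_le_mul_left this (Nat.cast_pos.2 (F.denom_pos τ))
  obtain ⟨w, rfl⟩ := exists_add_eq_of_coord_le coord_le
  refine ⟨w, ⟨fun k => ?_, ?_⟩, rfl⟩
  · have := coord_le k
    rwa [toR_add, map_add, le_add_iff_nonneg_left] at this
  · rw [← hu.2, toR_add, map_add, hm.2, add_sub_cancel_right]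

theorem ofNatCoord_monomial_mul {τ : Facet f} {m : σ →₀ ℕ} (hm : m ∈ F.coneSlice τ 1) (β : ℝ)
    (c : ℂ) (p : MvPolynomial σ ℂ) :
    F.ofNatCoord τ β (monomial (F.natCoord τ m) c * p) =
      monomial m c * F.ofNatCoord τ (β - 1) p := by
  classical
  ext u
  rw [coeff_ofNatCoord, coeff_monomial_mul', coeff_monomial_mul', coeff_ofNatCoord]
  by_cases h : ∃ w ∈ F.coneSlice τ (β - 1), w + m = u
  · obtain ⟨w, hw, rfl⟩ := h
    have mem : w + m ∈ F.coneSlice τ β := sub_add_cancel β 1 ▸ F.add_mem_coneSlice hw hm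
    rw [natCoord_add hw.1 hm.1, if_pos mem, if_pos le_add_self, if_pos le_add_self,
      add_tsub_cancel_right, add_tsub_cancel_right, if_pos hw]
  · trans 0
    · refine ite_eq_right_iff.2 fun hu => if_neg fun hle => ?_
      exact h (F.exists_add_eq_of_natCoord_le hm hu hle)
    · refine (ite_eq_right_iff.2 fun hle => ?_).symm
      rw [if_neg fun hw => h ⟨u - m, hw, tsub_add_cancel_of_le hle⟩, mul_zero]

theorem ofNatCoord_coordFacetPart_mul (τ : Facet f) (β : ℝ) (i : σ) (p : MvPolynomial σ ℂ) :
    F.ofNatCoord τ β (F.coordFacetPart τ i * p) = facetPart τ i * F.ofNatCoord τ (β - 1) p := by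
  rw [coordFacetPart, facetPart, Finset.sum_mul, Finset.sum_mul, map_sum]
  refine Finset.sum_congr rfl fun m hm => F.ofNatCoord_monomial_mul ?_ _ _ _
  exact F.mem_coneSlice_one (Finset.mem_filter.1 hm).1 (Finset.mem_filter.1 hm).2

theorem nsmul_vertex_mem_coneSlice (τ : Facet f) (N : ℕ) (k : σ) :
    N • F.vertex τ k ∈ F.coneSlice τ N := by
  refine ⟨fun j => ?_, by rw [toR_nsmul, map_smul, F.height_vertex, smul_eq_mul, mul_one]⟩
  rw [toR_nsmul, map_smul]
  exact mul_nonneg N.cast_nonneg (vertex_mem_cone τ k j)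

theorem natCoord_nsmul_vertex (τ : Facet f) (N : ℕ) (k : σ) :
    F.natCoord τ (N • F.vertex τ k) = Finsupp.single k (F.denom τ * N) := by
  classical
  ext j
  refine Nat.cast_injective (R := ℝ) ?_
  rw [natCast_natCoord (F.nsmul_vertex_mem_coneSlice τ N k).1, toR_nsmul, map_smul, F.coord_vertex,
    Finsupp.single_apply]
  split_ifs <;> simp

theorem natCoord_injOn_cone (τ : Facet f) : Set.InjOn (F.natCoord τ) {u | toR u ∈ F.cone τ} := by
  intro u hu v hv h
  refine toR_injective (F.ext_coord τ fun k => ?_)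
  refine mul_left_cancel₀ (Nat.cast_ne_zero (R := ℝ).2 (F.denom_pos τ).ne') ?_
  rw [← natCast_natCoord hu, ← natCast_natCoord hv, h]

theorem ofNatCoord_X_pow (τ : Facet f) (N : ℕ) (k : σ) :
    F.ofNatCoord τ N (X k ^ (F.denom τ * N)) = monomial (N • F.vertex τ k) 1 := by
  classical
  have mem := F.nsmul_vertex_mem_coneSlice τ N k
  ext u
  rw [coeff_ofNatCoord, X_pow_eq_monomial, ← F.natCoord_nsmul_vertex, coeff_monomial,
    coeff_monomial]
  by_cases eq : N • F.vertex τ k = u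
  · simp [← eq, mem]
  · rw [if_neg eq]
    refine ite_eq_right_iff.2 fun hu => if_neg fun h => ?_
    exact eq (F.natCoord_injOn_cone τ mem.1 hu.1 h)

theorem exists_sum_facetPart_mul_eq (hnd : Nondegenerate f) (τ : Facet f) :
    ∃ N : ℕ, ∀ k, ∃ q : σ → MvPolynomial σ ℂ,
      (∀ i, q i ∈ restrictSupport ℂ (F.coneSlice τ (N - 1))) ∧
        ∑ i, facetPart τ i * q i = monomial (N • F.vertex τ k) 1 := by
  obtain ⟨N, hN⟩ := F.exists_sum_mul_coordFacetPart_eq_X_pow hnd τ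
  refine ⟨N, fun k => ?_⟩
  obtain ⟨p, hp⟩ := hN k
  refine ⟨fun i => F.ofNatCoord τ (N - 1) (p i), fun i => F.ofNatCoord_mem τ _ _, ?_⟩
  simp only [← F.ofNatCoord_X_pow, ← hp, map_sum, ← ofNatCoord_coordFacetPart_mul]
  simp only [mul_comm]

end NewtonFan

/-! ### Generators of the module of a half-open cone -/

section RestrictSupport

variable {σ K : Type*} [Field K]

theorem restrictSupport_union (s t : Set (σ →₀ ℕ)) :
    restrictSupport K (s ∪ t) = restrictSupport K s ⊔ restrictSupport K t := by
  simp only [restrictSupport_eq_span, Set.image_union, Submodule.span_union]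

theorem map_lsmul_monomial_restrictSupport (m : σ →₀ ℕ) (s : Set (σ →₀ ℕ)) :
    (restrictSupport K s).map (Algebra.lsmul K K (MvPolynomial σ K) (monomial m (1 : K))) =
      restrictSupport K ((· + m) '' s) := by
  simp only [restrictSupport_eq_span, Submodule.map_span, Set.image_image, Algebra.lsmul_coe,
    smul_eq_mul, monomial_mul, one_mul, add_comm m]

theorem finrank_restrictSupport (s : Set (σ →₀ ℕ)) :
    Module.finrank K (restrictSupport K s) = s.ncard :=
  Module.finrank_eq_nat_card_basis (basisRestrictSupport K s)

theorem finiteDimensional_restrictSupport {s : Set (σ →₀ ℕ)} (hs : s.Finite) :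
    FiniteDimensional K (restrictSupport K s) :=
  have : Finite s := hs
  .of_basis (basisRestrictSupport K s)

theorem restrictSupport_empty : restrictSupport K (∅ : Set (σ →₀ ℕ)) = ⊥ := by
  rw [restrictSupport_eq_span, Set.image_empty, Submodule.span_empty]

end RestrictSupport

section SpanningFamily

variable {K V κ : Type*} [Field K] [AddCommGroup V] [Module K V]

theorem exists_span_image_eq_top [FiniteDimensional K V] {S : Set κ} (hS : S.Finite)
    (h : Module.finrank K V ≤ S.ncard) : ∃ e : κ → V, Submodule.span K (e '' S) = ⊤ := by
  have := hS.fintype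
  let b := Module.finBasis K V
  obtain ⟨j⟩ : Nonempty (Fin (Module.finrank K V) ↪ S) := by
    refine Function.Embedding.nonempty_of_card_le ?_
    rwa [Fintype.card_fin, ← Nat.card_eq_fintype_card]
  have j_injective : Function.Injective fun i => (j i : κ) := Subtype.val_injective.comp j.injective
  refine ⟨Function.extend (fun i => (j i : κ)) b 0, top_unique ?_⟩
  rw [← b.span_eq, Submodule.span_le]
  rintro _ ⟨i, rfl⟩
  exact Submodule.subset_span ⟨j i, (j i).2, j_injective.extend_apply _ _ i⟩

theorem exists_le_span_image_sup {M N : Submodule K V} (hN : N ≤ M) [FiniteDimensional K M]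
    {S : Set κ} (hS : S.Finite) (h : Module.finrank K M ≤ Module.finrank K N + S.ncard) :
    ∃ e : κ → V, (∀ w, e w ∈ M) ∧ M ≤ Submodule.span K (e '' S) ⊔ N := by
  have finrank_map := finrank_map_add_finrank_inf_ker N.mkQ M
  rw [Submodule.ker_mkQ, inf_eq_right.2 hN] at finrank_map
  obtain ⟨q, hq⟩ := exists_span_image_eq_top (K := K) (V := M.map N.mkQ) hS (by lia)
  choose e e_mem e_eq using fun w => (q w).2
  refine ⟨e, e_mem, ?_⟩
  rw [sup_comm, ← Submodule.comap_map_mkQ, ← Submodule.map_le_iff_le_comap, Submodule.map_span,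
    Set.image_image]
  simp only [e_eq]
  rw [← Set.image_image Subtype.val q, ← Submodule.coe_subtype, ← Submodule.map_span, hq,
    Submodule.map_top, Submodule.range_subtype]

end SpanningFamily

namespace NewtonFan

variable {σ : Type*} [Fintype σ] {f : MvPolynomial σ ℂ} (F : NewtonFan f)

/-- The exponents of degree `β` in the half-open cone over the facet `τ`. -/
def halfOpenSlice (τ : Facet f) (β : ℝ) : Set (σ →₀ ℕ) :=
  {u | toR u ∈ F.halfOpenCone τ F.direction ∧ height τ (toR u) = β}

/-- The exponents of degree `β` in the half-open box of the facet `τ`. -/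
def halfOpenBoxSlice (τ : Facet f) (β : ℝ) : Set (σ →₀ ℕ) :=
  {u | toR u ∈ F.halfOpenBox τ ∧ height τ (toR u) = β}

/-- The exponents of degree `β` obtained from the half-open cone over `τ` by adding one of the
vertices in `l`. -/
def vertexShifts (τ : Facet f) (l : List σ) (β : ℝ) : Set (σ →₀ ℕ) :=
  ⋃ k ∈ l, (· + F.vertex τ k) '' F.halfOpenSlice τ (β - 1)

variable {F} {τ : Facet f} {β β' : ℝ} {u v : σ →₀ ℕ}

theorem finite_halfOpenSlice : (F.halfOpenSlice τ β).Finite :=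
  (F.finite_coneSlice τ β).subset fun _ hu => ⟨halfOpenCone_subset_cone hu.1, hu.2⟩

theorem add_mem_halfOpenSlice (hu : u ∈ F.coneSlice τ β) (hv : v ∈ F.halfOpenSlice τ β') :
    u + v ∈ F.halfOpenSlice τ (β + β') := by
  have hv' := mem_halfOpenCone_direction_iff.1 hv.1
  refine ⟨?_, by rw [toR_add, map_add, hu.2, hv.2]⟩
  rw [toR_add]
  refine mem_halfOpenCone_direction_iff.2 ⟨add_mem_cone hu.1 hv'.1, fun k hk => ?_⟩
  rw [map_add]
  exact add_pos_of_nonneg_of_pos (hu.1 k) (hv'.2 k hk)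

theorem add_vertex_mem_halfOpenSlice (hu : u ∈ F.halfOpenSlice τ (β - 1)) (k : σ) :
    u + F.vertex τ k ∈ F.halfOpenSlice τ β := by
  have := F.nsmul_vertex_mem_coneSlice τ 1 k
  rw [one_smul, Nat.cast_one] at this
  simpa [add_comm u] using add_mem_halfOpenSlice this hu

theorem exists_add_nsmul_vertex_eq (hv : v ∈ F.halfOpenSlice τ β) {k : σ} {N : ℕ}
    (le : N ≤ F.coord τ k (toR v)) (lt : k ∈ F.openIndices τ → N < F.coord τ k (toR v)) :
    ∃ u ∈ F.halfOpenSlice τ (β - N), u + N • F.vertex τ k = v := by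
  classical
  have hv' := mem_halfOpenCone_direction_iff.1 hv.1
  have coord_nsmul (j) : F.coord τ j (toR (N • F.vertex τ k)) = if k = j then (N : ℝ) else 0 := by
    rw [toR_nsmul, map_smul, F.coord_vertex, smul_eq_mul, mul_ite, mul_one, mul_zero]
  obtain ⟨u, rfl⟩ := exists_add_eq_of_coord_le (F := F) (u := N • F.vertex τ k) (v := v)
    fun j => by
      rw [coord_nsmul]
      split_ifs with h
      exacts [h ▸ le, hv'.1 j]
  simp only [toR_add, map_add, coord_nsmul, if_true, le_add_iff_nonneg_left,
    lt_add_iff_pos_left] at le lt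
  refine ⟨u, ⟨mem_halfOpenCone_direction_iff.2 ⟨fun j => ?_, fun j hj => ?_⟩, ?_⟩, rfl⟩
  · have := hv'.1 j
    rw [toR_add, map_add, coord_nsmul] at this
    split_ifs at this with h
    exacts [h ▸ le, by rwa [add_zero] at this]
  · have := hv'.2 j hj
    rw [toR_add, map_add, coord_nsmul] at this
    split_ifs at this with h
    exacts [h ▸ lt (h ▸ hj), by rwa [add_zero] at this]
  · rw [← hv.2, toR_add, map_add, (F.nsmul_vertex_mem_coneSlice τ N k).2, add_sub_cancel_right]

theorem exists_lt_coord {N : ℝ} {x : σ → ℝ} (h : Fintype.card σ * N < height τ x) :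
    ∃ k, N < F.coord τ k x := by
  rw [F.height_eq_sum_coord, ← nsmul_eq_mul, ← Finset.card_univ, ← Finset.sum_const] at h
  exact (Finset.exists_lt_of_sum_lt h).imp fun _ hk => hk.2

theorem mem_vertexShifts {l : List σ} :
    v ∈ F.vertexShifts τ l β ↔ ∃ k ∈ l, ∃ u ∈ F.halfOpenSlice τ (β - 1), u + F.vertex τ k = v := by
  simp [vertexShifts]

theorem vertexShifts_subset (l : List σ) :
    F.vertexShifts τ l β ⊆ F.halfOpenSlice τ β := fun v hv => by
  obtain ⟨k, _, u, hu, rfl⟩ := mem_vertexShifts.1 hv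
  exact add_vertex_mem_halfOpenSlice hu k

theorem mem_vertexShifts_of_le_coord (hv : v ∈ F.halfOpenSlice τ β) {l : List σ} {k : σ}
    (hk : k ∈ l) (le : 1 ≤ F.coord τ k (toR v))
    (lt : k ∈ F.openIndices τ → 1 < F.coord τ k (toR v)) : v ∈ F.vertexShifts τ l β := by
  rw [← Nat.cast_one] at le lt
  obtain ⟨u, hu, add_eq⟩ := exists_add_nsmul_vertex_eq hv le lt
  rw [Nat.cast_one] at hu
  exact mem_vertexShifts.2 ⟨k, hk, u, hu, by rw [← add_eq, one_smul]⟩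

theorem mem_vertexShifts_of_add_vertex_mem (hv : v ∈ F.halfOpenSlice τ β) {l : List σ} {k : σ}
    (hk : k ∉ l) (h : v + F.vertex τ k ∈ F.vertexShifts τ l (β + 1)) :
    v ∈ F.vertexShifts τ l β := by
  classical
  obtain ⟨j, hj, u, hu, add_eq⟩ := mem_vertexShifts.1 h
  have hu' := mem_halfOpenCone_direction_iff.1 hu.1
  have coord_eq : F.coord τ j (toR v) = F.coord τ j (toR u) + 1 := by
    have := congrArg (fun w => F.coord τ j (toR w)) add_eq
    simpa [toR_add, coord_vertex, ne_of_mem_of_not_mem hj hk |>.symm] using this.symm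
  refine mem_vertexShifts_of_le_coord hv hj ?_ fun hj' => ?_
  · rw [coord_eq, le_add_iff_nonneg_left]
    exact hu'.1 j
  · rw [coord_eq, lt_add_iff_pos_left]
    exact hu'.2 j hj'

theorem halfOpenSlice_sdiff_vertexShifts_subset {l : List σ} (hl : ∀ k, k ∈ l) :
    F.halfOpenSlice τ β \ F.vertexShifts τ l β ⊆ F.halfOpenBoxSlice τ β := by
  rintro v ⟨hv, not_mem⟩
  have hv' := mem_halfOpenCone_direction_iff.1 hv.1
  refine ⟨fun k => ⟨fun hk => ⟨hv'.2 k hk, ?_⟩, fun hk => ⟨hv'.1 k, ?_⟩⟩, hv.2⟩ <;>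
    by_contra! h
  · exact not_mem (mem_vertexShifts_of_le_coord hv (hl k) h.le fun _ => h)
  · exact not_mem (mem_vertexShifts_of_le_coord hv (hl k) h fun hk' => absurd hk' hk)

variable (F)

/-- The polynomials with exponents of degree `β` in the half-open cone over `τ`. -/
noncomputable def sliceModule (τ : Facet f) (β : ℝ) : Submodule ℂ (MvPolynomial σ ℂ) :=
  restrictSupport ℂ (F.halfOpenSlice τ β)

/-- The sums of products of `facetPart τ i` with elements of the module of the half-open cone
over `τ`, in degree `β`. -/
noncomputable def facetPartSpan (τ : Facet f) (β : ℝ) : Submodule ℂ (MvPolynomial σ ℂ) :=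
  ⨆ i, (F.sliceModule τ (β - 1)).map (Algebra.lsmul ℂ ℂ (MvPolynomial σ ℂ) (facetPart τ i))

/-- The part of the module of the half-open cone over `τ` with degrees in `β₀ + ℤ`. -/
noncomputable def gradedSliceModule (τ : Facet f) (β₀ : ℝ) (d : ℤ) :
    Submodule ℂ (MvPolynomial σ ℂ) := F.sliceModule τ (β₀ + d)

variable {F}

theorem mul_mem_sliceModule {p q : MvPolynomial σ ℂ} (hp : p ∈ restrictSupport ℂ (F.coneSlice τ β))
    (hq : q ∈ F.sliceModule τ β') : p * q ∈ F.sliceModule τ (β + β') :=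
  mul_mem_restrictSupport (fun _ hu _ hv => add_mem_halfOpenSlice hu hv) hp hq

theorem sum_facetPart_mul_mem {q : σ → MvPolynomial σ ℂ} (hq : ∀ i, q i ∈ F.sliceModule τ (β - 1)) :
    ∑ i, facetPart τ i * q i ∈ F.facetPartSpan τ β :=
  Submodule.sum_mem_iSup fun i => ⟨q i, hq i, rfl⟩

theorem facetPartSpan_le : F.facetPartSpan τ β ≤ F.sliceModule τ β := by
  refine iSup_le fun i => ?_
  rintro _ ⟨q, hq, rfl⟩
  exact add_sub_cancel 1 β ▸ mul_mem_sliceModule (F.facetPart_mem τ i) hq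

variable (F) in
theorem eventually_sliceModule_le (hnd : Nondegenerate f) (τ : Facet f) :
    ∀ᶠ β in atTop, F.sliceModule τ β ≤ F.facetPartSpan τ β := by
  obtain ⟨N, hN⟩ := F.exists_sum_facetPart_mul_eq hnd τ
  filter_upwards [eventually_gt_atTop (Fintype.card σ * N : ℝ)] with β hβ
  rw [sliceModule, restrictSupport_eq_span, Submodule.span_le]
  rintro _ ⟨v, hv, rfl⟩
  obtain ⟨k, hk⟩ := exists_lt_coord (F := F) (hβ.trans_eq hv.2.symm)
  obtain ⟨u, hu, add_eq⟩ := exists_add_nsmul_vertex_eq hv hk.le fun _ => hk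
  obtain ⟨q, q_mem, sum_eq⟩ := hN k
  have monomial_mem : monomial u 1 ∈ F.sliceModule τ (β - N) :=
    (monomial_mem_restrictSupport ℂ).2 (.inl hu)
  have : (monomial v 1 : MvPolynomial σ ℂ) = ∑ i, facetPart τ i * (q i * monomial u 1) := by
    simp_rw [← mul_assoc, ← Finset.sum_mul]
    rw [sum_eq, monomial_mul, one_mul, add_comm, add_eq]
  change monomial v 1 ∈ F.facetPartSpan τ β
  rw [this]
  refine sum_facetPart_mul_mem fun i => ?_
  convert mul_mem_sliceModule (q_mem i) monomial_mem using 2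
  ring

section Graded

variable {β₀ : ℝ}

theorem mem_degreeOne_gradedSliceModule {p : MvPolynomial σ ℂ}
    (hp : p ∈ restrictSupport ℂ (F.coneSlice τ 1)) :
    p ∈ degreeOne (MvPolynomial σ ℂ) (F.gradedSliceModule τ β₀) := fun d q hq => by
  have := mul_mem_sliceModule hp hq
  rwa [gradedSliceModule, Int.cast_add, Int.cast_one, ← add_assoc, add_comm _ (1 : ℝ)]

variable (F τ β₀)

/-- `facetPart τ i` as an operator of degree one. -/
noncomputable def facetPartOp (i : σ) :
    degreeOne (MvPolynomial σ ℂ) (F.gradedSliceModule τ β₀) :=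
  ⟨facetPart τ i, mem_degreeOne_gradedSliceModule (F.facetPart_mem τ i)⟩

/-- The monomial of a vertex of `τ` as an operator of degree one. -/
noncomputable def vertexOp (k : σ) : degreeOne (MvPolynomial σ ℂ) (F.gradedSliceModule τ β₀) :=
  ⟨monomial (F.vertex τ k) 1, mem_degreeOne_gradedSliceModule <|
    (monomial_mem_restrictSupport ℂ).2 <| .inl ⟨vertex_mem_cone τ k, F.height_vertex τ k⟩⟩

theorem addSMulFamily_facetPartOp (d : ℤ) :
    addSMulFamily (F.gradedSliceModule τ β₀) ⊥ (F.facetPartOp τ β₀) d =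
      F.facetPartSpan τ (β₀ + d) := by
  rw [addSMulFamily, Pi.bot_apply, bot_sup_eq, facetPartSpan, add_sub_assoc, gradedSliceModule,
    Int.cast_sub, Int.cast_one]
  rfl

theorem addSMulList_vertexOp (l : List σ) (d : ℤ) :
    addSMulList (F.gradedSliceModule τ β₀) ⊥ (l.map (F.vertexOp τ β₀)) d =
      restrictSupport ℂ (F.vertexShifts τ l (β₀ + d)) := by
  induction l generalizing d with
  | nil => simp [addSMulList, vertexShifts, restrictSupport_empty]
  | cons k l ih =>
    have shifts_eq : F.vertexShifts τ (k :: l) (β₀ + d) = F.vertexShifts τ l (β₀ + d) ∪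
        (· + F.vertex τ k) '' F.halfOpenSlice τ (β₀ + (d - 1 : ℤ)) := by
      rw [Set.union_comm, Int.cast_sub, Int.cast_one, ← add_sub_assoc]
      simp [vertexShifts, Set.iUnion_or, Set.iUnion_union_distrib]
    rw [List.map_cons, addSMulList, addSMul, ih, shifts_eq, restrictSupport_union,
      ← map_lsmul_monomial_restrictSupport]
    rfl

theorem isRegularSeq_vertexOp {l : List σ} (hl : l.Nodup) :
    IsRegularSeq (F.gradedSliceModule τ β₀) ⊥ (l.map (F.vertexOp τ β₀)) := by
  induction l with
  | nil => trivial
  | cons k l ih =>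
    rw [List.nodup_cons] at hl
    refine ⟨ih hl.2, fun d p hp hmul => ?_⟩
    rw [addSMulList_vertexOp, mem_restrictSupport_iff] at hmul ⊢
    intro v hv
    refine mem_vertexShifts_of_add_vertex_mem (hp hv) hl.1 ?_
    rw [add_assoc, ← Int.cast_one, ← Int.cast_add]
    refine hmul (mem_support_iff.2 ?_)
    change coeff (v + F.vertex τ k) (monomial (F.vertex τ k) 1 * p) ≠ 0
    rw [mul_comm, coeff_mul_monomial, mul_one]
    exact mem_support_iff.1 hv

theorem gradedSliceModule_eq_bot (hβ₀ : β₀ < 1) {d : ℤ} (hd : d < 0) :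
    F.gradedSliceModule τ β₀ d = ⊥ := by
  have : F.halfOpenSlice τ (β₀ + d) = ∅ := Set.eq_empty_of_forall_notMem fun v hv => by
    have nonneg := F.height_nonneg (halfOpenCone_subset_cone hv.1)
    have : (d : ℝ) ≤ -1 := by exact_mod_cast Int.le_sub_one_of_lt hd
    linarith [hv.2]
  rw [gradedSliceModule, sliceModule, this, restrictSupport_empty]

theorem eventually_le_addSMulList_vertexOp {l : List σ} (hl : ∀ k, k ∈ l) :
    ∀ᶠ d in atTop, F.gradedSliceModule τ β₀ d ≤
      addSMulList (F.gradedSliceModule τ β₀) ⊥ (l.map (F.vertexOp τ β₀)) d := by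
  have tendsto : Tendsto (fun d : ℤ => β₀ + d) atTop atTop :=
    tendsto_atTop_add_const_left _ _ tendsto_intCast_atTop_atTop
  filter_upwards [tendsto.eventually_gt_atTop (Fintype.card σ * 1 : ℝ)] with d hd
  rw [addSMulList_vertexOp]
  refine restrictSupport_mono ℂ fun v hv => ?_
  obtain ⟨k, hk⟩ := exists_lt_coord (F := F) (hd.trans_eq hv.2.symm)
  exact mem_vertexShifts_of_le_coord hv (hl k) hk.le fun _ => hk

theorem eventually_le_addSMulFamily_facetPartOp (hnd : Nondegenerate f) :
    ∀ᶠ d in atTop, F.gradedSliceModule τ β₀ d ≤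
      addSMulFamily (F.gradedSliceModule τ β₀) ⊥ (F.facetPartOp τ β₀) d := by
  simp only [addSMulFamily_facetPartOp]
  exact (tendsto_atTop_add_const_left _ _ tendsto_intCast_atTop_atTop).eventually
    (F.eventually_sliceModule_le hnd τ)

end Graded

theorem ncard_vertexShifts_le_finrank (hnd : Nondegenerate f) {l : List σ} (hl : ∀ k, k ∈ l)
    (nodup : l.Nodup) (τ : Facet f) (β : ℝ) :
    (F.vertexShifts τ l β).ncard ≤ Module.finrank ℂ (F.facetPartSpan τ β) := by
  have finiteDimensional (d) : FiniteDimensional ℂ (F.gradedSliceModule τ (Int.fract β) d) :=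
    finiteDimensional_restrictSupport finite_halfOpenSlice
  have graded : IsGradedSub (MvPolynomial σ ℂ) (F.gradedSliceModule τ (Int.fract β)) ⊥ :=
    ⟨fun _ => bot_le, fun a d x hx => by
      rw [Pi.bot_apply, Submodule.mem_bot] at hx ⊢
      rw [hx, smul_zero]⟩
  have := finrank_addSMulList_le
    (fun d hd => F.gradedSliceModule_eq_bot τ _ (Int.fract_lt_one β) hd) graded
    (F.isRegularSeq_vertexOp τ _ nodup) (F.eventually_le_addSMulList_vertexOp τ _ hl)
    (F.eventually_le_addSMulFamily_facetPartOp τ _ hnd) ⌊β⌋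
  rwa [addSMulList_vertexOp, addSMulFamily_facetPartOp, Int.fract_add_floor,
    finrank_restrictSupport] at this

theorem exists_sliceModule_le_span_image_sup (hnd : Nondegenerate f) (τ : Facet f) (β : ℝ) :
    ∃ e : (σ →₀ ℕ) → MvPolynomial σ ℂ, (∀ w, e w ∈ F.sliceModule τ β) ∧
      F.sliceModule τ β ≤
        Submodule.span ℂ (e '' F.halfOpenBoxSlice τ β) ⊔ F.facetPartSpan τ β := by
  have finite_box : (F.halfOpenBoxSlice τ β).Finite :=
    finite_halfOpenSlice.subset fun v hv => ⟨halfOpenBox_subset_halfOpenCone τ hv.1, hv.2⟩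
  have : FiniteDimensional ℂ (F.sliceModule τ β) :=
    finiteDimensional_restrictSupport finite_halfOpenSlice
  let l := (Finset.univ : Finset σ).toList
  have mem_l (k) : k ∈ l := Finset.mem_toList.2 (Finset.mem_univ k)
  refine exists_le_span_image_sup facetPartSpan_le finite_box ?_
  calc Module.finrank ℂ (F.sliceModule τ β)
    _ = (F.halfOpenSlice τ β).ncard := finrank_restrictSupport _
    _ = (F.vertexShifts τ l β).ncard + (F.halfOpenSlice τ β \ F.vertexShifts τ l β).ncard := by
      rw [add_comm,
        Set.ncard_sdiff_add_ncard_of_subset (vertexShifts_subset l) finite_halfOpenSlice]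
    _ ≤ _ := add_le_add
      (ncard_vertexShifts_le_finrank hnd mem_l (Finset.nodup_toList _) τ β)
      (Set.ncard_le_ncard (halfOpenSlice_sdiff_vertexShifts_subset mem_l) finite_box)

end NewtonFan

/-! ### A basis adapted to the Newton filtration -/

theorem wellFounded_invImage_lt_of_finite {ι α : Type*} [Preorder α] {g : ι → α}
    (hg : ∀ i, {j | g j < g i}.Finite) : WellFounded (InvImage (· < ·) g) :=
  Subrelation.wf
    (fun {_ j} (hlt : g _ < g j) => Set.ncard_lt_ncard
      ⟨fun _ hk => lt_trans hk hlt, fun sub => lt_irrefl _ (sub hlt)⟩ (hg j))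
    (measure fun i => {j | g j < g i}.ncard).wf

theorem finrank_map_mkQ_span_image_union {K V ι : Type*} [Field K] [AddCommGroup V] [Module K V]
    {g : ι → V} (hg : LinearIndependent K g) {S C : Set ι} (disjoint : Disjoint C S)
    (hC : C.Finite) :
    Module.finrank K ((Submodule.span K (g '' (S ∪ C))).map (Submodule.span K (g '' S)).mkQ) =
      C.ncard := by
  have := hC.fintype
  have linearIndependent :
      LinearIndependent K ((Submodule.span K (g '' S)).mkQ ∘ fun x : C => g x) := by
    refine (hg.comp _ Subtype.val_injective).map ?_
    rw [Submodule.ker_mkQ, Set.range_comp, Subtype.range_coe]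
    exact hg.disjoint_span_image disjoint
  rw [Set.image_union, Submodule.span_union, Submodule.map_sup, Submodule.mkQ_map_self, bot_sup_eq,
    Submodule.map_span, Set.image_eq_range g C, ← Set.range_comp,
    finrank_span_eq_card linearIndependent, Set.ncard_eq_toFinset_card', Set.toFinset_card]

theorem exists_nat_sub_mem_Ioc {c : ℝ} (hc : 0 < c) : ∃ a : ℕ, c - a ∈ Set.Ioc 0 1 := by
  obtain ⟨a, ceil_eq⟩ := Nat.exists_eq_succ_of_ne_zero (Nat.ceil_pos.2 hc).ne'
  have lt : (a : ℝ) < c := Nat.lt_ceil.1 (ceil_eq ▸ a.lt_succ_self)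
  have le : c ≤ a + 1 := by exact_mod_cast ceil_eq ▸ Nat.le_ceil c
  exact ⟨a, sub_pos.2 lt, sub_le_iff_le_add'.2 le⟩

theorem exists_nat_sub_mem_Ico {c : ℝ} (hc : 0 ≤ c) : ∃ a : ℕ, c - a ∈ Set.Ico 0 1 :=
  ⟨⌊c⌋₊, sub_nonneg.2 (Nat.floor_le hc), sub_lt_iff_lt_add'.2 (Nat.lt_floor_add_one c)⟩

namespace NewtonFan

variable {σ : Type*} [Fintype σ] {f : MvPolynomial σ ℂ} (F : NewtonFan f)

theorem coord_add_vertexComb (τ : Facet f) (w : σ →₀ ℕ) (a : σ → ℕ) (k : σ) :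
    F.coord τ k (toR (w + F.vertexComb τ a)) = F.coord τ k (toR w) + a k := by
  rw [toR_add, map_add, coord_vertexComb]

theorem exists_add_vertexComb_eq (v : σ →₀ ℕ) : ∃ p : (σ →₀ ℕ) × (σ → ℕ),
    toR p.1 ∈ F.halfOpenBox (F.facetOf v) ∧ p.1 + F.vertexComb (F.facetOf v) p.2 = v := by
  set τ := F.facetOf v
  obtain ⟨nonneg, pos⟩ := mem_halfOpenCone_direction_iff.1 (F.mem_halfOpenCone_facetOf v)
  have exists_nat (k) : ∃ a : ℕ,
      (k ∈ F.openIndices τ → F.coord τ k (toR v) - a ∈ Set.Ioc 0 1) ∧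
      (k ∉ F.openIndices τ → F.coord τ k (toR v) - a ∈ Set.Ico 0 1) := by
    by_cases hk : k ∈ F.openIndices τ
    · exact (exists_nat_sub_mem_Ioc (pos k hk)).imp fun _ h => ⟨fun _ => h, absurd hk⟩
    · exact (exists_nat_sub_mem_Ico (nonneg k)).imp fun _ h => ⟨(absurd · hk), fun _ => h⟩
  choose a ha using exists_nat
  obtain ⟨w, add_eq⟩ : ∃ w, w + F.vertexComb τ a = v := exists_add_eq_of_coord_le fun k => by
    rw [coord_vertexComb, ← sub_nonneg]
    by_cases hk : k ∈ F.openIndices τ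
    exacts [((ha k).1 hk).1.le, ((ha k).2 hk).1]
  have coord_eq (k) : F.coord τ k (toR w) = F.coord τ k (toR v) - a k := by
    rw [← add_eq, coord_add_vertexComb, add_sub_cancel_right]
  exact ⟨(w, a), fun k => coord_eq k ▸ ha k, add_eq⟩

variable {F} in
theorem add_vertexComb_inj {τ : Facet f} {a a' : σ → ℕ} {w w' : σ →₀ ℕ}
    (hw : toR w ∈ F.halfOpenBox τ) (hw' : toR w' ∈ F.halfOpenBox τ)
    (eq : w + F.vertexComb τ a = w' + F.vertexComb τ a') : w = w' ∧ a = a' := by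
  obtain rfl : a = a' := funext fun k => by
    have coord_eq := congrArg (fun v => F.coord τ k (toR v)) eq
    simp only [coord_add_vertexComb] at coord_eq
    have abs_lt : |(a k : ℤ) - a' k| < 1 := by
      rw [← Int.cast_lt (R := ℝ)]
      push_cast
      rw [abs_lt]
      by_cases hk : k ∈ F.openIndices τ
      · have mem := (hw k).1 hk
        have mem' := (hw' k).1 hk
        constructor <;> linarith [mem.1, mem.2, mem'.1, mem'.2]
      · have mem := (hw k).2 hk
        have mem' := (hw' k).2 hk
        constructor <;> linarith [mem.1, mem.2, mem'.1, mem'.2]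
    rw [Int.abs_lt_one_iff] at abs_lt
    lia
  exact ⟨add_right_cancel eq, rfl⟩

/-- The lattice point of the half-open box of `F.facetOf v` congruent to `v` modulo the lattice
spanned by the vertices of that facet. -/
noncomputable def boxPart (v : σ →₀ ℕ) : σ →₀ ℕ := (F.exists_add_vertexComb_eq v).choose.1

/-- The number of times each vertex of the facet `F.facetOf v` is added to `F.boxPart v` in order
to obtain `v`. -/
noncomputable def boxMultiplicity (v : σ →₀ ℕ) : σ → ℕ := (F.exists_add_vertexComb_eq v).choose.2

theorem boxPart_mem (v : σ →₀ ℕ) : toR (F.boxPart v) ∈ F.halfOpenBox (F.facetOf v) :=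
  (F.exists_add_vertexComb_eq v).choose_spec.1

theorem boxPart_add (v : σ →₀ ℕ) :
    F.boxPart v + F.vertexComb (F.facetOf v) (F.boxMultiplicity v) = v :=
  (F.exists_add_vertexComb_eq v).choose_spec.2

variable {F} in
theorem facetOf_add_vertexComb {τ : Facet f} {w : σ →₀ ℕ} (hw : toR w ∈ F.halfOpenBox τ)
    (a : σ → ℕ) : F.facetOf (w + F.vertexComb τ a) = τ := by
  obtain ⟨nonneg, pos⟩ := mem_halfOpenCone_direction_iff.1 (halfOpenBox_subset_halfOpenCone τ hw)
  refine facetOf_eq (mem_halfOpenCone_direction_iff.2 ⟨fun k => ?_, fun k hk => ?_⟩) <;>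
    rw [coord_add_vertexComb]
  exacts [add_nonneg (nonneg k) (Nat.cast_nonneg _),
    add_pos_of_pos_of_nonneg (pos k hk) (Nat.cast_nonneg _)]

variable {F} in
theorem boxPart_and_boxMultiplicity_add_vertexComb {τ : Facet f} {w : σ →₀ ℕ}
    (hw : toR w ∈ F.halfOpenBox τ) (a : σ → ℕ) :
    F.boxPart (w + F.vertexComb τ a) = w ∧ F.boxMultiplicity (w + F.vertexComb τ a) = a := by
  have mem := F.boxPart_mem (w + F.vertexComb τ a)
  have add_eq := F.boxPart_add (w + F.vertexComb τ a)
  rw [facetOf_add_vertexComb hw] at mem add_eq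
  exact add_vertexComb_inj mem hw add_eq

theorem vertexComb_zero (τ : Facet f) : F.vertexComb τ 0 = 0 := by simp [vertexComb]

theorem boxPart_eq_self {v : σ →₀ ℕ} (hv : F.boxMultiplicity v = 0) : F.boxPart v = v := by
  simpa [hv, vertexComb_zero] using F.boxPart_add v

theorem boxMultiplicity_eq_zero_iff {v : σ →₀ ℕ} :
    F.boxMultiplicity v = 0 ↔ toR v ∈ F.halfOpenBox (F.facetOf v) := by
  refine ⟨fun h => ?_, fun h => ?_⟩
  · simpa [F.boxPart_eq_self h] using F.boxPart_mem v
  · simpa [vertexComb_zero] using (boxPart_and_boxMultiplicity_add_vertexComb h 0).2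

theorem nu_eq_nu_boxPart_add (v : σ →₀ ℕ) :
    nu f (toR v) = nu f (toR (F.boxPart v)) + ∑ k, (F.boxMultiplicity v k : ℝ) := by
  have mem_cone := halfOpenCone_subset_cone
    (halfOpenBox_subset_halfOpenCone _ (F.boxPart_mem v))
  conv_lhs => rw [nu_eq_height_facetOf, ← congrArg toR (F.boxPart_add v), toR_add, map_add,
    height_vertexComb]
  rw [F.nu_eq_height mem_cone]

theorem nu_add_le (F : NewtonFan f) {m : σ →₀ ℕ} (hm : m ∈ f.support) (v : σ →₀ ℕ) :
    nu f (toR (m + v)) ≤ nu f (toR v) + 1 := by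
  rw [F.nu_eq_height_facetOf, toR_add, map_add, add_comm]
  exact add_le_add (F.height_le_nu _ v) ((F.facetOf (m + v)).2.1 m hm)

/-- The pair of the Newton degree of `v` and the height of `F.direction` over the facet of `v`: the
induction that expresses monomials in the adapted basis runs along the lexicographic order. -/
noncomputable def inductionKey (v : σ →₀ ℕ) : ℝ ×ₗ ℝ :=
  toLex (nu f (toR v), height (F.facetOf v) F.direction)

theorem wellFounded_inductionKey : WellFounded (InvImage (· < ·) F.inductionKey) :=
  wellFounded_invImage_lt_of_finite fun v => (F.finite_setOf_nu_le (nu f (toR v))).subset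
    fun _ hlt => Prod.Lex.monotone_fst _ _ (le_of_lt (Set.mem_ofPred_eq ▸ hlt))

variable {F} in
theorem nu_eq_of_mem_halfOpenSlice {τ : Facet f} {β : ℝ} {v : σ →₀ ℕ}
    (hv : v ∈ F.halfOpenSlice τ β) : nu f (toR v) = β :=
  (F.nu_eq_height (halfOpenCone_subset_cone hv.1)).trans hv.2

variable {F} in
theorem inductionKey_add_lt {u v m : σ →₀ ℕ}
    (hv : v ∈ F.halfOpenSlice (F.facetOf u) (nu f (toR u) - 1)) (hm : m ∈ f.support)
    (hne : height (F.facetOf u) (toR m) ≠ 1) : F.inductionKey (m + v) < F.inductionKey u := by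
  set τ' := F.facetOf (m + v)
  have nu_v := nu_eq_of_mem_halfOpenSlice hv
  have nu_le := F.nu_add_le hm v
  rw [nu_v, sub_add_cancel] at nu_le
  refine Prod.Lex.toLex_lt_toLex.2 (nu_le.lt_or_eq.imp_right fun nu_eq => ⟨nu_eq, ?_⟩)
  dsimp only at nu_eq ⊢
  have height_m : height τ' (toR m) ≤ 1 := τ'.2.1 m hm
  have height_v := F.height_le_nu τ' v
  have height_add : height τ' (toR m) + height τ' (toR v) = nu f (toR u) := by
    rw [← nu_eq, F.nu_eq_height_facetOf, toR_add, map_add]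
  have height_v_eq : height τ' (toR v) = height (F.facetOf u) (toR v) := by
    rw [hv.2]
    linarith
  refine (height_le_of_mem_halfOpenCone hv.1 height_v_eq).lt_of_ne fun eq => hne ?_
  rw [← F.height_direction_injective eq]
  linarith

end NewtonFan

/-! ### The graded pieces of the Newton filtration -/

section Filtration

variable {σ : Type*} [DecidableEq σ] (f : MvPolynomial σ ℂ)

theorem Nle_eq_restrictSupport (α : ℝ) : Nle f α = restrictSupport ℂ {v | nu f (toR v) ≤ α} := rfl

end Filtration

namespace NewtonFan

variable {σ : Type*} [Fintype σ] [DecidableEq σ] {f : MvPolynomial σ ℂ} (F : NewtonFan f)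

theorem X_mul_pderiv_mul_mem_Nle (F : NewtonFan f) (i : σ) {α : ℝ} {p : MvPolynomial σ ℂ}
    (hp : p ∈ Nle f α) : X i * pderiv i f * p ∈ Nle f (α + 1) := by
  rw [X_mul_pderiv_eq_sum, Finset.sum_mul]
  refine Submodule.sum_mem _ fun m hm => ?_
  have monomial_mem : monomial m (m i * coeff m f) ∈ restrictSupport ℂ {m} :=
    (monomial_mem_restrictSupport ℂ).2 (.inl rfl)
  refine mul_mem_restrictSupport ?_ monomial_mem hp
  rintro _ rfl v hv
  exact (F.nu_add_le hm v).trans (by gcongr; exact hv)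

theorem pow_X_mul_pderiv_mul_mem_Nle (F : NewtonFan f) (i : σ) {α : ℝ} {p : MvPolynomial σ ℂ}
    (hp : p ∈ Nle f α) (a : ℕ) : (X i * pderiv i f) ^ a * p ∈ Nle f (α + a) := by
  induction a with
  | zero => simpa using hp
  | succ a ih =>
    rw [pow_succ', mul_assoc, Nat.cast_succ, ← add_assoc]
    exact F.X_mul_pderiv_mul_mem_Nle i ih

theorem prod_X_mul_pderiv_mul_mem_Nle (F : NewtonFan f) (s : Finset σ) (a : σ → ℕ) {α : ℝ}
    {p : MvPolynomial σ ℂ} (hp : p ∈ Nle f α) :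
    (∏ k ∈ s, (X k * pderiv k f) ^ a k) * p ∈ Nle f (α + ∑ k ∈ s, (a k : ℝ)) := by
  induction s using Finset.induction_on with
  | empty => simpa using hp
  | insert k s hk ih =>
    rw [Finset.prod_insert hk, Finset.sum_insert hk, mul_assoc, add_comm (a k : ℝ), ← add_assoc]
    exact F.pow_X_mul_pderiv_mul_mem_Nle k ih (a k)

/-- Polynomials indexed by the lattice points of the half-open boxes which generate the module of
each half-open cone modulo the multiples of the facet parts of the `X i * ∂f/∂X i`. -/
structure BoxGenerators where
  /-- The generator attached to a lattice point; only its values on half-open boxes matter. -/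
  gen : (σ →₀ ℕ) → MvPolynomial σ ℂ
  gen_mem_Nle : ∀ w, gen w ∈ Nle f (nu f (toR w))
  sliceModule_le : ∀ τ β, F.sliceModule τ β ≤
    Submodule.span ℂ (gen '' F.halfOpenBoxSlice τ β) ⊔ F.facetPartSpan τ β

theorem exists_boxGenerators (hnd : Nondegenerate f) : Nonempty F.BoxGenerators := by
  choose e e_mem le using fun τ β => F.exists_sliceModule_le_span_image_sup hnd τ β
  refine ⟨fun w => e (F.facetOf w) (nu f (toR w)) w, fun w => ?_, fun τ β => ?_⟩
  · refine restrictSupport_mono ℂ (fun v hv => ?_) (e_mem (F.facetOf w) (nu f (toR w)) w)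
    exact ((F.nu_eq_height (halfOpenCone_subset_cone hv.1)).trans hv.2).le
  · convert le τ β using 3
    refine Set.image_congr fun w hw => ?_
    have mem_cone := halfOpenBox_subset_halfOpenCone τ hw.1
    rw [facetOf_eq mem_cone, F.nu_eq_height (halfOpenCone_subset_cone mem_cone), hw.2]

namespace BoxGenerators

variable {F} (B : F.BoxGenerators)

/-- The products of powers of the `X k * ∂f/∂X k` with the box generators, indexed by lattice points
so that the element of index `v` has Newton degree `nu f (toR v)`. -/
noncomputable def adaptedBasis (v : σ →₀ ℕ) : MvPolynomial σ ℂ :=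
  (∏ k, (X k * pderiv k f) ^ F.boxMultiplicity v k) * B.gen (F.boxPart v)

theorem adaptedBasis_mem_Nle (v : σ →₀ ℕ) : B.adaptedBasis v ∈ Nle f (nu f (toR v)) := by
  rw [F.nu_eq_nu_boxPart_add v]
  exact F.prod_X_mul_pderiv_mul_mem_Nle _ _ (B.gen_mem_Nle _)

theorem exists_X_mul_pderiv_mul_adaptedBasis_eq (i : σ) (v : σ →₀ ℕ) :
    ∃ v', F.boxMultiplicity v' ≠ 0 ∧ nu f (toR v') = nu f (toR v) + 1 ∧
      X i * pderiv i f * B.adaptedBasis v = B.adaptedBasis v' := by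
  let a := F.boxMultiplicity v + Pi.single i 1
  let v' := F.boxPart v + F.vertexComb (F.facetOf v) a
  obtain ⟨boxPart_eq, boxMultiplicity_eq⟩ : F.boxPart v' = F.boxPart v ∧ F.boxMultiplicity v' = a :=
    boxPart_and_boxMultiplicity_add_vertexComb (F.boxPart_mem v) a
  refine ⟨v', fun h => ?_, ?_, ?_⟩
  · simpa [boxMultiplicity_eq, a] using congrFun h i
  · rw [F.nu_eq_nu_boxPart_add v', F.nu_eq_nu_boxPart_add v, boxPart_eq, boxMultiplicity_eq]
    simp [a, Finset.sum_add_distrib, add_assoc, Pi.single_apply]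
  · rw [adaptedBasis, adaptedBasis, boxPart_eq, boxMultiplicity_eq, ← mul_assoc]
    have prod_single : ∏ k, (X k * pderiv k f) ^ (Pi.single i 1 : σ → ℕ) k = X i * pderiv i f := by
      simp [Pi.single_apply, pow_ite, Finset.prod_ite_eq']
    simp only [a, Pi.add_apply, pow_add, Finset.prod_mul_distrib]
    rw [prod_single, mul_comm (X i * pderiv i f)]

theorem adaptedBasis_of_mem_halfOpenBox {v : σ →₀ ℕ} (hv : toR v ∈ F.halfOpenBox (F.facetOf v)) :
    B.adaptedBasis v = B.gen v := by
  have h := F.boxMultiplicity_eq_zero_iff.2 hv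
  simp [adaptedBasis, h, F.boxPart_eq_self h]

theorem adaptedBasis_mem_LIdeal {v : σ →₀ ℕ} (hv : F.boxMultiplicity v ≠ 0) :
    B.adaptedBasis v ∈ LIdeal f := by
  obtain ⟨k, hk⟩ := Function.ne_iff.1 hv
  have mem : X k * pderiv k f ∈ LIdeal f := Ideal.subset_span ⟨k, rfl⟩
  rw [adaptedBasis, ← Finset.mul_prod_erase _ _ (Finset.mem_univ k)]
  exact Ideal.mul_mem_right _ _ (Ideal.mul_mem_right _ _
    (Ideal.pow_mem_of_mem _ mem _ (Nat.pos_of_ne_zero hk)))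

/-- The span of the adapted basis elements of Newton degree at most `β`. -/
noncomputable def adaptedSpan (β : ℝ) : Submodule ℂ (MvPolynomial σ ℂ) :=
  Submodule.span ℂ (B.adaptedBasis '' {v | nu f (toR v) ≤ β})

theorem monotone_adaptedSpan : Monotone B.adaptedSpan := fun _ _ h =>
  Submodule.span_mono (Set.image_mono fun v (hv : nu f (toR v) ≤ _) => hv.trans h)

theorem X_mul_pderiv_mul_mem_adaptedSpan (i : σ) {β : ℝ} {p : MvPolynomial σ ℂ}
    (hp : p ∈ B.adaptedSpan β) : X i * pderiv i f * p ∈ B.adaptedSpan (β + 1) := by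
  suffices B.adaptedSpan β ≤
      (B.adaptedSpan (β + 1)).comap (LinearMap.mulLeft ℂ (X i * pderiv i f)) from this hp
  refine Submodule.span_le.2 ?_
  rintro _ ⟨v, hv, rfl⟩
  obtain ⟨v', -, nu_eq, mul_eq⟩ := B.exists_X_mul_pderiv_mul_adaptedBasis_eq i v
  exact Submodule.subset_span ⟨v', nu_eq.trans_le (add_le_add_left hv 1), mul_eq.symm⟩

theorem span_gen_le_adaptedSpan (τ : Facet f) (β : ℝ) :
    Submodule.span ℂ (B.gen '' F.halfOpenBoxSlice τ β) ≤ B.adaptedSpan β := by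
  refine Submodule.span_le.2 ?_
  rintro _ ⟨w, ⟨mem_box, rfl⟩, rfl⟩
  have mem_cone := halfOpenBox_subset_halfOpenCone τ mem_box
  rw [← B.adaptedBasis_of_mem_halfOpenBox ((facetOf_eq mem_cone).symm ▸ mem_box)]
  exact Submodule.subset_span
    ⟨w, (F.nu_eq_height (halfOpenCone_subset_cone mem_cone)).le, rfl⟩

theorem facetPart_mul_monomial_mem {u v : σ →₀ ℕ}
    (ih : ∀ w, F.inductionKey w < F.inductionKey u →
      monomial w 1 ∈ B.adaptedSpan (nu f (toR w)))
    (hv : v ∈ F.halfOpenSlice (F.facetOf u) (nu f (toR u) - 1)) (i : σ) :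
    facetPart (F.facetOf u) i * monomial v 1 ∈ B.adaptedSpan (nu f (toR u)) := by
  have nu_v := nu_eq_of_mem_halfOpenSlice hv
  have facetPart_eq : facetPart (F.facetOf u) i = X i * pderiv i f -
      ∑ m ∈ f.support with height (F.facetOf u) (toR m) ≠ 1, monomial m (m i * coeff m f) := by
    rw [X_mul_pderiv_eq_sum, facetPart, eq_sub_iff_add_eq]
    exact Finset.sum_filter_add_sum_filter_not _ _ _
  rw [facetPart_eq, sub_mul, Finset.sum_mul]
  refine sub_mem ?_ (sum_mem fun m hm => ?_)
  · have key_lt : F.inductionKey v < F.inductionKey u :=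
      Prod.Lex.toLex_lt_toLex.2 (.inl (nu_v.trans_lt (sub_one_lt _)))
    have := B.X_mul_pderiv_mul_mem_adaptedSpan i (ih v key_lt)
    rwa [nu_v, sub_add_cancel] at this
  · obtain ⟨m_mem, height_ne⟩ := Finset.mem_filter.1 hm
    have key_lt := inductionKey_add_lt hv m_mem height_ne
    rw [monomial_mul, mul_one, ← mul_one (_ * _), ← smul_eq_mul, ← smul_monomial]
    exact Submodule.smul_mem _ _
      (B.monotone_adaptedSpan (Prod.Lex.monotone_fst _ _ key_lt.le) (ih _ key_lt))

theorem monomial_mem_adaptedSpan (v : σ →₀ ℕ) :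
    monomial v 1 ∈ B.adaptedSpan (nu f (toR v)) := by
  induction v using F.wellFounded_inductionKey.induction with
  | _ v ih =>
  have monomial_mem : monomial v 1 ∈ F.sliceModule (F.facetOf v) (nu f (toR v)) :=
    (monomial_mem_restrictSupport ℂ).2
      (.inl ⟨F.mem_halfOpenCone_facetOf v, (F.nu_eq_height_facetOf v).symm⟩)
  refine sup_le (B.span_gen_le_adaptedSpan _ _) (iSup_le fun i => ?_)
    (B.sliceModule_le _ _ monomial_mem)
  rw [Submodule.map_le_iff_le_comap, sliceModule, restrictSupport_eq_span, Submodule.span_le]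
  rintro _ ⟨v', hv', rfl⟩
  exact B.facetPart_mul_monomial_mem ih hv' i

theorem restrictSupport_setOf_nu {P : ℝ → Prop} (hP : ∀ ⦃a b⦄, a ≤ b → P b → P a) :
    restrictSupport ℂ {v | P (nu f (toR v))} =
      Submodule.span ℂ (B.adaptedBasis '' {v | P (nu f (toR v))}) := by
  refine le_antisymm ?_ (Submodule.span_le.2 ?_)
  · rw [restrictSupport_eq_span, Submodule.span_le]
    rintro _ ⟨v, hv, rfl⟩
    exact Submodule.span_mono (Set.image_mono fun v' hle => hP hle hv)
      (B.monomial_mem_adaptedSpan v)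
  · rintro _ ⟨v, hv, rfl⟩ m hm
    exact hP (B.adaptedBasis_mem_Nle v m hm) hv

theorem Nle_eq_span (α : ℝ) :
    Nle f α = Submodule.span ℂ (B.adaptedBasis '' {v | nu f (toR v) ≤ α}) :=
  B.restrictSupport_setOf_nu (P := (· ≤ α)) fun _ _ => le_trans

theorem Nlt_eq_span (α : ℝ) :
    Nlt f α = Submodule.span ℂ (B.adaptedBasis '' {v | nu f (toR v) < α}) :=
  B.restrictSupport_setOf_nu (P := (· < α)) fun _ _ => lt_of_le_of_lt

theorem linearIndependent_adaptedBasis : LinearIndependent ℂ B.adaptedBasis := by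
  have linearIndepOn (α : ℝ) : LinearIndepOn ℂ B.adaptedBasis {v | nu f (toR v) ≤ α} := by
    have : Fintype {v | nu f (toR v) ≤ α} := (F.finite_setOf_nu_le α).fintype
    rw [LinearIndepOn, linearIndependent_iff_card_eq_finrank_span, Set.finrank,
      ← Set.image_eq_range, ← Nle_eq_span, Nle_eq_restrictSupport, finrank_restrictSupport,
      Set.ncard_eq_toFinset_card', Set.toFinset_card]
  rw [linearIndependent_iff_finset_linearIndependent]
  intro s
  obtain ⟨α, hα⟩ := (s.finite_toSet.image fun v => nu f (toR v)).bddAbove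
  exact (linearIndepOn α).mono fun v hv => hα ⟨v, hv, rfl⟩

theorem span_range_adaptedBasis : Submodule.span ℂ (Set.range B.adaptedBasis) = ⊤ := by
  have := B.restrictSupport_setOf_nu (P := fun _ => True) fun _ _ _ => id
  rwa [Set.ofPred_true, restrictSupport_univ, Set.image_univ, eq_comm] at this

theorem LIdeal_eq_span : (LIdeal f).restrictScalars ℂ =
    Submodule.span ℂ (B.adaptedBasis '' {v | F.boxMultiplicity v ≠ 0}) := by
  refine le_antisymm (fun p hp => ?_) (Submodule.span_le.2 ?_)
  · obtain ⟨q, rfl⟩ := Ideal.mem_span_range_iff_exists_fun.1 hp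
    refine sum_mem fun i _ => ?_
    have le_comap : Submodule.span ℂ (Set.range B.adaptedBasis) ≤
        (Submodule.span ℂ (B.adaptedBasis '' {v | F.boxMultiplicity v ≠ 0})).comap
          (LinearMap.mulLeft ℂ (X i * pderiv i f)) := by
      refine Submodule.span_le.2 ?_
      rintro _ ⟨v, rfl⟩
      obtain ⟨v', ne_zero, -, mul_eq⟩ := B.exists_X_mul_pderiv_mul_adaptedBasis_eq i v
      exact Submodule.subset_span ⟨v', ne_zero, mul_eq.symm⟩
    rw [mul_comm]
    exact le_comap (B.span_range_adaptedBasis ▸ Submodule.mem_top)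
  · rintro _ ⟨v, hv, rfl⟩
    exact B.adaptedBasis_mem_LIdeal hv

end BoxGenerators

theorem grDim_eq_ncard_halfOpenBoxPoints (hnd : Nondegenerate f) (α : ℝ) :
    grDim f α = (F.halfOpenBoxPoints α).ncard := by
  obtain ⟨B⟩ := F.exists_boxGenerators hnd
  let S : Set (σ →₀ ℕ) := {v | nu f (toR v) < α} ∪ {v | F.boxMultiplicity v ≠ 0}
  have disjoint : Disjoint (F.halfOpenBoxPoints α) S := by
    refine Set.disjoint_left.2 ?_
    rintro v ⟨nu_eq, mem_box⟩ (lt | ne_zero)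
    · exact nu_eq.not_lt lt
    · exact ne_zero (F.boxMultiplicity_eq_zero_iff.2 mem_box)
  have union_eq : {v | nu f (toR v) ≤ α} ∪ {v | F.boxMultiplicity v ≠ 0} =
      S ∪ F.halfOpenBoxPoints α := by
    ext v
    simp only [S, halfOpenBoxPoints, Set.mem_union, Set.mem_ofPred_eq,
      ← F.boxMultiplicity_eq_zero_iff, le_iff_lt_or_eq]
    tauto
  rw [← finrank_map_mkQ_span_image_union B.linearIndependent_adaptedBasis disjoint
    (F.finite_halfOpenBoxPoints α), ← union_eq, grDim, grN, B.Nle_eq_span, B.Nlt_eq_span,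
    B.LIdeal_eq_span, ← Submodule.span_union, ← Submodule.span_union, ← Set.image_union,
    ← Set.image_union]

end NewtonFan

end ToricNewton

open ToricNewton in
theorem toric_spectrum_via_relative_hodge_deligne_general {σ : Type*} [Fintype σ] [DecidableEq σ]
    [Nonempty σ] (f : MvPolynomial σ ℂ) (hconv : Convenient f) (hnd : Nondegenerate f)
    (hsimp : ∀ Δ : Set (σ → ℝ), NBFace f Δ → IsSimplex Δ) (α : ℝ) :
    (grDim f α : ℤ) =
      ∑ᶠ (v : σ → ℕ) (_ : natToR v ∈ BoxP f), ∑ᶠ j : ℕ,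
        if α = nu f (natToR v) + (j : ℝ) then (Evstar f v).coeff j else 0 := by
  obtain ⟨F⟩ := exists_newtonFan hconv hsimp
  rw [F.grDim_eq_ncard_halfOpenBoxPoints hnd, F.finsum_coeff_Evstar hsimp]

open ToricNewton in
/-- `dim gr^𝒩_α(ℬ/ℒ) = Σ_{v ∈ Box(P) ∩ ℕⁿ} (coefficient of
`z^{α-ν(v)}` in `E_v^*(z))`, i.e. the Hilbert–Poincaré series of `gr^𝒩(ℬ/ℒ)` is
`Σ_{v ∈ Box(P) ∩ ℕⁿ} E_v^*(z)·z^{ν(v)}`. -/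
theorem toric_spectrum_via_relative_hodge_deligne {n : ℕ} (hn : 1 ≤ n)
    (f : MvPolynomial (Fin n) ℂ) (hconv : Convenient f) (hnd : Nondegenerate f)
    (hsimp : ∀ Δ : Set (Fin n → ℝ), NBFace f Δ → IsSimplex Δ) :
    ∀ α : ℚ, (grDim f (α : ℝ) : ℤ) =
      ∑ᶠ (v : Fin n → ℕ) (_ : natToR v ∈ BoxP f), ∑ᶠ j : ℕ,
        if (α : ℝ) = nu f (natToR v) + (j : ℝ) then (Evstar f v).coeff j else 0 := by
  have : Nonempty (Fin n) := ⟨⟨0, hn⟩⟩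
  exact fun α => toric_spectrum_via_relative_hodge_deligne_general f hconv hnd hsimp α
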